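/- Let Ω ⊂ ℝ² be open and suppose u_i → u strictly in BV(Ω). Then there is a subsequence of (u_i) (not relabeled) such that for every compact set K ⊂ Ω \ S_u and every ε > 0, there is an open set G ⊂ Ω such that capa₁(G) < ε and u_i* → u* uniformly on K \ G. -/

import Mathlib

/-!
The proof reduces uniform convergence to a one-sided bound for a single strictly convergent sequence
of majorants, and proves that bound level by level in terms of the one-dimensional Hausdorff
content `hc`.

*Majorants.* The variation is submodular, `|D max(u,v)| + |D min(u,v)| ≤ |Du| + |Dv|`
(`V_max_add_V_min`), and lower semicontinuous with a modulus depending only on the limit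
(`V_modulus`). Along a subsequence with `‖u_i - u‖₁ ≤ 2⁻ⁱ` and `|Du_i|(Ω) ≤ |Du|(Ω) + 2⁻ⁱ`, taking
successive maxima of the functions `max(u_i, u)` therefore adds only a summable amount of variation,
so that the suprema `Z_j` of the tails `i ≥ j` are of bounded variation and converge strictly to `u`
(`sup_majorant`, `majorant`). A bound for `Z_j` from above is a bound for all `u_i` with `i ≥ j` at
once; the bound from below is the same statement for `-u_i` and `-u`.

*The one-sided bound* (`upper_bound`). Let `K` be a compact set of points at which `u` has an
approximate limit `c(x)`. The claim is that the set of `x ∈ K` at which `{Z_j > c(x) + δ}` fails to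
have density zero has content tending to `0`. Since `|c|` is bounded off a set of small content
(`exists_tail`), finitely many levels `t` suffice, and it remains to treat the points with
`c(x) < t` and the sets `{Z_j ≥ t + 5h}` (`single_level`). Two facts are used.
* The variation measure of a function does not charge the points around which the function equals
  a fixed constant up to a small density (`BV.ae_not_small`). At almost every point with respect to
  the variation measure the polar vector is nearly constant, and together with the Poincaré
  inequality this would force the variation of small balls to decay faster than their area
  (`BV.decay`).
* The boxing inequality (`IsBV.boxing`): if the truncation of `v` between the levels `a < b` has
  variation less than `M` in `N`, then, off a set of content `C M / (b - a)`, points around which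
  `{v ≥ b}` has a substantial density at some scale are points of zero density of `{v ≤ a}`.

By the first fact, at almost every point of `K` for the variation measure `μ₂` of the truncation
of `u` between `t + 2h` and `t + 5h`, the set `{u < t + h}` has density zero. An Egorov argument
(`exists_good`) makes this uniform on a compact set `P ⊆ K` carrying almost all of `μ₂` on `K`.
By the first fact again, `P` is a null set for the variation of the truncation between `t` and
`t + h`; the boxing inequality in a neighborhood of `P` shows that points with `c(x) < t` near `P`
have small content (`close_points`). Away from `P`, the measure `μ₂` is small; strict convergence
prevents the truncations of `Z_j` from having much more variation there (`trunc_usc`), and the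
boxing inequality applied to `Z_j` concludes (`far_points`).

*Conclusion.* Summing bump functions over a cover by balls shows that a set of small content is
contained in an open set of small capacity (`exists_open_capa1_lt`), and the density statements for
`{u_i > c + δ}` and `{u_i < c - δ}` give `|u_i* - u*| ≤ δ` (`abs_preciseRep_sub_le`).
-/

open MeasureTheory Filter
open scoped ENNReal RealInnerProductSpace

noncomputable section

/-- The closed cone `C(v,a) = {x ∈ ℝ² : x·v ≥ a|x|}`. -/
def cone (v : EuclideanSpace ℝ (Fin 2)) (a : ℝ) : Set (EuclideanSpace ℝ (Fin 2)) :=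
  {x | a * ‖x‖ ≤ ⟪x, v⟫}

/-- `u ∈ BV(Ω)` for an open set `Ω ⊂ ℝ²`, presented through the polar decomposition
`Du = σ |Du|`: `ν` plays the role of the total variation measure `|Du|` (a finite positive
measure concentrated on `Ω`) and `σ = dDu/d|Du|` is the vector-valued Radon–Nikodym density
of unit length `ν`-a.e.; the defining requirement is the integration-by-parts formula
`∫_Ω u ∂φ/∂y_l dL² = −∫_Ω φ σ_l dν` for all `φ ∈ C_c¹(Ω)`. -/
structure IsBVScalarOn (Ω : Set (EuclideanSpace ℝ (Fin 2)))
    (u : EuclideanSpace ℝ (Fin 2) → ℝ)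
    (ν : Measure (EuclideanSpace ℝ (Fin 2)))
    (σ : EuclideanSpace ℝ (Fin 2) → EuclideanSpace ℝ (Fin 2)) : Prop where
  integrable : IntegrableOn u Ω volume
  finite : ν Set.univ < ⊤
  concentrated : ν Ωᶜ = 0
  meas : Measurable σ
  unit : ∀ᵐ x ∂ν, ‖σ x‖ = 1
  parts : ∀ φ : EuclideanSpace ℝ (Fin 2) → ℝ, ContDiff ℝ 1 φ → HasCompactSupport φ →
    tsupport φ ⊆ Ω → ∀ l : Fin 2,
      ∫ x in Ω, u x * fderiv ℝ φ x (EuclideanSpace.single l (1:ℝ)) ∂volume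
        = - ∫ x, φ x * σ x l ∂ν

/-- The precise representative `u*`. -/
def preciseRep (u : EuclideanSpace ℝ (Fin 2) → ℝ) (x : EuclideanSpace ℝ (Fin 2)) : ℝ :=
  sInf {t : ℝ | Tendsto (fun r : ℝ =>
      volume (Metric.ball x r ∩ {y | t < u y}) / volume (Metric.ball x r))
    (nhdsWithin 0 (Set.Ioi 0)) (nhds 0)}

/-- `u ∈ W^{1,1}(ℝ²)` with weak (distributional) gradient `V`. -/
def IsW11 (u : EuclideanSpace ℝ (Fin 2) → ℝ)
    (V : EuclideanSpace ℝ (Fin 2) → EuclideanSpace ℝ (Fin 2)) : Prop :=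
  Integrable u volume ∧ Integrable V volume ∧
    ∀ φ : EuclideanSpace ℝ (Fin 2) → ℝ, ContDiff ℝ 1 φ → HasCompactSupport φ →
      ∀ l : Fin 2,
        ∫ x, u x * fderiv ℝ φ x (EuclideanSpace.single l (1:ℝ)) ∂volume
          = - ∫ x, φ x * V x l ∂volume

/-- The (Sobolev) 1-capacity `capa₁(A) = inf ‖u‖_{W^{1,1}(ℝ²)}` over `u ∈ W^{1,1}(ℝ²)`
with `u ≥ 1` in a neighborhood of `A`. -/
def capa1 (A : Set (EuclideanSpace ℝ (Fin 2))) : ℝ≥0∞ :=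
  ⨅ (u : EuclideanSpace ℝ (Fin 2) → ℝ)
    (V : EuclideanSpace ℝ (Fin 2) → EuclideanSpace ℝ (Fin 2))
    (_ : IsW11 u V)
    (_ : ∃ U : Set (EuclideanSpace ℝ (Fin 2)), IsOpen U ∧ A ⊆ U ∧ ∀ x ∈ U, 1 ≤ u x),
    (∫⁻ x, (‖u x‖₊ : ℝ≥0∞) ∂volume) + ∫⁻ x, (‖V x‖₊ : ℝ≥0∞) ∂volume

/-- The approximate discontinuity set `S_u ⊂ Ω`: points where no `c ∈ ℝ` satisfies
`lim_{r→0} ⨍_{B(x,r)} |u − c| = 0`. -/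
def approxDiscSet (Ω : Set (EuclideanSpace ℝ (Fin 2))) (u : EuclideanSpace ℝ (Fin 2) → ℝ) :
    Set (EuclideanSpace ℝ (Fin 2)) :=
  {x ∈ Ω | ¬ ∃ c : ℝ, Tendsto (fun r : ℝ =>
      (∫ y in Metric.ball x r, |u y - c| ∂volume) / (volume (Metric.ball x r)).toReal)
    (nhdsWithin 0 (Set.Ioi 0)) (nhds 0)}

namespace StrictBV

open Metric Set Topology

/-! ### Test fields and functions of bounded variation -/

/-- The Euclidean plane. -/
abbrev Pl := EuclideanSpace ℝ (Fin 2)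

/-- The divergence of a vector field. -/
def dvg (φ : Pl → Pl) (x : Pl) : ℝ :=
  ∑ l : Fin 2, fderiv ℝ (fun y => φ y l) x (EuclideanSpace.single l (1 : ℝ))

/-- Admissible test vector fields: `C¹` with compact support inside `U`. -/
structure IsTest (U : Set Pl) (φ : Pl → Pl) : Prop where
  smooth : ContDiff ℝ 1 φ
  cpt : HasCompactSupport φ
  supp : tsupport φ ⊆ U

/-- Local version of `IsBVScalarOn`: the function is Borel and only locally integrable in `Ω`, and
the integration by parts formula is tested against vector fields. -/
structure BV (Ω : Set Pl) (u : Pl → ℝ) (ν : Measure Pl) (σ : Pl → Pl) : Prop where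
  measu : Measurable u
  loc : LocallyIntegrableOn u Ω volume
  fin : IsFiniteMeasure ν
  conc : ν Ωᶜ = 0
  meas : Measurable σ
  unit : ∀ᵐ x ∂ν, ‖σ x‖ = 1
  parts : ∀ φ, IsTest Ω φ → ∫ x, u x * dvg φ x = - ∫ x, ⟪φ x, σ x⟫ ∂ν

lemma contDiff_comp {φ : Pl → Pl} (h : ContDiff ℝ 1 φ) (l : Fin 2) :
    ContDiff ℝ 1 (fun y => φ y l) := by
  exact (contDiff_euclidean.1 h) l

lemma continuous_dvg {φ : Pl → Pl} (h : ContDiff ℝ 1 φ) : Continuous (dvg φ) := by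
  unfold dvg
  refine continuous_finsetSum _ fun l _ => ?_
  exact ((contDiff_comp h l).continuous_fderiv one_ne_zero).clm_apply continuous_const

lemma tsupport_comp_subset (φ : Pl → Pl) (l : Fin 2) :
    tsupport (fun y => φ y l) ⊆ tsupport φ := by
  refine closure_mono fun x hx => ?_
  simp only [Function.mem_support] at hx ⊢
  intro h; apply hx; simp [h]

lemma dvg_eq_zero {φ : Pl → Pl} {x : Pl} (hx : x ∉ tsupport φ) : dvg φ x = 0 := by
  unfold dvg
  refine Finset.sum_eq_zero fun l _ => ?_
  rw [fderiv_of_notMem_tsupport (𝕜 := ℝ) (fun h => hx (tsupport_comp_subset φ l h))]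
  rfl

lemma IsTest.mono {U V : Set Pl} (h : U ⊆ V) {φ : Pl → Pl} (hφ : IsTest U φ) : IsTest V φ :=
  ⟨hφ.smooth, hφ.cpt, hφ.supp.trans h⟩

lemma IsTest.neg {U : Set Pl} {φ : Pl → Pl} (hφ : IsTest U φ) : IsTest U (-φ) :=
  ⟨hφ.smooth.neg, by simpa [HasCompactSupport, tsupport] using hφ.cpt,
    by simpa [tsupport] using hφ.supp⟩

lemma IsTest.zero (U : Set Pl) : IsTest U 0 :=
  ⟨contDiff_const, by simp [HasCompactSupport, tsupport], by simp [tsupport]⟩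

lemma IsTest.add {U : Set Pl} {φ ψ : Pl → Pl} (hφ : IsTest U φ) (hψ : IsTest U ψ) :
    IsTest U (φ + ψ) :=
  ⟨hφ.smooth.add hψ.smooth, hφ.cpt.add hψ.cpt,
    (tsupport_add φ ψ).trans (union_subset hφ.supp hψ.supp)⟩

lemma IsTest.const_smul {U : Set Pl} {φ : Pl → Pl} (hφ : IsTest U φ) (c : ℝ) :
    IsTest U (c • φ) := by
  have hs : tsupport (c • φ) ⊆ tsupport φ := closure_mono fun x hx => by
    simp only [Function.mem_support, Pi.smul_apply] at hx ⊢
    intro h; apply hx; simp [h]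
  exact ⟨contDiff_const.smul hφ.smooth, hφ.cpt.mono' (subset_closure.trans hs), hs.trans hφ.supp⟩

lemma diff_comp {φ : Pl → Pl} (h : ContDiff ℝ 1 φ) (l : Fin 2) (x : Pl) :
    DifferentiableAt ℝ (fun y => φ y l) x :=
  (contDiff_comp h l).differentiable one_ne_zero x

lemma dvg_add {φ ψ : Pl → Pl} (hφ : ContDiff ℝ 1 φ) (hψ : ContDiff ℝ 1 ψ) (x : Pl) :
    dvg (φ + ψ) x = dvg φ x + dvg ψ x := by
  unfold dvg
  rw [← Finset.sum_add_distrib]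
  refine Finset.sum_congr rfl fun l _ => ?_
  have : (fun y => (φ + ψ) y l) = (fun y => φ y l) + fun y => ψ y l := by ext; simp
  rw [this, fderiv_add (diff_comp hφ l x) (diff_comp hψ l x)]; rfl

lemma dvg_const_smul {φ : Pl → Pl} (hφ : ContDiff ℝ 1 φ) (c : ℝ) (x : Pl) :
    dvg (c • φ) x = c * dvg φ x := by
  unfold dvg
  rw [Finset.mul_sum]
  refine Finset.sum_congr rfl fun l _ => ?_
  have : (fun y => (c • φ) y l) = c • (fun y => φ y l) := by ext; simp
  rw [this, fderiv_const_smul (diff_comp hφ l x)]; rfl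

lemma dvg_neg {φ : Pl → Pl} (hφ : ContDiff ℝ 1 φ) (x : Pl) : dvg (-φ) x = - dvg φ x := by
  have := dvg_const_smul hφ (-1) x
  simpa using this

lemma sum_single (e : Pl) : ∑ l : Fin 2, e l • EuclideanSpace.single l (1 : ℝ) = e := by
  ext i
  fin_cases i <;> simp

lemma dvg_smul_vec {f : Pl → ℝ} (hf : ContDiff ℝ 1 f) (e : Pl) (x : Pl) :
    dvg (fun y => f y • e) x = fderiv ℝ f x e := by
  unfold dvg
  have hd := hf.differentiable one_ne_zero x
  conv_rhs => rw [← sum_single e, map_sum]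
  refine Finset.sum_congr rfl fun l _ => ?_
  have : (fun y => (f y • e) l) = fun y => f y * e l := by ext; simp
  rw [this, fderiv_mul_const hd]
  simp

lemma isTest_smul_vec {U : Set Pl} {f : Pl → ℝ} (hf : ContDiff ℝ 1 f) (hc : HasCompactSupport f)
    (hs : tsupport f ⊆ U) (e : Pl) : IsTest U (fun y => f y • e) := by
  have h : tsupport (fun y => f y • e) ⊆ tsupport f := closure_mono fun x hx => by
    simp only [Function.mem_support] at hx ⊢
    intro h; apply hx; simp [h]
  exact ⟨hf.smul contDiff_const, hc.mono' (subset_closure.trans h), h.trans hs⟩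

lemma exists_dvg_bound {U : Set Pl} {φ : Pl → Pl} (hφ : IsTest U φ) :
    ∃ C : ℝ, 0 < C ∧ ∀ x, |dvg φ x| ≤ C := by
  have hc : HasCompactSupport (dvg φ) :=
    HasCompactSupport.intro hφ.cpt fun x hx => dvg_eq_zero hx
  obtain ⟨C, hC⟩ := hc.exists_bound_of_continuous (continuous_dvg hφ.smooth)
  exact ⟨max C 1, by positivity, fun x => (hC x).trans (le_max_left _ _)⟩

lemma integrable_mul_dvg {U : Set Pl} {u : Pl → ℝ} (hu : LocallyIntegrableOn u U volume)
    {φ : Pl → Pl} (hφ : IsTest U φ) : Integrable (fun x => u x * dvg φ x) := by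
  have h1 : IntegrableOn u (tsupport φ) := hu.integrableOn_compact_subset hφ.supp hφ.cpt
  obtain ⟨C, hC, hb⟩ := exists_dvg_bound hφ
  have h2 : IntegrableOn (fun x => u x * dvg φ x) (tsupport φ) :=
    Integrable.mul_bdd (c := C) h1 (continuous_dvg hφ.smooth).aestronglyMeasurable
      (ae_of_all _ hb)
  rw [← integrableOn_iff_integrable_of_support_subset (s := tsupport φ)]
  · exact h2
  · intro x hx
    by_contra h
    exact hx (by simp [dvg_eq_zero h])

lemma abs_integral_mul_dvg_sub_le {U : Set Pl} {u v : Pl → ℝ}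
    (hu : LocallyIntegrableOn u U volume) (hv : LocallyIntegrableOn v U volume)
    {φ : Pl → Pl} (hφ : IsTest U φ) {C : ℝ} (hC : ∀ x, |dvg φ x| ≤ C) :
    |(∫ x, u x * dvg φ x) - ∫ x, v x * dvg φ x| ≤ C * ∫ x in tsupport φ, |u x - v x| := by
  rw [← integral_sub (integrable_mul_dvg hu hφ) (integrable_mul_dvg hv hφ)]
  have hs : ∀ x, x ∉ tsupport φ → u x * dvg φ x - v x * dvg φ x = 0 := by
    intro x hx; simp [dvg_eq_zero hx]
  rw [← setIntegral_eq_integral_of_forall_compl_eq_zero hs, ← integral_const_mul]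
  have h1 : IntegrableOn u (tsupport φ) := hu.integrableOn_compact_subset hφ.supp hφ.cpt
  have h2 : IntegrableOn v (tsupport φ) := hv.integrableOn_compact_subset hφ.supp hφ.cpt
  refine abs_integral_le_integral_abs.trans ?_
  refine integral_mono_of_nonneg (ae_of_all _ fun x => abs_nonneg _)
    ((h1.sub h2).abs.const_mul C) (ae_of_all _ fun x => ?_)
  simp only [← sub_mul, abs_mul]
  rw [mul_comm]
  exact mul_le_mul_of_nonneg_right (hC x) (abs_nonneg _)

lemma tendsto_integral_mul_dvg {U : Set Pl} {un : ℕ → Pl → ℝ} {u : Pl → ℝ}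
    (hun : ∀ n, LocallyIntegrableOn (un n) U volume) (hu : LocallyIntegrableOn u U volume)
    {φ : Pl → Pl} (hφ : IsTest U φ)
    (h : Tendsto (fun n => ∫ x in tsupport φ, |un n x - u x|) atTop (𝓝 0)) :
    Tendsto (fun n => ∫ x, un n x * dvg φ x) atTop (𝓝 (∫ x, u x * dvg φ x)) := by
  obtain ⟨C, hC, hb⟩ := exists_dvg_bound hφ
  rw [tendsto_iff_dist_tendsto_zero]
  refine squeeze_zero (fun _ => dist_nonneg)
    (fun n => abs_integral_mul_dvg_sub_le (hun n) hu hφ hb) ?_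
  simpa using h.const_mul C

/-- Integration by parts for a `C¹` function. -/
lemma integral_mul_dvg_smooth {f : Pl → ℝ} (hf : ContDiff ℝ 1 f) {U : Set Pl} {φ : Pl → Pl}
    (hφ : IsTest U φ) : ∫ x, f x * dvg φ x = - ∫ x, fderiv ℝ f x (φ x) := by
  have hcs : ∀ l, HasCompactSupport (fun y => φ y l) := fun l =>
    hφ.cpt.mono' (subset_closure.trans (tsupport_comp_subset φ l))
  have hi1 : ∀ l : Fin 2, Integrable (fun x => fderiv ℝ f x (EuclideanSpace.single l (1:ℝ)) * φ x l)
      volume := fun l => Continuous.integrable_of_hasCompactSupport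
        (((hf.continuous_fderiv one_ne_zero).clm_apply continuous_const).mul
          (contDiff_comp hφ.smooth l).continuous) (hcs l).mul_left
  have hi2 : ∀ l : Fin 2, Integrable
      (fun x => f x * fderiv ℝ (fun y => φ y l) x (EuclideanSpace.single l (1:ℝ))) volume := fun l =>
      Continuous.integrable_of_hasCompactSupport
        (hf.continuous.mul (((contDiff_comp hφ.smooth l).continuous_fderiv one_ne_zero).clm_apply
          continuous_const)) ((hcs l).fderiv_apply (𝕜 := ℝ) _).mul_left
  have hi3 : ∀ l : Fin 2, Integrable (fun x => f x * φ x l) volume := fun l =>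
      Continuous.integrable_of_hasCompactSupport
        (hf.continuous.mul (contDiff_comp hφ.smooth l).continuous) (hcs l).mul_left
  have key : ∀ l : Fin 2, ∫ x, f x * fderiv ℝ (fun y => φ y l) x (EuclideanSpace.single l (1:ℝ))
      = - ∫ x, fderiv ℝ f x (EuclideanSpace.single l (1:ℝ)) * φ x l := fun l =>
    integral_mul_fderiv_eq_neg_fderiv_mul_of_integrable (hi1 l) (hi2 l) (hi3 l)
      (fun x _ => hf.differentiable one_ne_zero x) (fun x _ => diff_comp hφ.smooth l x)
  have e1 : ∀ x, f x * dvg φ x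
      = ∑ l : Fin 2, f x * fderiv ℝ (fun y => φ y l) x (EuclideanSpace.single l (1:ℝ)) := by
    intro x; rw [dvg, Finset.mul_sum]
  have e2 : ∀ x, fderiv ℝ f x (φ x)
      = ∑ l : Fin 2, fderiv ℝ f x (EuclideanSpace.single l (1:ℝ)) * φ x l := by
    intro x
    conv_lhs => rw [← sum_single (φ x), map_sum]
    refine Finset.sum_congr rfl fun l _ => ?_
    rw [map_smul, smul_eq_mul, mul_comm]
  simp_rw [e1, e2]
  rw [integral_finsetSum _ (fun l _ => hi2 l), integral_finsetSum _ (fun l _ => hi1 l),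
    ← Finset.sum_neg_distrib]
  exact Finset.sum_congr rfl fun l _ => key l

lemma integral_dvg {U : Set Pl} {φ : Pl → Pl} (hφ : IsTest U φ) : ∫ x, dvg φ x = 0 := by
  have := integral_mul_dvg_smooth (f := fun _ => (1:ℝ)) contDiff_const hφ
  simpa using this

namespace BV

variable {Ω : Set Pl} {u : Pl → ℝ} {ν : Measure Pl} {σ : Pl → Pl}

/-- Affine images `p * u + q` of a function of bounded variation. -/
lemma affine (h : BV Ω u ν σ) (p q : ℝ) :
    BV Ω (fun x => p * u x + q) (ENNReal.ofReal |p| • ν) (fun x => (SignType.sign p : ℝ) • σ x) where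
  measu := (h.measu.const_mul p).add_const q
  loc := by
    have h1 : LocallyIntegrableOn (fun x => p * u x) Ω volume := fun x hx => by
      obtain ⟨s, hs, hi⟩ := h.loc x hx
      exact ⟨s, hs, hi.const_mul p⟩
    exact h1.add ((locallyIntegrable_const q).locallyIntegrableOn Ω)
  fin := by
    have := h.fin
    exact Measure.smul_finite _ ENNReal.ofReal_ne_top
  conc := by simp [h.conc]
  meas := by
    rcases lt_trichotomy p 0 with hp | hp | hp
    · simpa [hp] using h.meas
    · simp [hp]
    · simpa [hp] using h.meas
  unit := by
    rcases lt_trichotomy p 0 with hp | hp | hp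
    · simpa [hp] using Measure.ae_smul_measure h.unit _
    · simp [hp]
    · simpa [hp] using Measure.ae_smul_measure h.unit _
  parts := by
    intro φ hφ
    have e : ∀ x, (p * u x + q) * dvg φ x = p * (u x * dvg φ x) + q * dvg φ x := by
      intro x; ring
    have hq : Integrable (fun x => q * dvg φ x) := by
      refine integrable_mul_dvg (u := fun _ => q)
        ((locallyIntegrable_const q).locallyIntegrableOn Ω) hφ
    simp_rw [e]
    rw [integral_add ((integrable_mul_dvg h.loc hφ).const_mul p) hq, integral_const_mul,
      integral_const_mul, integral_dvg hφ, h.parts φ hφ, integral_smul_measure]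
    rw [ENNReal.toReal_ofReal (abs_nonneg p)]
    rcases lt_trichotomy p 0 with hp | hp | hp
    · simp [hp, abs_of_neg hp, integral_neg]
    · simp [hp]
    · simp [hp, abs_of_pos hp]

lemma neg (h : BV Ω u ν σ) : BV Ω (fun x => - u x) ν (fun x => - σ x) := by
  have := h.affine (-1) 0
  simpa using this

lemma const (Ω : Set Pl) (c : ℝ) : BV Ω (fun _ => c) 0 (fun _ => 0) where
  measu := measurable_const
  loc := (locallyIntegrable_const c).locallyIntegrableOn Ω
  fin := inferInstance
  conc := by simp
  meas := measurable_const
  unit := by simp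
  parts := by
    intro φ hφ
    rw [integral_const_mul, integral_dvg hφ]; simp

lemma integrable_inner (h : BV Ω u ν σ) {U : Set Pl} {φ : Pl → Pl} (hφ : IsTest U φ) :
    Integrable (fun x => ⟪φ x, σ x⟫) ν := by
  have := h.fin
  obtain ⟨C, hC⟩ := hφ.cpt.exists_bound_of_continuous hφ.smooth.continuous
  refine Integrable.mono' (integrable_const C)
    (hφ.smooth.continuous.measurable.inner h.meas).aestronglyMeasurable ?_
  filter_upwards [h.unit] with x hx
  calc ‖⟪φ x, σ x⟫‖ ≤ ‖φ x‖ * ‖σ x‖ := norm_inner_le_norm _ _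
    _ ≤ C := by rw [hx, mul_one]; exact hC x

lemma restrict (h : BV Ω u ν σ) {U : Set Pl} (hU : IsOpen U) (hUΩ : U ⊆ Ω) :
    BV U u (ν.restrict U) σ where
  measu := h.measu
  loc := h.loc.mono_set hUΩ
  fin := by have := h.fin; infer_instance
  conc := by rw [Measure.restrict_apply hU.measurableSet.compl]; simp
  meas := h.meas
  unit := ae_restrict_of_ae h.unit
  parts := by
    intro φ hφ
    rw [h.parts φ (hφ.mono hUΩ)]
    congr 1
    refine (setIntegral_eq_integral_of_forall_compl_eq_zero fun x hx => ?_).symm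
    have : φ x = 0 := image_eq_zero_of_notMem_tsupport fun hx' => hx (hφ.supp hx')
    simp [this]

lemma integrable_norm (h : BV Ω u ν σ) {U : Set Pl} {φ : Pl → Pl} (hφ : IsTest U φ) :
    Integrable (fun x => ‖φ x‖) ν := by
  have := h.fin
  exact (hφ.smooth.continuous.norm).integrable_of_hasCompactSupport hφ.cpt.norm

lemma abs_integral_le (h : BV Ω u ν σ) {φ : Pl → Pl} (hφ : IsTest Ω φ) :
    |∫ x, u x * dvg φ x| ≤ ∫ x, ‖φ x‖ ∂ν := by
  rw [h.parts φ hφ, abs_neg]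
  refine abs_integral_le_integral_abs.trans ?_
  refine integral_mono_ae (h.integrable_inner hφ).abs (h.integrable_norm hφ) ?_
  filter_upwards [h.unit] with x hx
  calc |⟪φ x, σ x⟫| ≤ ‖φ x‖ * ‖σ x‖ := abs_real_inner_le_norm _ _
    _ = ‖φ x‖ := by rw [hx, mul_one]

lemma integral_le_measure (h : BV Ω u ν σ) {U : Set Pl} (hUΩ : U ⊆ Ω)
    {φ : Pl → Pl} (hφ : IsTest U φ) (h1 : ∀ x, ‖φ x‖ ≤ 1) :
    |∫ x, u x * dvg φ x| ≤ (ν U).toReal := by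
  have := h.fin
  refine (h.abs_integral_le (hφ.mono hUΩ)).trans ?_
  rw [← setIntegral_eq_integral_of_forall_compl_eq_zero (s := U) (fun x hx => by
    have : φ x = 0 := image_eq_zero_of_notMem_tsupport fun hx' => hx (hφ.supp hx')
    simp [this])]
  calc ∫ x in U, ‖φ x‖ ∂ν ≤ ∫ x in U, (1:ℝ) ∂ν :=
        integral_mono ((h.integrable_norm hφ).integrableOn) (integrable_const _) h1
    _ = (ν U).toReal := by simp [Measure.real]

end BV

open scoped Convolution

/-! ### Mollification -/

/-- A standard bump at the origin with outer radius `1 / (n + 1)`. -/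
def bmp (n : ℕ) : ContDiffBump (0 : Pl) where
  rIn := 1 / (n + 1) / 2
  rOut := 1 / (n + 1)
  rIn_pos := by positivity
  rIn_lt_rOut := half_lt_self (by positivity)

/-- The standard mollification kernels. -/
def rho (n : ℕ) : Pl → ℝ := (bmp n).normed volume

/-- Mollification. -/
def moll {E : Type*} [NormedAddCommGroup E] [NormedSpace ℝ E] (n : ℕ) (f : Pl → E) : Pl → E :=
  rho n ⋆[ContinuousLinearMap.lsmul ℝ ℝ, volume] f

lemma rho_nonneg (n : ℕ) (x : Pl) : 0 ≤ rho n x := (bmp n).nonneg_normed x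
lemma rho_smooth (n : ℕ) : ContDiff ℝ 1 (rho n) := (bmp n).contDiff_normed (n := 1)
lemma rho_cont (n : ℕ) : Continuous (rho n) := (rho_smooth n).continuous
lemma rho_cpt (n : ℕ) : HasCompactSupport (rho n) := (bmp n).hasCompactSupport_normed
lemma rho_int (n : ℕ) : ∫ x, rho n x = 1 := (bmp n).integral_normed
lemma rho_integrable (n : ℕ) : Integrable (rho n) := (bmp n).integrable_normed
lemma rho_tsupport (n : ℕ) : tsupport (rho n) = closedBall 0 (1 / (n + 1)) :=
  (bmp n).tsupport_normed_eq
lemma rho_neg (n : ℕ) (x : Pl) : rho n (-x) = rho n x := (bmp n).normed_neg x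
lemma rho_support (n : ℕ) : Function.support (rho n) = ball 0 (1 / (n + 1)) :=
  (bmp n).support_normed_eq

lemma rho_lint (n : ℕ) (y : Pl) : ∫⁻ x, ENNReal.ofReal (rho n (x - y)) = 1 := by
  rw [lintegral_sub_right_eq_self (fun x => ENNReal.ofReal (rho n x)) y,
    ← ofReal_integral_eq_lintegral_ofReal (rho_integrable n) (ae_of_all _ (rho_nonneg n)), rho_int]
  simp

section
variable {E : Type*} [NormedAddCommGroup E] [NormedSpace ℝ E]

lemma moll_apply (n : ℕ) (f : Pl → E) (x : Pl) : moll n f x = ∫ y, rho n (x - y) • f y := by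
  rw [moll, convolution_lsmul_swap]

lemma moll_smooth [CompleteSpace E] (n : ℕ) {f : Pl → E} (hf : LocallyIntegrable f) :
    ContDiff ℝ 1 (moll n f) :=
  HasCompactSupport.contDiff_convolution_left (n := 1) _ (rho_cpt n) (rho_smooth n) hf

lemma moll_uniform [CompleteSpace E] {f : Pl → E} (hf : UniformContinuous f) {ε : ℝ} (hε : 0 < ε) :
    ∀ᶠ n in atTop, ∀ x, dist (moll n f x) (f x) ≤ ε := by
  obtain ⟨δ, hδ, h⟩ := Metric.uniformContinuous_iff.1 hf ε hε
  have : ∀ᶠ n : ℕ in atTop, (1 : ℝ) / (n + 1) < δ :=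
    (tendsto_one_div_add_atTop_nhds_zero_nat).eventually_lt_const hδ
  filter_upwards [this] with n hn x
  refine (bmp n).dist_normed_convolution_le hf.continuous.aestronglyMeasurable fun y hy => ?_
  exact (h (lt_trans hy hn)).le

lemma moll_support (n : ℕ) (f : Pl → E) :
    Function.support (moll n f) ⊆ cthickening (1 / (n + 1)) (tsupport f) := by
  intro x hx
  have := support_convolution_subset _ hx
  rw [rho_support] at this
  obtain ⟨a, ha, b, hb, rfl⟩ := this
  refine mem_cthickening_of_dist_le _ b _ _ (subset_closure hb) ?_
  simpa using (mem_ball_zero_iff.1 ha).le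

lemma moll_lintegral_le (n : ℕ) {f : Pl → E} (hf : AEStronglyMeasurable f volume) :
    ∫⁻ x, ‖moll n f x‖ₑ ≤ ∫⁻ x, ‖f x‖ₑ := by
  calc ∫⁻ x, ‖moll n f x‖ₑ ≤ ∫⁻ x, ∫⁻ y, ENNReal.ofReal (rho n (x - y)) * ‖f y‖ₑ := by
        refine lintegral_mono fun x => ?_
        rw [moll_apply]
        refine (enorm_integral_le_lintegral_enorm _).trans (lintegral_mono fun y => ?_)
        rw [enorm_smul, Real.enorm_of_nonneg (rho_nonneg _ _)]
    _ = ∫⁻ y, ∫⁻ x, ENNReal.ofReal (rho n (x - y)) * ‖f y‖ₑ := by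
        refine lintegral_lintegral_swap ?_
        refine AEMeasurable.mul ?_ hf.enorm.comp_snd
        exact (((rho_cont n).comp (continuous_fst.sub continuous_snd)).measurable.ennreal_ofReal).aemeasurable
    _ = ∫⁻ y, ‖f y‖ₑ := by
        refine lintegral_congr fun y => ?_
        rw [lintegral_mul_const'' _ ?_, rho_lint, one_mul]
        exact (((rho_cont n).comp (continuous_id.sub continuous_const)).measurable.ennreal_ofReal).aemeasurable

lemma moll_integrable (n : ℕ) {f : Pl → E} (hf : Integrable f) : Integrable (moll n f) :=
  (rho_integrable n).integrable_convolution _ hf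

lemma moll_sub (n : ℕ) {f g : Pl → E} (hf : LocallyIntegrable f) (hg : LocallyIntegrable g) (x : Pl) :
    moll n (f - g) x = moll n f x - moll n g x := by
  have h1 := ((rho_cpt n).convolutionExists_left (ContinuousLinearMap.lsmul ℝ ℝ)
    (rho_cont n) hf x).integrable_swap
  simp only [ContinuousLinearMap.lsmul_apply] at h1
  have h2 := ((rho_cpt n).convolutionExists_left (ContinuousLinearMap.lsmul ℝ ℝ)
    (rho_cont n) hg x).integrable_swap
  simp only [ContinuousLinearMap.lsmul_apply] at h2
  rw [moll_apply, moll_apply, moll_apply, ← integral_sub h1 h2]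
  simp [smul_sub]

/-- Mollifications of an integrable function converge in `L¹`. -/
lemma moll_tendsto [CompleteSpace E] {f : Pl → E} (hf : Integrable f) :
    Tendsto (fun n => ∫⁻ x, ‖moll n f x - f x‖ₑ) atTop (𝓝 0) := by
  rw [ENNReal.tendsto_nhds_zero]
  intro ε hε
  rcases eq_or_ne ε ⊤ with rfl | hεt
  · exact Eventually.of_forall fun _ => le_top
  obtain ⟨h, hhc, hhe, hcont, hhi⟩ := hf.exists_hasCompactSupport_lintegral_sub_le
    (ε := ε / 3) (ENNReal.div_pos hε.ne' (by norm_num)).ne'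
  set F := cthickening 1 (tsupport h) with hF
  have hFc : IsCompact F := hhc.cthickening
  have hFv : volume F ≠ ⊤ := hFc.measure_lt_top.ne
  obtain ⟨η, hη, hη'⟩ : ∃ η : ℝ, 0 < η ∧ ENNReal.ofReal η * volume F ≤ ε / 3 := by
    refine ⟨ε.toReal / 3 / ((volume F).toReal + 1), ?_, ?_⟩
    · have := ENNReal.toReal_pos hε.ne' hεt
      positivity
    · have h0 : ε / 3 ≠ ⊤ := (ENNReal.div_lt_top hεt (by norm_num)).ne
      rw [← ENNReal.ofReal_toReal hFv, ← ENNReal.ofReal_mul (by positivity),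
        ← ENNReal.ofReal_toReal h0]
      refine ENNReal.ofReal_le_ofReal ?_
      rw [ENNReal.toReal_div]
      rw [ENNReal.toReal_ofReal (by positivity), div_mul_eq_mul_div, div_le_iff₀ (by positivity)]
      simp only [ENNReal.toReal_ofNat]
      have := ENNReal.toReal_nonneg (a := ε)
      nlinarith [ENNReal.toReal_nonneg (a := volume F)]
  have huc : UniformContinuous h := hhc.uniformContinuous_of_continuous hcont
  filter_upwards [moll_uniform huc hη] with n hn
  have e : ∀ x, moll n f x - f x = moll n (f - h) x + ((moll n h x - h x) + (h - f) x) := by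
    intro x
    rw [moll_sub n hf.locallyIntegrable hhi.locallyIntegrable]; simp
  have m1 : AEMeasurable (fun x => ‖moll n (f - h) x‖ₑ) volume :=
    (moll_integrable n (hf.sub hhi)).aestronglyMeasurable.enorm
  have m2 : AEMeasurable (fun x => ‖moll n h x - h x‖ₑ) volume :=
    ((moll_integrable n hhi).sub hhi).aestronglyMeasurable.enorm
  calc ∫⁻ x, ‖moll n f x - f x‖ₑ
      ≤ ∫⁻ x, (‖moll n (f - h) x‖ₑ + (‖moll n h x - h x‖ₑ + ‖(h - f) x‖ₑ)) := by
        refine lintegral_mono fun x => ?_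
        rw [e]
        exact (enorm_add_le _ _).trans (add_le_add le_rfl (enorm_add_le _ _))
    _ = (∫⁻ x, ‖moll n (f - h) x‖ₑ) + ((∫⁻ x, ‖moll n h x - h x‖ₑ) + ∫⁻ x, ‖(h - f) x‖ₑ) := by
        rw [lintegral_add_left' m1, lintegral_add_left' m2]
    _ ≤ ε / 3 + (ε / 3 + ε / 3) := by
        refine add_le_add ?_ (add_le_add ?_ ?_)
        · exact (moll_lintegral_le n (hf.sub hhi).aestronglyMeasurable).trans hhe
        · refine le_trans ?_ hη'
          rw [← setLIntegral_const, ← lintegral_indicator hFc.measurableSet]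
          refine lintegral_mono fun x => ?_
          by_cases hx : x ∈ F
          · simp only [hx, indicator_of_mem]
            rw [← ofReal_norm, ← dist_eq_norm]
            exact ENNReal.ofReal_le_ofReal (hn x)
          · have hx1 : h x = 0 := by
              by_contra h0
              exact hx (self_subset_cthickening _ (subset_closure h0))
            have hx2 : moll n h x = 0 := by
              by_contra h0
              refine hx (cthickening_mono ?_ _ (moll_support n h h0))
              rw [div_le_one (by positivity)]; linarith [(Nat.cast_nonneg n : (0:ℝ) ≤ n)]
            simp [hx1, hx2]
        · refine le_trans (le_of_eq ?_) hhe
          refine lintegral_congr fun x => ?_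
          rw [← enorm_neg]; simp
    _ = ε := by
        rw [← add_assoc]; exact ENNReal.add_thirds ε

end

/-- Continuous compactly supported fields are uniform limits of admissible test fields. -/
lemma exists_test_near {U : Set Pl} (hU : IsOpen U) {g : Pl → Pl} (hg : Continuous g)
    (hc : HasCompactSupport g) (hs : tsupport g ⊆ U) {ε : ℝ} (hε : 0 < ε) :
    ∃ φ, IsTest U φ ∧ ∀ x, dist (φ x) (g x) ≤ ε := by
  obtain ⟨δ, hδ, hδU⟩ := hc.exists_cthickening_subset_open hU hs
  have h1 : ∀ᶠ n : ℕ in atTop, (1 : ℝ) / (n + 1) < δ :=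
    (tendsto_one_div_add_atTop_nhds_zero_nat).eventually_lt_const hδ
  obtain ⟨n, hn, hn'⟩ := (h1.and (moll_uniform (hc.uniformContinuous_of_continuous hg) hε)).exists
  have hts : tsupport (moll n g) ⊆ cthickening δ (tsupport g) :=
    closure_minimal ((moll_support n g).trans (cthickening_mono hn.le _)) isClosed_cthickening
  refine ⟨moll n g, ⟨moll_smooth n hg.locallyIntegrable, ?_, hts.trans hδU⟩, hn'⟩
  exact hc.cthickening.of_isClosed_subset (isClosed_tsupport _) hts

/-- Smooth approximation of a function of bounded variation near a compact set, with gradients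
controlled by mollifications `g n` of the variation measure. -/
lemma BV.approx {Ω : Set Pl} {u : Pl → ℝ} {ν : Measure Pl} {σ : Pl → Pl} (hΩ : IsOpen Ω)
    (h : BV Ω u ν σ) {F : Set Pl} (hF : IsCompact F) (hFΩ : F ⊆ Ω) :
    ∃ (un : ℕ → Pl → ℝ) (g : ℕ → Pl → ℝ), (∀ n, ContDiff ℝ 1 (un n)) ∧ (∀ n, Continuous (g n)) ∧
      (∀ n x, 0 ≤ g n x) ∧ (∀ n, ∀ x ∈ F, ‖fderiv ℝ (un n) x‖ ≤ g n x) ∧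
      Tendsto (fun n => ∫⁻ x in F, ‖un n x - u x‖ₑ) atTop (𝓝 0) ∧
      ∀ ψ : Pl → ℝ, Continuous ψ → HasCompactSupport ψ →
        Tendsto (fun n => ∫ x, ψ x * g n x) atTop (𝓝 (∫ x, ψ x ∂ν)) := by
  have hfin := h.fin
  obtain ⟨δ, hδ, hδΩ⟩ := hF.exists_cthickening_subset_open hΩ hFΩ
  set F' := cthickening δ F with hF'
  have hF'c : IsCompact F' := hF.cthickening
  set w := F'.indicator u with hw
  have hwi : Integrable w :=
    (h.loc.integrableOn_compact_subset hδΩ hF'c).integrable_indicator hF'c.measurableSet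
  obtain ⟨N, hN⟩ : ∃ N : ℕ, ∀ n ≥ N, (1 : ℝ) / (n + 1) < δ := eventually_atTop.1
    ((tendsto_one_div_add_atTop_nhds_zero_nat).eventually_lt_const hδ)
  have hcont : ∀ n, Continuous fun x => ∫ y, rho n (x - y) ∂ν := by
    intro n
    obtain ⟨C, hC⟩ := (rho_cpt n).exists_bound_of_continuous (rho_cont n)
    refine continuous_of_dominated (bound := fun _ => C) (fun x => ?_) (fun x => ae_of_all _ fun y => hC _)
      (integrable_const _) (ae_of_all _ fun y => ?_)
    · exact ((rho_cont n).comp (continuous_const.sub continuous_id)).aestronglyMeasurable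
    · exact (rho_cont n).comp (continuous_id.sub continuous_const)
  refine ⟨fun n => moll (n + N) w, fun n x => ∫ y, rho (n + N) (x - y) ∂ν,
    fun n => moll_smooth _ hwi.locallyIntegrable, fun n => hcont _,
    fun n x => integral_nonneg fun y => rho_nonneg _ _, ?_, ?_, ?_⟩
  · intro n x hx
    set m := n + N
    have hm : (1 : ℝ) / (m + 1) < δ := hN m (by simp [m])
    have hgn : 0 ≤ ∫ y, rho m (x - y) ∂ν := integral_nonneg fun y => rho_nonneg _ _
    refine ContinuousLinearMap.opNorm_le_bound _ hgn fun e => ?_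
    have hd := (rho_cpt m).hasFDerivAt_convolution_left (ContinuousLinearMap.lsmul ℝ ℝ)
      (rho_smooth m) hwi.locallyIntegrable x
    have hfd : fderiv ℝ (moll m w) x = _ := hd.fderiv
    have hsm : ContDiff ℝ 1 (fun y => rho m (x - y)) :=
      (rho_smooth m).comp (contDiff_const.sub contDiff_id)
    have hts : tsupport (fun y => rho m (x - y)) ⊆ closedBall x (1 / (m + 1)) := by
      refine closure_minimal (fun y hy => ?_) isClosed_closedBall
      have : x - y ∈ Function.support (rho m) := hy
      rw [rho_support] at this
      rw [mem_closedBall', dist_eq_norm]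
      exact (mem_ball_zero_iff.1 this).le
    have hsub : closedBall x (1 / ((m:ℝ) + 1)) ⊆ F' := fun y hy =>
      mem_cthickening_of_dist_le _ x _ _ hx ((mem_closedBall.1 hy).trans hm.le)
    have htest : IsTest Ω (fun y => rho m (x - y) • e) := isTest_smul_vec hsm
      ((isCompact_closedBall x _).of_isClosed_subset (isClosed_tsupport _) hts)
      (hts.trans (hsub.trans hδΩ)) e
    have hdv : ∀ y, dvg (fun y => rho m (x - y) • e) y = - fderiv ℝ (rho m) (x - y) e := by
      intro y
      rw [dvg_smul_vec hsm]
      have : HasFDerivAt (fun y => rho m (x - y)) ((fderiv ℝ (rho m) (x - y)).comp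
          (-(ContinuousLinearMap.id ℝ Pl))) y :=
        (((rho_smooth m).differentiable one_ne_zero (x - y)).hasFDerivAt).comp y
          ((hasFDerivAt_id y).const_sub x)
      rw [this.fderiv]; simp
    have key : fderiv ℝ (moll m w) x e = - ∫ y, u y * dvg (fun y => rho m (x - y) • e) y := by
      have hex := ((rho_cpt m).fderiv (𝕜 := ℝ)).convolutionExists_left
        ((ContinuousLinearMap.lsmul ℝ ℝ : ℝ →L[ℝ] ℝ →L[ℝ] ℝ).precompL Pl)
        ((rho_smooth m).continuous_fderiv one_ne_zero) hwi.locallyIntegrable x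
      rw [hfd, convolution_eq_swap, ContinuousLinearMap.integral_apply hex.integrable_swap,
        ← integral_neg]
      refine integral_congr_ae (ae_of_all _ fun y => ?_)
      simp only [ContinuousLinearMap.precompL_apply]
      by_cases hy : y ∈ F'
      · rw [hdv]; simp [w, hy]; ring
      · rw [dvg_eq_zero]
        · simp [w, hy]
        · intro hy'
          refine hy (hsub (hts ?_))
          refine closure_mono (fun z hz => ?_) hy'
          simp only [Function.mem_support] at hz ⊢
          intro h0; simp [h0] at hz
    rw [key, norm_neg, Real.norm_eq_abs]
    refine (h.abs_integral_le htest).trans (le_of_eq ?_)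
    rw [← integral_mul_const]
    refine integral_congr_ae (ae_of_all _ fun y => ?_)
    simp only [norm_smul, Real.norm_eq_abs, abs_of_nonneg (rho_nonneg _ _), m]
  · refine tendsto_of_tendsto_of_tendsto_of_le_of_le tendsto_const_nhds
      ((tendsto_add_atTop_iff_nat N).2 (moll_tendsto hwi)) (fun _ => zero_le) fun n => ?_
    refine le_trans (le_of_eq ?_) (setLIntegral_le_lintegral F _)
    refine setLIntegral_congr_fun hF.measurableSet fun x hx => ?_
    have : x ∈ F' := self_subset_cthickening _ hx
    simp [w, this]
  · intro ψ hψ hψc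
    have e : ∀ n, ∫ x, ψ x * ∫ y, rho n (x - y) ∂ν = ∫ y, moll n ψ y ∂ν := by
      intro n
      have : ∀ y, moll n ψ y = ∫ x, rho n (x - y) * ψ x := by
        intro y; rw [moll_apply]
        refine integral_congr_ae (ae_of_all _ fun x => ?_)
        simp only [smul_eq_mul]; rw [← rho_neg n (y - x), neg_sub]
      simp_rw [this, ← integral_const_mul]
      rw [integral_integral_swap]
      · simp_rw [mul_comm]
      · obtain ⟨C, hC⟩ := (rho_cpt n).exists_bound_of_continuous (rho_cont n)
        have hψi : Integrable (fun p : Pl × Pl => ψ p.1) (volume.prod ν) :=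
          (hψ.integrable_of_hasCompactSupport hψc).comp_fst ν
        refine Integrable.mul_bdd (c := C) hψi ?_ (ae_of_all _ fun p => hC _)
        exact ((rho_cont n).comp (continuous_fst.sub continuous_snd)).aestronglyMeasurable
    have ht : Tendsto (fun n => ∫ y, moll n ψ y ∂ν) atTop (𝓝 (∫ y, ψ y ∂ν)) := by
      rw [Metric.tendsto_atTop']
      intro ε hε
      have hpos : 0 < ε / (ν.real univ + 1) := by positivity
      obtain ⟨M, hM⟩ := eventually_atTop.1
        (moll_uniform (hψc.uniformContinuous_of_continuous hψ) hpos)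
      refine ⟨M, fun n hn => ?_⟩
      have hi1 : Integrable ψ ν := hψ.integrable_of_hasCompactSupport hψc
      have hi2 : Integrable (fun y => moll n ψ y - ψ y) ν := by
        refine Integrable.mono' (integrable_const (ε / (ν.real univ + 1))) ?_ (ae_of_all _ fun y => ?_)
        · exact ((moll_smooth n hψ.locallyIntegrable).continuous.sub hψ).aestronglyMeasurable
        · exact hM n hn.le y
      have hi3 : Integrable (moll n ψ) ν := by
        have := hi2.add hi1
        refine this.congr (ae_of_all _ fun y => by simp)
      rw [dist_eq_norm, ← integral_sub hi3 hi1]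
      calc ‖∫ y, (moll n ψ y - ψ y) ∂ν‖ ≤ (ε / (ν.real univ + 1)) * ν.real univ :=
            norm_integral_le_of_norm_le_const (ae_of_all _ fun y => hM n hn.le y)
        _ < ε := by
            rw [div_mul_eq_mul_div, div_lt_iff₀ (by positivity)]
            nlinarith [measureReal_nonneg (μ := ν) (s := univ)]
    have := (tendsto_add_atTop_iff_nat N).2 ht
    simpa only [e] using this

/-! ### The variation and its lower semicontinuity -/

lemma exists_cutoff {F U : Set Pl} (hF : IsCompact F) (hU : IsOpen U) (hFU : F ⊆ U) :
    ∃ χ : Pl → ℝ, Continuous χ ∧ HasCompactSupport χ ∧ tsupport χ ⊆ U ∧ (∀ x ∈ F, χ x = 1) ∧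
      ∀ x, 0 ≤ χ x ∧ χ x ≤ 1 := by
  obtain ⟨δ, hδ, hδU⟩ := hF.exists_cthickening_subset_open hU hFU
  obtain ⟨f, h1, h0, hc, hI⟩ := exists_continuous_one_zero_of_isCompact hF
    (t := (thickening δ F)ᶜ) isOpen_thickening.isClosed_compl
    (disjoint_compl_right_iff_subset.2 (self_subset_thickening hδ F))
  refine ⟨f, f.continuous, hc, ?_, fun x hx => h1 hx, hI⟩
  refine (closure_minimal (fun x hx => ?_) isClosed_cthickening : _ ⊆ cthickening δ F).trans hδU
  by_contra h
  exact hx (h0 fun h' => h (thickening_subset_cthickening _ _ h'))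

/-- The variation of `u` in `U`: supremum of `∫ u div φ` over admissible `φ` with `|φ| ≤ 1`. -/
def V (u : Pl → ℝ) (U : Set Pl) : ℝ≥0∞ :=
  ⨆ (φ : Pl → Pl) (_ : IsTest U φ) (_ : ∀ x, ‖φ x‖ ≤ 1), ENNReal.ofReal (∫ x, u x * dvg φ x)

lemma le_V {u : Pl → ℝ} {U : Set Pl} {φ : Pl → Pl} (hφ : IsTest U φ) (h1 : ∀ x, ‖φ x‖ ≤ 1) :
    ENNReal.ofReal (∫ x, u x * dvg φ x) ≤ V u U :=
  le_iSup_of_le φ (le_iSup_of_le hφ (le_iSup_of_le h1 le_rfl))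

lemma V_le {u : Pl → ℝ} {U : Set Pl} {m : ℝ≥0∞}
    (h : ∀ φ, IsTest U φ → (∀ x, ‖φ x‖ ≤ 1) → ENNReal.ofReal (∫ x, u x * dvg φ x) ≤ m) :
    V u U ≤ m :=
  iSup_le fun φ => iSup_le fun hφ => iSup_le fun h1 => h φ hφ h1

/-- Convergence in `L¹` on compact subsets of `Ω`. -/
def LConv (Ω : Set Pl) (un : ℕ → Pl → ℝ) (u : Pl → ℝ) : Prop :=
  ∀ F, IsCompact F → F ⊆ Ω → Tendsto (fun n => ∫⁻ x in F, ‖un n x - u x‖ₑ) atTop (𝓝 0)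

lemma LConv.mono {Ω U : Set Pl} {un : ℕ → Pl → ℝ} {u : Pl → ℝ} (h : LConv Ω un u) (hU : U ⊆ Ω) :
    LConv U un u := fun F hF hFU => h F hF (hFU.trans hU)

lemma LConv.integral_dvg {Ω : Set Pl} {un : ℕ → Pl → ℝ} {u : Pl → ℝ} (h : LConv Ω un u)
    (hun : ∀ n, LocallyIntegrableOn (un n) Ω volume) (hu : LocallyIntegrableOn u Ω volume)
    {φ : Pl → Pl} (hφ : IsTest Ω φ) :
    Tendsto (fun n => ∫ x, un n x * dvg φ x) atTop (𝓝 (∫ x, u x * dvg φ x)) := by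
  refine tendsto_integral_mul_dvg hun hu hφ ?_
  have h0 := h _ hφ.cpt hφ.supp
  have h1 := (ENNReal.tendsto_toReal ENNReal.zero_ne_top).comp h0
  refine h1.congr fun n => ?_
  have hi : IntegrableOn (fun x => un n x - u x) (tsupport φ) :=
    ((hun n).integrableOn_compact_subset hφ.supp hφ.cpt).sub
      (hu.integrableOn_compact_subset hφ.supp hφ.cpt)
  exact (integral_norm_eq_lintegral_enorm hi.aestronglyMeasurable).symm

/-- Lower semicontinuity of the variation. -/
lemma V_lsc {Ω : Set Pl} {un : ℕ → Pl → ℝ} {u : Pl → ℝ} (h : LConv Ω un u)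
    (hun : ∀ n, LocallyIntegrableOn (un n) Ω volume) (hu : LocallyIntegrableOn u Ω volume)
    {m : ℝ≥0∞} (hm : ∃ᶠ n in atTop, V (un n) Ω ≤ m) : V u Ω ≤ m := by
  refine V_le fun φ hφ h1 => ?_
  have ht := (ENNReal.continuous_ofReal.tendsto _).comp (h.integral_dvg hun hu hφ)
  exact le_of_tendsto_of_frequently ht (hm.mono fun n hn => (le_V hφ h1).trans hn)

/-- Quantitative lower semicontinuity: the variation of `v` is almost at least that of `u` as soon as
`v` is close to `u` in `L¹(Ω)`, uniformly in `v`. -/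
lemma V_modulus {Ω : Set Pl} {u : Pl → ℝ} (hu : LocallyIntegrableOn u Ω volume)
    (hfin : V u Ω ≠ ⊤) {κ : ℝ≥0∞} (hκ : κ ≠ 0) :
    ∃ ρ : ℝ≥0∞, ρ ≠ 0 ∧ ∀ v, LocallyIntegrableOn v Ω volume →
      ∫⁻ x in Ω, ‖v x - u x‖ₑ ≤ ρ → V u Ω ≤ V v Ω + κ := by
  by_contra! hcon
  have hex : ∀ n : ℕ, ∃ v, LocallyIntegrableOn v Ω volume ∧
      ∫⁻ x in Ω, ‖v x - u x‖ₑ ≤ (n : ℝ≥0∞)⁻¹ ∧ V v Ω + κ < V u Ω := fun n =>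
    hcon _ (ENNReal.inv_ne_zero.2 (ENNReal.natCast_ne_top n))
  choose v hv1 hv2 hv3 using hex
  have hc : LConv Ω v u := fun F hF hFΩ => by
    refine tendsto_of_tendsto_of_tendsto_of_le_of_le tendsto_const_nhds
      ENNReal.tendsto_inv_nat_nhds_zero (fun _ => zero_le) fun n => ?_
    exact (lintegral_mono_set hFΩ).trans (hv2 n)
  have hle : V u Ω ≤ V u Ω - κ := V_lsc hc hv1 hu
    (Eventually.frequently (Eventually.of_forall fun n => ENNReal.le_sub_of_add_le_right
      (fun h => by have := hv3 0; rw [h] at this; simp at this) (hv3 n).le))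
  have h0 : V u Ω ≠ 0 := fun h => by have := hv3 0; rw [h] at this; exact not_lt_zero this
  exact absurd hle (not_le.2 (ENNReal.sub_lt_self hfin h0 hκ))

lemma norm_clip_sub_le {y s : Pl} (hs : ‖s‖ = 1) : ‖(max 1 ‖y‖)⁻¹ • y - s‖ ≤ 2 * ‖y - s‖ := by
  have h1 : ‖(max 1 ‖y‖)⁻¹ • y - y‖ ≤ ‖y - s‖ := by
    rcases le_total ‖y‖ 1 with h | h
    · rw [max_eq_left h]; simp
    · rw [max_eq_right h]
      have hy : 0 < ‖y‖ := by linarith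
      have : ‖y‖⁻¹ • y - y = (‖y‖⁻¹ - 1) • y := by rw [sub_smul, one_smul]
      rw [this, norm_smul, Real.norm_eq_abs, abs_of_nonpos (by
        rw [sub_nonpos]; exact inv_le_one_of_one_le₀ h)]
      have h2 : -(‖y‖⁻¹ - 1) * ‖y‖ = ‖y‖ - 1 := by field_simp; ring
      rw [h2, ← hs]
      exact norm_sub_norm_le _ _
  calc ‖(max 1 ‖y‖)⁻¹ • y - s‖ = ‖((max 1 ‖y‖)⁻¹ • y - y) + (y - s)‖ := by congr 1; abel
    _ ≤ _ := (norm_add_le _ _).trans (by linarith)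

lemma norm_clip_le (y : Pl) : ‖(max 1 ‖y‖)⁻¹ • y‖ ≤ 1 := by
  rw [norm_smul, norm_inv, Real.norm_of_nonneg (by positivity), inv_mul_le_iff₀ (by positivity)]
  simp

namespace BV

variable {Ω : Set Pl} {u : Pl → ℝ} {ν : Measure Pl} {σ : Pl → Pl}

lemma integrable_sigma (h : BV Ω u ν σ) : Integrable σ ν := by
  have := h.fin
  refine Integrable.mono' (integrable_const (1:ℝ)) h.meas.aestronglyMeasurable ?_
  filter_upwards [h.unit] with x hx
  exact hx.le

/-- A test field nearly dual to the polar vector `σ` recovers the variation of `U` up to `κ`. -/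
lemma exists_test (h : BV Ω u ν σ) {U : Set Pl} (hU : IsOpen U) (hUΩ : U ⊆ Ω) {κ : ℝ} (hκ : 0 < κ) :
    ∃ φ, IsTest U φ ∧ (∀ x, ‖φ x‖ ≤ 1) ∧
      (ν U).toReal ≤ (1 + κ) * (∫ x, u x * dvg φ x) + (3 + ν.real univ) * κ := by
  have hfin := h.fin
  obtain ⟨F, hFU, hF, hνF⟩ := hU.measurableSet.exists_isCompact_lt_add
    (measure_ne_top ν U) (ε := ENNReal.ofReal κ) (by simpa using hκ)
  have hνF' : (ν U).toReal ≤ ν.real F + κ := by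
    have := ENNReal.toReal_mono (by finiteness) hνF.le
    rwa [ENNReal.toReal_add (by finiteness) (by finiteness), ENNReal.toReal_ofReal hκ.le] at this
  obtain ⟨χ, hχ, hχc, hχU, hχ1, hχI⟩ := exists_cutoff hF hU hFU
  obtain ⟨g, hgc, hge, hg, hgi⟩ := h.integrable_sigma.exists_hasCompactSupport_integral_sub_le hκ
  set R : Pl → Pl := fun x => (max 1 ‖g x‖)⁻¹ • g x with hR
  have hRc : Continuous R := by
    refine Continuous.smul (Continuous.inv₀ (continuous_const.max hg.norm) fun x => ?_) hg
    positivity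
  set f : Pl → Pl := fun x => χ x • R x with hf
  have hfc : Continuous f := hχ.smul hRc
  have hfs : tsupport f ⊆ tsupport χ := closure_mono fun x hx => by
    simp only [Function.mem_support, f] at hx ⊢
    intro h0; simp [h0] at hx
  obtain ⟨φ, hφ, hφf⟩ := exists_test_near hU hfc
    (hχc.of_isClosed_subset (isClosed_tsupport _) hfs) (hfs.trans hχU) hκ
  have hfn : ∀ x, ‖f x‖ ≤ 1 := fun x => by
    simp only [f, norm_smul, Real.norm_of_nonneg (hχI x).1]
    exact mul_le_one₀ (hχI x).2 (norm_nonneg _) (norm_clip_le _)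
  refine ⟨(-(1 + κ)⁻¹ : ℝ) • φ, hφ.const_smul _, fun x => ?_, ?_⟩
  · have h1 : ‖φ x‖ ≤ 1 + κ := by
      have := hφf x
      rw [dist_eq_norm] at this
      calc ‖φ x‖ = ‖f x + (φ x - f x)‖ := by congr 1; abel
        _ ≤ _ := (norm_add_le _ _).trans (add_le_add (hfn x) this)
    rw [Pi.smul_apply, norm_smul, norm_neg, norm_inv, Real.norm_of_nonneg (by positivity),
      inv_mul_le_iff₀ (by positivity)]
    simpa using h1
  · have e1 : ∫ x, u x * dvg ((-(1 + κ)⁻¹ : ℝ) • φ) x = (1 + κ)⁻¹ * ∫ x, ⟪φ x, σ x⟫ ∂ν := by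
      have : ∀ x, u x * dvg ((-(1 + κ)⁻¹ : ℝ) • φ) x = (-(1 + κ)⁻¹) * (u x * dvg φ x) := by
        intro x; rw [dvg_const_smul hφ.smooth]; ring
      simp_rw [this]
      rw [integral_const_mul, h.parts φ (hφ.mono hUΩ)]; ring
    rw [e1, ← mul_assoc, mul_inv_cancel₀ (by positivity), one_mul]
    have hFi : Integrable (F.indicator (fun _ => (1:ℝ))) ν :=
      (integrable_const (1:ℝ)).indicator hF.measurableSet
    have hlow : ∀ᵐ x ∂ν, F.indicator (fun _ => (1:ℝ)) x - 2 * ‖σ x - g x‖ - κ ≤ ⟪φ x, σ x⟫ := by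
      filter_upwards [h.unit] with x hx
      have h1 : ⟪φ x, σ x⟫ = χ x * (1 + ⟪R x - σ x, σ x⟫) + ⟪φ x - f x, σ x⟫ := by
        simp only [f, inner_sub_left, real_inner_smul_left, real_inner_self_eq_norm_sq, hx]; ring
      have h2 : -(2 * ‖σ x - g x‖) ≤ ⟪R x - σ x, σ x⟫ := by
        have := neg_le_of_abs_le (abs_real_inner_le_norm (R x - σ x) (σ x))
        rw [hx, mul_one] at this
        have h3 := norm_clip_sub_le (y := g x) hx
        rw [norm_sub_rev (σ x)]
        simp only [R] at this ⊢
        linarith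
      have h4 : -κ ≤ ⟪φ x - f x, σ x⟫ := by
        have := neg_le_of_abs_le (abs_real_inner_le_norm (φ x - f x) (σ x))
        have h5 := hφf x
        rw [dist_eq_norm] at h5
        rw [hx, mul_one] at this
        linarith
      have h6 : F.indicator (fun _ => (1:ℝ)) x ≤ χ x := by
        by_cases hxF : x ∈ F
        · simp [hxF, hχ1 x hxF]
        · simp [hxF, (hχI x).1]
      have h7 := hχI x
      have h8 := norm_nonneg (σ x - g x)
      rw [h1]
      nlinarith
    have hsi : Integrable (fun x => 2 * ‖σ x - g x‖) ν := ((h.integrable_sigma.sub hgi).norm).const_mul 2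
    have hm := integral_mono_ae ((hFi.sub hsi).sub (integrable_const κ)) (h.integrable_inner hφ) hlow
    rw [integral_sub' (hFi.sub hsi) (integrable_const κ), integral_sub' hFi hsi, integral_const_mul,
      integral_indicator_const _ hF.measurableSet, integral_const] at hm
    simp only [smul_eq_mul, mul_one] at hm
    nlinarith

/-- The variation measure of an open set is the variation in that set. -/
lemma V_eq (h : BV Ω u ν σ) {U : Set Pl} (hU : IsOpen U) (hUΩ : U ⊆ Ω) : V u U = ν U := by
  have hfin := h.fin
  have hle : V u U ≤ ν U := V_le fun φ hφ h1 => by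
    rw [← ENNReal.ofReal_toReal (measure_ne_top ν U)]
    exact ENNReal.ofReal_le_ofReal ((le_abs_self _).trans (h.integral_le_measure hUΩ hφ h1))
  refine le_antisymm hle ?_
  have hV : V u U ≠ ⊤ := ne_top_of_le_ne_top (measure_ne_top ν U) hle
  rw [← ENNReal.toReal_le_toReal (measure_ne_top ν U) hV]
  have hVn := ENNReal.toReal_nonneg (a := V u U)
  have hνn := measureReal_nonneg (μ := ν) (s := univ)
  set C : ℝ := (V u U).toReal + (3 + ν.real univ) with hC
  have hC0 : 0 < C := by positivity
  refine le_of_forall_pos_le_add fun ε hε => ?_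
  obtain ⟨φ, hφ, h1, hb⟩ := h.exists_test hU hUΩ (κ := ε / C) (by positivity)
  have h2 : ∫ x, u x * dvg φ x ≤ (V u U).toReal := by
    have := ENNReal.toReal_mono hV (le_V (u := u) hφ h1)
    rw [ENNReal.toReal_ofReal'] at this
    exact (le_max_left _ _).trans this
  have h3 : ε / C * C = ε := by field_simp
  have h4 : 0 < ε / C := by positivity
  calc _ ≤ _ := hb
    _ ≤ (1 + ε / C) * (V u U).toReal + (3 + ν.real univ) * (ε / C) := by gcongr
    _ = (V u U).toReal + ε / C * C := by rw [hC]; ring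
    _ = _ := by rw [h3]

end BV

/-- A linear functional dominated by the norm of the values of a linear map to a Hilbert space is
represented by a vector. -/
lemma exists_representative {T H : Type*} [AddCommGroup T] [Module ℝ T] [NormedAddCommGroup H]
    [InnerProductSpace ℝ H] [CompleteSpace H] (J : T →ₗ[ℝ] H) (l : T →ₗ[ℝ] ℝ) (C : ℝ)
    (h : ∀ t, |l t| ≤ C * ‖J t‖) : ∃ θ : H, ∀ t, l t = ⟪θ, J t⟫ := by
  have hker : LinearMap.ker J.rangeRestrict ≤ LinearMap.ker l := fun t ht => by
    have h1 : J t = 0 := by simpa using ht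
    have h2 := h t
    rw [h1] at h2
    simpa using h2
  obtain ⟨s, hs⟩ := J.rangeRestrict.exists_rightInverse_of_surjective J.range_rangeRestrict
  have hl : ∀ t, l (s (J.rangeRestrict t)) = l t := by
    intro t
    have : s (J.rangeRestrict t) - t ∈ LinearMap.ker J.rangeRestrict := by
      rw [LinearMap.mem_ker, map_sub, sub_eq_zero]
      exact LinearMap.congr_fun hs _
    have := hker this
    rw [LinearMap.mem_ker, map_sub, sub_eq_zero] at this
    exact this
  let f : StrongDual ℝ (LinearMap.range J) := (l.comp s).mkContinuous C (by
    rintro ⟨_, t, rfl⟩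
    have h1 := hl t
    have h2 := h t
    simp only [LinearMap.comp_apply]
    change ‖l (s (J.rangeRestrict t))‖ ≤ C * ‖J t‖
    rw [h1]; exact h2)
  obtain ⟨g, hg, -⟩ := exists_extension_norm_eq (LinearMap.range J) f
  refine ⟨(InnerProductSpace.toDual ℝ H).symm g, fun t => ?_⟩
  rw [InnerProductSpace.toDual_symm_apply]
  have := hg ⟨J t, t, rfl⟩
  rw [this]
  exact (hl t).symm

/-- The vector space of admissible test fields. -/
def testSpace (Ω : Set Pl) : Submodule ℝ (Pl → Pl) where
  carrier := {φ | IsTest Ω φ}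
  add_mem' h1 h2 := h1.add h2
  zero_mem' := IsTest.zero Ω
  smul_mem' c _ h := h.const_smul c

/-- If the distributional gradient of `u` is dominated by a finite measure, then `u` has bounded
variation. -/
lemma BV.of_dominated {Ω : Set Pl} {u : Pl → ℝ} (hum : Measurable u)
    (hu : LocallyIntegrableOn u Ω volume) {M : Measure Pl} [IsFiniteMeasure M] (hM : M Ωᶜ = 0)
    (h : ∀ φ, IsTest Ω φ → |∫ x, u x * dvg φ x| ≤ ∫ x, ‖φ x‖ ∂M) : ∃ ν σ, BV Ω u ν σ := by
  have hLp : ∀ φ : testSpace Ω, MemLp (φ : Pl → Pl) 2 M := fun φ =>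
    φ.2.smooth.continuous.memLp_of_hasCompactSupport φ.2.cpt
  let J : testSpace Ω →ₗ[ℝ] Lp Pl 2 M :=
    { toFun := fun φ => (hLp φ).toLp _
      map_add' := fun φ ψ => MemLp.toLp_add (hLp φ) (hLp ψ)
      map_smul' := fun c φ => MemLp.toLp_const_smul c (hLp φ) }
  let l : testSpace Ω →ₗ[ℝ] ℝ :=
    { toFun := fun φ => ∫ x, u x * dvg φ x
      map_add' := fun φ ψ => by
        rw [← integral_add (integrable_mul_dvg hu φ.2) (integrable_mul_dvg hu ψ.2)]
        refine integral_congr_ae (ae_of_all _ fun x => ?_)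
        simp only [Submodule.coe_add, dvg_add φ.2.smooth ψ.2.smooth]; ring
      map_smul' := fun c φ => by
        simp only [Submodule.coe_smul, RingHom.id_apply, smul_eq_mul]
        rw [← integral_const_mul]
        refine integral_congr_ae (ae_of_all _ fun x => ?_)
        simp only [dvg_const_smul φ.2.smooth]; ring }
  have hbd : ∀ φ : testSpace Ω, |l φ| ≤ (M.real univ) ^ (1 / 2 : ℝ) * ‖J φ‖ := by
    intro φ
    refine (h φ φ.2).trans ?_
    have h1 : eLpNorm (φ : Pl → Pl) 1 M ≤ eLpNorm (φ : Pl → Pl) 2 M * M univ ^ (1 / 2 : ℝ) := by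
      have := eLpNorm_le_eLpNorm_mul_rpow_measure_univ (p := 1) (q := 2) (μ := M)
        (by norm_num) (hLp φ).aestronglyMeasurable
      convert this using 2
      norm_num
    have h2 : ∫ x, ‖(φ : Pl → Pl) x‖ ∂M = (eLpNorm (φ : Pl → Pl) 1 M).toReal := by
      rw [eLpNorm_one_eq_lintegral_enorm, integral_norm_eq_lintegral_enorm (hLp φ).aestronglyMeasurable]
    have h3 : ‖J φ‖ = (eLpNorm (φ : Pl → Pl) 2 M).toReal := Lp.norm_toLp _ (hLp φ)
    rw [h2, h3]
    have := ENNReal.toReal_mono (ENNReal.mul_ne_top (hLp φ).eLpNorm_ne_top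
      (ENNReal.rpow_ne_top_of_nonneg (by norm_num) (measure_ne_top M _))) h1
    rw [ENNReal.toReal_mul, ← ENNReal.toReal_rpow, mul_comm] at this
    exact this
  obtain ⟨Θ, hΘ⟩ := exists_representative J l _ hbd
  -- a Borel representative of the representing field
  set θ : Pl → Pl := (Lp.aestronglyMeasurable Θ).mk Θ with hθdef
  have hθm : Measurable θ := (Lp.aestronglyMeasurable Θ).stronglyMeasurable_mk.measurable
  have hθae : Θ =ᵐ[M] θ := (Lp.aestronglyMeasurable Θ).ae_eq_mk
  have hθL : MemLp θ 2 M := (memLp_congr_ae hθae).1 (Lp.memLp Θ)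
  have hθi : Integrable θ M := hθL.integrable (by norm_num)
  have hrep : ∀ φ, IsTest Ω φ → ∫ x, u x * dvg φ x = ∫ x, ⟪θ x, φ x⟫ ∂M := by
    intro φ hφ
    have h1 : ∫ x, u x * dvg φ x = _ := hΘ ⟨φ, hφ⟩
    rw [h1, L2.inner_def]
    refine integral_congr_ae ?_
    filter_upwards [hθae, (hLp ⟨φ, hφ⟩).coeFn_toLp] with x hx hx2
    change ⟪Θ x, ((hLp ⟨φ, hφ⟩).toLp _ : Pl → Pl) x⟫ = _
    rw [hx, hx2]
  refine ⟨M.withDensity (fun x => ‖θ x‖ₑ), fun x => - (‖θ x‖⁻¹ • θ x), hum, hu, ?_, ?_, ?_, ?_, ?_⟩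
  · exact isFiniteMeasure_withDensity hθi.2.ne
  · exact withDensity_absolutelyContinuous _ _ hM
  · exact (hθm.norm.inv.smul hθm).neg
  · rw [ae_withDensity_iff hθm.enorm]
    refine ae_of_all _ fun x hx => ?_
    have : ‖θ x‖ ≠ 0 := by simpa using hx
    rw [norm_neg, norm_smul, norm_inv, norm_norm, inv_mul_cancel₀ this]
  · intro φ hφ
    rw [hrep φ hφ]
    have e := integral_withDensity_eq_integral_smul (μ := M) (f := fun x => ‖θ x‖₊)
      hθm.nnnorm (fun x => ⟪φ x, - (‖θ x‖⁻¹ • θ x)⟫)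
    have e' : (fun x => ‖θ x‖ₑ) = fun x => ((‖θ x‖₊ : NNReal) : ℝ≥0∞) := rfl
    rw [e', e, ← integral_neg]
    refine integral_congr_ae (ae_of_all _ fun x => ?_)
    simp only [inner_neg_right, real_inner_smul_right, NNReal.smul_def, coe_nnnorm, smul_eq_mul]
    rw [real_inner_comm]
    rcases eq_or_ne ‖θ x‖ 0 with h0 | h0
    · simp [norm_eq_zero.1 h0]
    · field_simp

open scoped CompactlySupported

/-! ### Limits of functions of bounded variation -/

/-- Finite measures of bounded mass have a vague limit along an ultrafilter. -/
lemma exists_vague_limit (νn : ℕ → Measure Pl) {C : ℝ≥0∞} (hC : C ≠ ⊤) (hb : ∀ n, νn n univ ≤ C) :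
    ∃ (M : Measure Pl) (_ : IsFiniteMeasure M) (𝒰 : Ultrafilter ℕ), (𝒰 : Filter ℕ) ≤ atTop ∧
      ∀ f : Pl → ℝ, Continuous f → HasCompactSupport f →
        Tendsto (fun n => ∫ x, f x ∂(νn n)) 𝒰 (𝓝 (∫ x, f x ∂M)) := by
  have hfin : ∀ n, IsFiniteMeasure (νn n) := fun n => ⟨(hb n).trans_lt hC.lt_top⟩
  set 𝒰 : Ultrafilter ℕ := Ultrafilter.of atTop
  have h𝒰 : (𝒰 : Filter ℕ) ≤ atTop := Ultrafilter.of_le _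
  have hreal : ∀ n, (νn n).real univ ≤ C.toReal := fun n => ENNReal.toReal_mono hC (hb n)
  have hint : ∀ (f : C_c(Pl, ℝ)) n, Integrable f (νn n) := fun f n =>
    f.continuous.integrable_of_hasCompactSupport f.hasCompactSupport
  have hbound : ∀ (f : C_c(Pl, ℝ)) (D : ℝ), (∀ x, ‖f x‖ ≤ D) → ∀ n,
      ‖∫ x, f x ∂(νn n)‖ ≤ D * C.toReal := by
    intro f D hD n
    have hD0 : 0 ≤ D := (norm_nonneg _).trans (hD 0)
    exact (norm_integral_le_of_norm_le_const (ae_of_all _ hD)).trans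
      (mul_le_mul_of_nonneg_left (hreal n) hD0)
  have hlim : ∀ f : C_c(Pl, ℝ), ∃ L : ℝ, Tendsto (fun n => ∫ x, f x ∂(νn n)) 𝒰 (𝓝 L) := by
    intro f
    obtain ⟨D, hD⟩ := f.hasCompactSupport.exists_bound_of_continuous f.continuous
    have hk : IsCompact (closedBall (0:ℝ) (D * C.toReal)) := isCompact_closedBall _ _
    obtain ⟨L, -, hL⟩ := hk.ultrafilter_le_nhds (𝒰.map fun n => ∫ x, f x ∂(νn n)) (by
      refine le_principal_iff.2 (Filter.mem_map.2 (Filter.univ_mem' fun n => ?_))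
      simpa using hbound f D hD n)
    exact ⟨L, hL⟩
  choose L hL using hlim
  let Λ₀ : C_c(Pl, ℝ) →ₗ[ℝ] ℝ :=
    { toFun := L
      map_add' := fun f g => by
        refine tendsto_nhds_unique (hL (f + g)) (((hL f).add (hL g)).congr fun n => ?_)
        rw [← integral_add (hint f n) (hint g n)]; rfl
      map_smul' := fun c f => by
        refine tendsto_nhds_unique (hL (c • f)) (((hL f).const_mul c).congr fun n => ?_)
        rw [← integral_const_mul]; rfl }
  let Λ : C_c(Pl, ℝ) →ₚ[ℝ] ℝ := PositiveLinearMap.mk₀ Λ₀ fun f hf => by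
    refine ge_of_tendsto (hL f) (Eventually.of_forall fun n => integral_nonneg fun x => ?_)
    exact hf x
  have hΛ : ∀ f : C_c(Pl, ℝ), Λ f = L f := fun f => rfl
  refine ⟨RealRMK.rieszMeasure Λ, ?_, 𝒰, h𝒰, ?_⟩
  · refine ⟨lt_of_le_of_lt ?_ hC.lt_top⟩
    rw [isOpen_univ.measure_eq_iSup_isCompact]
    refine iSup_le fun K => iSup_le fun _ => iSup_le fun hK => ?_
    obtain ⟨χ, hχ, hχc, -, hχ1, hχI⟩ := exists_cutoff hK isOpen_univ (subset_univ K)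
    let f : C_c(Pl, ℝ) := ⟨⟨χ, hχ⟩, hχc⟩
    refine (RealRMK.rieszMeasure_le_of_eq_one Λ (f := f) (fun x => (hχI x).1) hK hχ1).trans ?_
    refine ENNReal.ofReal_le_of_le_toReal ?_
    rw [hΛ]
    refine le_of_tendsto (hL f) (Eventually.of_forall fun n => ?_)
    have := hbound f 1 (fun x => by
      change ‖χ x‖ ≤ 1
      rw [Real.norm_of_nonneg (hχI x).1]; exact (hχI x).2) n
    rw [one_mul] at this
    exact (le_abs_self _).trans this
  · intro f hf hfc
    have := RealRMK.integral_rieszMeasure Λ ⟨⟨f, hf⟩, hfc⟩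
    rw [hΛ] at this
    have h2 := hL ⟨⟨f, hf⟩, hfc⟩
    rw [← this] at h2
    exact h2

/-- Limits in `L¹` of functions with bounded variations have bounded variation. -/
lemma BV.of_tendsto {Ω : Set Pl} (hΩ : IsOpen Ω) {un : ℕ → Pl → ℝ} {u : Pl → ℝ}
    {νn : ℕ → Measure Pl} {σn : ℕ → Pl → Pl} (hn : ∀ n, BV Ω (un n) (νn n) (σn n))
    (hum : Measurable u) (hu : LocallyIntegrableOn u Ω volume) (h : LConv Ω un u) {C : ℝ≥0∞}
    (hC : C ≠ ⊤) (hb : ∀ n, νn n Ω ≤ C) : ∃ ν σ, BV Ω u ν σ := by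
  have hb' : ∀ n, νn n univ ≤ C := fun n => by
    rw [← measure_add_measure_compl hΩ.measurableSet, (hn n).conc, add_zero]; exact hb n
  obtain ⟨M, hM, 𝒰, h𝒰, hlim⟩ := exists_vague_limit νn hC hb'
  refine BV.of_dominated (M := M.restrict Ω) hum hu ?_ fun φ hφ => ?_
  · rw [Measure.restrict_apply hΩ.measurableSet.compl]; simp
  · rw [setIntegral_eq_integral_of_forall_compl_eq_zero (s := Ω) fun x hx => by
      have : φ x = 0 := image_eq_zero_of_notMem_tsupport fun hx' => hx (hφ.supp hx')
      simp [this]]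
    refine le_of_tendsto_of_tendsto
      (((h.integral_dvg (fun n => (hn n).loc) hu hφ).mono_left h𝒰).abs)
      (hlim _ hφ.smooth.continuous.norm hφ.cpt.norm) (Eventually.of_forall fun n => ?_)
    exact (hn n).abs_integral_le hφ

/-! ### Maxima and minima -/

lemma tendsto_integral_dvg_lint {U : Set Pl} {un : ℕ → Pl → ℝ} {u : Pl → ℝ}
    (hun : ∀ n, LocallyIntegrableOn (un n) U volume) (hu : LocallyIntegrableOn u U volume)
    {φ : Pl → Pl} (hφ : IsTest U φ)
    (h0 : Tendsto (fun n => ∫⁻ x in tsupport φ, ‖un n x - u x‖ₑ) atTop (𝓝 0)) :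
    Tendsto (fun n => ∫ x, un n x * dvg φ x) atTop (𝓝 (∫ x, u x * dvg φ x)) := by
  refine tendsto_integral_mul_dvg hun hu hφ ?_
  have h1 := (ENNReal.tendsto_toReal ENNReal.zero_ne_top).comp h0
  refine h1.congr fun n => ?_
  have hi : IntegrableOn (fun x => un n x - u x) (tsupport φ) :=
    ((hun n).integrableOn_compact_subset hφ.supp hφ.cpt).sub
      (hu.integrableOn_compact_subset hφ.supp hφ.cpt)
  exact (integral_norm_eq_lintegral_enorm hi.aestronglyMeasurable).symm

/-- Smoothed maximum (`s = 1`) and minimum (`s = -1`) of two real numbers. -/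
def smax (s κ a b : ℝ) : ℝ := (a + b + s * √((a - b) ^ 2 + κ ^ 2)) / 2

lemma abs_smax_sub_le {s κ a b c d : ℝ} (hs : |s| ≤ 1) (hκ : 0 < κ) :
    |smax s κ a b - (c + d + s * |c - d|) / 2| ≤ κ + |a - c| + |b - d| := by
  have h1 : abs (√((a - b) ^ 2 + κ ^ 2) - |c - d|) ≤ κ + |a - c| + |b - d| := by
    have h2 : |a - b| ≤ √((a - b) ^ 2 + κ ^ 2) := by
      rw [← Real.sqrt_sq_eq_abs]; exact Real.sqrt_le_sqrt (by nlinarith)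
    have h3 : √((a - b) ^ 2 + κ ^ 2) ≤ |a - b| + κ := by
      rw [Real.sqrt_le_left (by positivity)]
      nlinarith [sq_abs (a - b), abs_nonneg (a - b), mul_nonneg (abs_nonneg (a - b)) hκ.le]
    have h4 : |a - b| ≤ |a - c| + |c - d| + |b - d| := by
      have : a - b = (a - c) + (c - d) - (b - d) := by ring
      rw [this]; exact (abs_sub _ _).trans (add_le_add_left (abs_add_le _ _) _)
    have h5 : |c - d| ≤ |a - c| + |a - b| + |b - d| := by
      have : c - d = -(a - c) + (a - b) + (b - d) := by ring
      rw [this]; refine (abs_add_le _ _).trans (add_le_add_left ((abs_add_le _ _).trans ?_) _)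
      rw [abs_neg]
    rw [abs_le]; constructor <;> linarith
  have e : smax s κ a b - (c + d + s * |c - d|) / 2
      = ((a - c) + (b - d) + s * (√((a - b) ^ 2 + κ ^ 2) - |c - d|)) / 2 := by
    unfold smax; ring
  rw [e, abs_div, abs_two]
  have h6 : |s * (√((a - b) ^ 2 + κ ^ 2) - |c - d|)| ≤ κ + |a - c| + |b - d| := by
    rw [abs_mul]
    calc _ ≤ 1 * abs (√((a - b) ^ 2 + κ ^ 2) - |c - d|) := by gcongr
      _ ≤ _ := by rw [one_mul]; exact h1
  have h7 : |(a - c) + (b - d) + s * (√((a - b) ^ 2 + κ ^ 2) - |c - d|)|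
      ≤ |a - c| + |b - d| + (κ + |a - c| + |b - d|) :=
    (abs_add_le _ _).trans (add_le_add (abs_add_le _ _) h6)
  linarith

lemma smax_hasFDerivAt {f g : Pl → ℝ} {x : Pl} {f' g' : Pl →L[ℝ] ℝ} (hf : HasFDerivAt f f' x)
    (hg : HasFDerivAt g g' x) (s : ℝ) {κ : ℝ} (hκ : 0 < κ) :
    HasFDerivAt (fun y => smax s κ (f y) (g y))
      ((1 / 2 : ℝ) • (f' + g' + s • (((f x - g x) / √((f x - g x) ^ 2 + κ ^ 2)) • (f' - g')))) x := by
  have h1 : HasFDerivAt (fun y => (f y - g y) ^ 2 + κ ^ 2) ((2 * (f x - g x)) • (f' - g')) x := by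
    have := ((hf.sub hg).pow 2).add_const (κ ^ 2)
    simpa using this
  have hne : (f x - g x) ^ 2 + κ ^ 2 ≠ 0 := by positivity
  have h2 := ((hf.add hg).add ((h1.sqrt hne).const_mul s)).const_mul (1 / 2 : ℝ)
  have hs : √((f x - g x) ^ 2 + κ ^ 2) ≠ 0 := by positivity
  refine (h2.congr_fderiv ?_).congr_of_eventuallyEq (Eventually.of_forall fun y => ?_)
  · have e : 1 / (2 * √((f x - g x) ^ 2 + κ ^ 2)) * (2 * (f x - g x))
        = (f x - g x) / √((f x - g x) ^ 2 + κ ^ 2) := by field_simp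
    rw [smul_smul (1 / (2 * √((f x - g x) ^ 2 + κ ^ 2))), e]
  · simp [smax]; ring

lemma smax_contDiff {f g : Pl → ℝ} (hf : ContDiff ℝ 1 f) (hg : ContDiff ℝ 1 g) (s : ℝ) {κ : ℝ}
    (hκ : 0 < κ) : ContDiff ℝ 1 (fun y => smax s κ (f y) (g y)) := by
  unfold smax
  refine ContDiff.div_const ((hf.add hg).add (contDiff_const.mul (ContDiff.sqrt ?_ fun x => ?_))) 2
  · exact ((hf.sub hg).pow 2).add contDiff_const
  · positivity

lemma locInt_of_continuous {f : Pl → ℝ} (hf : Continuous f) (Ω : Set Pl) :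
    LocallyIntegrableOn f Ω volume := hf.locallyIntegrable.locallyIntegrableOn Ω

lemma locInt_max {Ω : Set Pl} {u v : Pl → ℝ} (hu : LocallyIntegrableOn u Ω volume)
    (hv : LocallyIntegrableOn v Ω volume) :
    LocallyIntegrableOn (fun x => max (u x) (v x)) Ω volume := fun x hx => by
  obtain ⟨s, hs, hi⟩ := hu x hx
  obtain ⟨t, ht, hj⟩ := hv x hx
  exact ⟨s ∩ t, inter_mem hs ht, (hi.mono_set inter_subset_left).sup (hj.mono_set inter_subset_right)⟩

lemma locInt_min {Ω : Set Pl} {u v : Pl → ℝ} (hu : LocallyIntegrableOn u Ω volume)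
    (hv : LocallyIntegrableOn v Ω volume) :
    LocallyIntegrableOn (fun x => min (u x) (v x)) Ω volume := fun x hx => by
  obtain ⟨s, hs, hi⟩ := hu x hx
  obtain ⟨t, ht, hj⟩ := hv x hx
  exact ⟨s ∩ t, inter_mem hs ht, (hi.mono_set inter_subset_left).inf (hj.mono_set inter_subset_right)⟩

lemma max_eq_smax (a b : ℝ) : max a b = (a + b + 1 * |a - b|) / 2 := by
  rcases le_total a b with h | h
  · rw [max_eq_right h, abs_of_nonpos (by linarith)]; ring
  · rw [max_eq_left h, abs_of_nonneg (by linarith)]; ring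

lemma min_eq_smax (a b : ℝ) : min a b = (a + b + (-1) * |a - b|) / 2 := by
  rcases le_total a b with h | h
  · rw [min_eq_left h, abs_of_nonpos (by linarith)]; ring
  · rw [min_eq_right h, abs_of_nonneg (by linarith)]; ring

namespace BV

variable {Ω : Set Pl} {u v : Pl → ℝ} {ν μ : Measure Pl} {σ τ : Pl → Pl}

/-- The coupled integral estimate behind `|D max(u,v)| + |D min(u,v)| ≤ |Du| + |Dv|`. -/
lemma max_min_integral (hΩ : IsOpen Ω) (hu : BV Ω u ν σ) (hv : BV Ω v μ τ) {φ ψ : Pl → Pl}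
    (hφ : IsTest Ω φ) (hψ : IsTest Ω ψ) :
    (∫ x, max (u x) (v x) * dvg φ x) + ∫ x, min (u x) (v x) * dvg ψ x
      ≤ (∫ x, max ‖φ x‖ ‖ψ x‖ ∂ν) + ∫ x, max ‖φ x‖ ‖ψ x‖ ∂μ := by
  set F := tsupport φ ∪ tsupport ψ with hFdef
  have hF : IsCompact F := hφ.cpt.isCompact.union hψ.cpt.isCompact
  have hFΩ : F ⊆ Ω := union_subset hφ.supp hψ.supp
  obtain ⟨un, g, hun, hg, hg0, hug, hul, hgl⟩ := hu.approx hΩ hF hFΩ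
  obtain ⟨vn, k, hvn, hk, hk0, hvk, hvl, hkl⟩ := hv.approx hΩ hF hFΩ
  set κ : ℕ → ℝ := fun n => 1 / (n + 1) with hκ
  have hκ0 : ∀ n, 0 < κ n := fun n => by positivity
  have hκl : Tendsto κ atTop (𝓝 0) := tendsto_one_div_add_atTop_nhds_zero_nat
  have hconv : ∀ s : ℝ, |s| ≤ 1 → Tendsto (fun n => ∫⁻ x in F,
      ‖smax s (κ n) (un n x) (vn n x) - (u x + v x + s * |u x - v x|) / 2‖ₑ) atTop (𝓝 0) := by
    intro s hs
    have hz : Tendsto (fun n => ENNReal.ofReal (κ n) * volume F + (∫⁻ x in F, ‖un n x - u x‖ₑ)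
        + ∫⁻ x in F, ‖vn n x - v x‖ₑ) atTop (𝓝 0) := by
      have h1 : Tendsto (fun n => ENNReal.ofReal (κ n) * volume F) atTop (𝓝 0) := by
        have := ENNReal.Tendsto.mul_const (b := volume F)
          ((ENNReal.continuous_ofReal.tendsto 0).comp hκl) (Or.inr hF.measure_lt_top.ne)
        simpa using this
      simpa using (h1.add hul).add hvl
    refine tendsto_of_tendsto_of_tendsto_of_le_of_le tendsto_const_nhds hz (fun _ => zero_le)
      fun n => ?_
    have m1 : Measurable fun x => ‖un n x - u x‖ₑ := ((hun n).continuous.measurable.sub hu.measu).enorm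
    have m2 : Measurable fun x => ‖vn n x - v x‖ₑ := ((hvn n).continuous.measurable.sub hv.measu).enorm
    have m3 : Measurable fun x => ENNReal.ofReal (κ n) + ‖un n x - u x‖ₑ := measurable_const.add m1
    rw [← setLIntegral_const, ← lintegral_add_left measurable_const, ← lintegral_add_left m3]
    refine lintegral_mono fun x => ?_
    simp only [Real.enorm_eq_ofReal_abs]
    rw [← ENNReal.ofReal_add (hκ0 n).le (abs_nonneg _), ← ENNReal.ofReal_add
      (add_nonneg (hκ0 n).le (abs_nonneg _)) (abs_nonneg _)]
    exact ENNReal.ofReal_le_ofReal (abs_smax_sub_le hs (hκ0 n))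
  have hM := hconv 1 (by simp)
  have hm := hconv (-1) (by simp)
  simp_rw [← max_eq_smax] at hM
  simp_rw [← min_eq_smax] at hm
  have hMl := tendsto_integral_dvg_lint
    (fun n => locInt_of_continuous (smax_contDiff (hun n) (hvn n) 1 (hκ0 n)).continuous Ω)
    (locInt_max hu.loc hv.loc) hφ (tendsto_of_tendsto_of_tendsto_of_le_of_le tendsto_const_nhds hM
      (fun _ => zero_le) fun n => lintegral_mono_set subset_union_left)
  have hml := tendsto_integral_dvg_lint
    (fun n => locInt_of_continuous (smax_contDiff (hun n) (hvn n) (-1) (hκ0 n)).continuous Ω)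
    (locInt_min hu.loc hv.loc) hψ (tendsto_of_tendsto_of_tendsto_of_le_of_le tendsto_const_nhds hm
      (fun _ => zero_le) fun n => lintegral_mono_set subset_union_right)
  set w : Pl → ℝ := fun x => max ‖φ x‖ ‖ψ x‖ with hw
  have hwc : Continuous w := hφ.smooth.continuous.norm.max hψ.smooth.continuous.norm
  have hws : HasCompactSupport w := HasCompactSupport.intro hF fun x hx => by
    have h1 : φ x = 0 := image_eq_zero_of_notMem_tsupport fun h => hx (Or.inl h)
    have h2 : ψ x = 0 := image_eq_zero_of_notMem_tsupport fun h => hx (Or.inr h)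
    simp [w, h1, h2]
  refine le_of_tendsto_of_tendsto (hMl.add hml) ((hgl w hwc hws).add (hkl w hwc hws))
    (Eventually.of_forall fun n => ?_)
  dsimp only
  have cM := smax_contDiff (hun n) (hvn n) 1 (hκ0 n)
  have cm := smax_contDiff (hun n) (hvn n) (-1) (hκ0 n)
  rw [integral_mul_dvg_smooth cM hφ, integral_mul_dvg_smooth cm hψ, ← neg_add]
  have i1 : Integrable (fun x => fderiv ℝ (fun y => smax 1 (κ n) (un n y) (vn n y)) x (φ x)) :=
    Continuous.integrable_of_hasCompactSupport
      ((cM.continuous_fderiv one_ne_zero).clm_apply hφ.smooth.continuous)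
      (hφ.cpt.mono fun x hx h0 => hx (by simp [h0]))
  have i2 : Integrable (fun x => fderiv ℝ (fun y => smax (-1) (κ n) (un n y) (vn n y)) x (ψ x)) :=
    Continuous.integrable_of_hasCompactSupport
      ((cm.continuous_fderiv one_ne_zero).clm_apply hψ.smooth.continuous)
      (hψ.cpt.mono fun x hx h0 => hx (by simp [h0]))
  have i3 : Integrable (fun x => w x * g n x) :=
    Continuous.integrable_of_hasCompactSupport (hwc.mul (hg n)) hws.mul_right
  have i4 : Integrable (fun x => w x * k n x) :=
    Continuous.integrable_of_hasCompactSupport (hwc.mul (hk n)) hws.mul_right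
  rw [← integral_add i1 i2, ← integral_neg, ← integral_add i3 i4]
  refine integral_mono (i1.add i2).neg (i3.add i4) fun x => ?_
  dsimp only
  by_cases hx : x ∈ F
  swap
  · have h1 : φ x = 0 := image_eq_zero_of_notMem_tsupport fun h => hx (Or.inl h)
    have h2 : ψ x = 0 := image_eq_zero_of_notMem_tsupport fun h => hx (Or.inr h)
    simp [w, h1, h2]
  have hf := ((hun n).differentiable one_ne_zero x).hasFDerivAt
  have hf2 := ((hvn n).differentiable one_ne_zero x).hasFDerivAt
  rw [(smax_hasFDerivAt hf hf2 1 (hκ0 n)).fderiv, (smax_hasFDerivAt hf hf2 (-1) (hκ0 n)).fderiv]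
  set A := fderiv ℝ (un n) x
  set B := fderiv ℝ (vn n) x
  set q : ℝ := (un n x - vn n x) / √((un n x - vn n x) ^ 2 + κ n ^ 2) with hq
  have hq1 : |q| ≤ 1 := by
    rw [hq, abs_div, abs_of_nonneg (Real.sqrt_nonneg _)]
    have := hκ0 n
    refine div_le_one_of_le₀ ?_ (Real.sqrt_nonneg _)
    rw [← Real.sqrt_sq_eq_abs]; exact Real.sqrt_le_sqrt (by nlinarith)
  obtain ⟨hq2, hq3⟩ := abs_le.1 hq1
  set P := ((1 + q) / 2) • φ x + ((1 - q) / 2) • ψ x with hP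
  set Q := ((1 - q) / 2) • φ x + ((1 + q) / 2) • ψ x with hQ
  have conv : ∀ c d : ℝ, 0 ≤ c → 0 ≤ d → c + d = 1 → ‖c • φ x + d • ψ x‖ ≤ w x := by
    intro c d hc hd hcd
    calc ‖c • φ x + d • ψ x‖ ≤ c * ‖φ x‖ + d * ‖ψ x‖ := by
          refine (norm_add_le _ _).trans_eq ?_
          rw [norm_smul, norm_smul, Real.norm_of_nonneg hc, Real.norm_of_nonneg hd]
      _ ≤ c * w x + d * w x := by gcongr; exacts [le_max_left _ _, le_max_right _ _]
      _ = w x := by rw [← add_mul, hcd, one_mul]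
  have hPw : ‖P‖ ≤ w x := conv _ _ (by linarith) (by linarith) (by ring)
  have hQw : ‖Q‖ ≤ w x := conv _ _ (by linarith) (by linarith) (by ring)
  have hAP : |A P| ≤ w x * g n x := (A.le_opNorm P).trans (by
    rw [mul_comm]; exact mul_le_mul hPw (hug n x hx) (norm_nonneg _) ((norm_nonneg _).trans hPw))
  have hBQ : |B Q| ≤ w x * k n x := (B.le_opNorm Q).trans (by
    rw [mul_comm]; exact mul_le_mul hQw (hvk n x hx) (norm_nonneg _) ((norm_nonneg _).trans hQw))
  have e : -((((1 / 2 : ℝ) • (A + B + (1:ℝ) • (q • (A - B)))) (φ x))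
      + ((1 / 2 : ℝ) • (A + B + (-1 : ℝ) • (q • (A - B)))) (ψ x)) = -(A P) - B Q := by
    simp only [hP, hQ, map_add, map_smul, smul_apply, add_apply,
      sub_apply, smul_eq_mul]
    ring
  rw [e]
  linarith [neg_le_of_abs_le hAP, neg_le_of_abs_le hBQ]

lemma exists_max (hΩ : IsOpen Ω) (hu : BV Ω u ν σ) (hv : BV Ω v μ τ) :
    ∃ ν' σ', BV Ω (fun x => max (u x) (v x)) ν' σ' := by
  have := hu.fin
  have := hv.fin
  have key : ∀ φ, IsTest Ω φ → ∫ x, max (u x) (v x) * dvg φ x ≤ ∫ x, ‖φ x‖ ∂(ν + μ) := by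
    intro φ hφ
    have h := max_min_integral hΩ hu hv hφ (IsTest.zero Ω)
    rw [integral_add_measure (hu.integrable_norm hφ) (hv.integrable_norm hφ)]
    simpa [dvg] using h
  refine BV.of_dominated (M := ν + μ) (hu.measu.max hv.measu) (locInt_max hu.loc hv.loc)
    (by simp [hu.conc, hv.conc]) fun φ hφ => abs_le.2 ⟨?_, key φ hφ⟩
  have h := key _ hφ.neg
  simp only [dvg_neg hφ.smooth, mul_neg, integral_neg, Pi.neg_apply, norm_neg] at h
  linarith

lemma exists_min (hΩ : IsOpen Ω) (hu : BV Ω u ν σ) (hv : BV Ω v μ τ) :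
    ∃ ν' σ', BV Ω (fun x => min (u x) (v x)) ν' σ' := by
  obtain ⟨ν', σ', h⟩ := hu.neg.exists_max hΩ hv.neg
  refine ⟨ν', fun x => -σ' x, ?_⟩
  have := h.neg
  simpa only [max_neg_neg, neg_neg] using this

end BV

/-- Submodularity of the variation. -/
lemma V_max_add_V_min {Ω U : Set Pl} {u v : Pl → ℝ} {ν μ : Measure Pl} {σ τ : Pl → Pl}
    (hΩ : IsOpen Ω) (hu : BV Ω u ν σ) (hv : BV Ω v μ τ) (hU : IsOpen U) (hUΩ : U ⊆ Ω) :
    V (fun x => max (u x) (v x)) U + V (fun x => min (u x) (v x)) U ≤ V u U + V v U := by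
  obtain ⟨ν₁, σ₁, h₁⟩ := hu.exists_max hΩ hv
  obtain ⟨ν₂, σ₂, h₂⟩ := hu.exists_min hΩ hv
  have := hu.fin; have := hv.fin; have := h₁.fin; have := h₂.fin
  rw [h₁.V_eq hU hUΩ, h₂.V_eq hU hUΩ, hu.V_eq hU hUΩ, hv.V_eq hU hUΩ]
  rw [← ENNReal.toReal_le_toReal (by finiteness) (by finiteness), ENNReal.toReal_add (by finiteness)
    (by finiteness), ENNReal.toReal_add (by finiteness) (by finiteness)]
  have hb : ∀ κ : ℝ, 0 < κ → (ν₁ U).toReal + (ν₂ U).toReal ≤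
      (1 + κ) * ((ν U).toReal + (μ U).toReal) + (6 + ν₁.real univ + ν₂.real univ) * κ := by
    intro κ hκ
    obtain ⟨φ, hφ, hφ1, h3⟩ := h₁.exists_test hU hUΩ hκ
    obtain ⟨ψ, hψ, hψ1, h4⟩ := h₂.exists_test hU hUΩ hκ
    have h5 := BV.max_min_integral hΩ hu hv (hφ.mono hUΩ) (hψ.mono hUΩ)
    have bound : ∀ (m : Measure Pl) [IsFiniteMeasure m],
        ∫ x, max ‖φ x‖ ‖ψ x‖ ∂m ≤ (m U).toReal := by
      intro m _
      rw [← setIntegral_eq_integral_of_forall_compl_eq_zero (s := U) (fun x hx => by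
        have h1 : φ x = 0 := image_eq_zero_of_notMem_tsupport fun hx' => hx (hφ.supp hx')
        have h2 : ψ x = 0 := image_eq_zero_of_notMem_tsupport fun hx' => hx (hψ.supp hx')
        simp [h1, h2])]
      calc ∫ x in U, max ‖φ x‖ ‖ψ x‖ ∂m ≤ ∫ x in U, (1:ℝ) ∂m := by
            refine integral_mono_of_nonneg (ae_of_all _ fun x => by positivity) (integrable_const _)
              (ae_of_all _ fun x => max_le (hφ1 x) (hψ1 x))
        _ = (m U).toReal := by simp [Measure.real]
    have h6 := bound ν
    have h7 := bound μ
    have h8 : (1 + κ) * ((∫ x, max (u x) (v x) * dvg φ x) + ∫ x, min (u x) (v x) * dvg ψ x)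
        ≤ (1 + κ) * ((ν U).toReal + (μ U).toReal) :=
      mul_le_mul_of_nonneg_left (by linarith) (by positivity)
    linarith
  set C := ((ν U).toReal + (μ U).toReal) + (6 + ν₁.real univ + ν₂.real univ) with hC
  have hC0 : 0 < C := by positivity
  refine le_of_forall_pos_le_add fun ε hε => ?_
  have h9 := hb (ε / C) (by positivity)
  have h10 : ε / C * C = ε := by field_simp
  calc _ ≤ _ := h9
    _ = (ν U).toReal + (μ U).toReal + ε / C * C := by rw [hC]; ring
    _ = _ := by rw [h10]

/-! ### Poincaré inequality -/

lemma vol_ball (x : Pl) {r : ℝ} (hr : 0 ≤ r) : volume (ball x r) = ENNReal.ofReal (Real.pi * r ^ 2) := by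
  rw [EuclideanSpace.volume_ball_fin_two, mul_comm, ENNReal.ofReal_mul Real.pi_pos.le,
    ENNReal.ofReal_pow hr]

lemma vol_closedBall (x : Pl) {r : ℝ} (hr : 0 ≤ r) :
    volume (closedBall x r) = ENNReal.ofReal (Real.pi * r ^ 2) := by
  rw [Measure.addHaar_closedBall_eq_addHaar_ball, vol_ball x hr]

lemma vol_ball_pos (x : Pl) {r : ℝ} (hr : 0 < r) : 0 < volume (ball x r) :=
  measure_ball_pos _ _ hr

lemma vol_ball_ne_top (x : Pl) (r : ℝ) : volume (ball x r) ≠ ⊤ := measure_ball_lt_top.ne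

lemma lintegral_affine {H : Pl → ℝ≥0∞} (hH : Measurable H) (c : Pl) {t : ℝ} (ht : 0 < t) :
    ∫⁻ y, H (c + t • y) = ENNReal.ofReal ((t ^ 2)⁻¹) * ∫⁻ y, H y := by
  have h1 : ∫⁻ y, H (c + t • y) = ∫⁻ z, H (c + z) ∂(Measure.map (t • ·) (volume : Measure Pl)) :=
    (lintegral_map (hH.comp (measurable_const_add c)) (measurable_const_smul t)).symm
  rw [h1, Measure.map_addHaar_smul _ ht.ne', lintegral_smul_measure, lintegral_add_left_eq_self]
  simp [abs_of_pos ht]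

lemma lintegral_ball_affine_le {x z : Pl} {r t : ℝ} (hz : z ∈ ball x r) {G : Pl → ℝ≥0∞}
    (hG : Measurable G) (ht : 1 / 2 ≤ t) (ht1 : t ≤ 1) :
    ∫⁻ y in ball x r, G ((1 - t) • z + t • y) ≤ 4 * ∫⁻ y in ball x r, G y := by
  calc ∫⁻ y in ball x r, G ((1 - t) • z + t • y)
      ≤ ∫⁻ y in ball x r, (ball x r).indicator G ((1 - t) • z + t • y) := by
        refine setLIntegral_mono' measurableSet_ball fun y hy => ?_
        rw [indicator_of_mem]
        exact convex_ball x r hz hy (by linarith) (by linarith) (by ring)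
    _ ≤ ∫⁻ y, (ball x r).indicator G ((1 - t) • z + t • y) := setLIntegral_le_lintegral _ _
    _ = ENNReal.ofReal ((t ^ 2)⁻¹) * ∫⁻ y in ball x r, G y := by
        rw [lintegral_affine (hG.indicator measurableSet_ball) _ (by linarith),
          lintegral_indicator measurableSet_ball]
    _ ≤ 4 * ∫⁻ y in ball x r, G y := by
        gcongr
        rw [show (4 : ℝ≥0∞) = ENNReal.ofReal 4 by simp]
        refine ENNReal.ofReal_le_ofReal (inv_le_of_inv_le₀ (by norm_num) ?_)
        nlinarith

lemma double_lintegral_le {x : Pl} {r t : ℝ} {G : Pl → ℝ≥0∞} (hG : Measurable G) (h0 : 0 ≤ t)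
    (h1 : t ≤ 1) :
    ∫⁻ y in ball x r, ∫⁻ z in ball x r, G (z + t • (y - z))
      ≤ 4 * volume (ball x r) * ∫⁻ y in ball x r, G y := by
  have key : ∀ s : ℝ, 1 / 2 ≤ s → s ≤ 1 →
      ∫⁻ z in ball x r, ∫⁻ y in ball x r, G ((1 - s) • z + s • y)
        ≤ 4 * volume (ball x r) * ∫⁻ y in ball x r, G y := by
    intro s hs hs1
    calc _ ≤ ∫⁻ z in ball x r, 4 * ∫⁻ y in ball x r, G y :=
          setLIntegral_mono' measurableSet_ball fun z hz => lintegral_ball_affine_le hz hG hs hs1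
      _ = _ := by rw [setLIntegral_const]; ring
  have e : ∀ y z : Pl, z + t • (y - z) = (1 - t) • z + t • y := fun y z => by module
  simp_rw [e]
  rcases le_total (1 / 2) t with h | h
  · rw [lintegral_lintegral_swap]
    · exact key t h h1
    · exact (hG.comp (by fun_prop)).aemeasurable
  · have := key (1 - t) (by linarith) (by linarith)
    simp only [sub_sub_cancel] at this
    simpa only [add_comm] using this

lemma enorm_sub_le_segment {f g : Pl → ℝ} {x y z : Pl} {r : ℝ} (hf : ContDiff ℝ 1 f)
    (hfg : ∀ w ∈ closedBall x r, ‖fderiv ℝ f w‖ ≤ g w) (hy : y ∈ ball x r) (hz : z ∈ ball x r) :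
    ‖f y - f z‖ₑ ≤ ∫⁻ t in Icc (0:ℝ) 1, ENNReal.ofReal (2 * r) * ENNReal.ofReal (g (z + t • (y - z))) := by
  have hd : ∀ t ∈ uIcc (0:ℝ) 1, HasDerivAt (fun t : ℝ => f (z + t • (y - z)))
      (fderiv ℝ f (z + t • (y - z)) (y - z)) t := by
    intro t _
    have h1 : HasDerivAt (fun t : ℝ => z + t • (y - z)) (y - z) t := by
      simpa using ((hasDerivAt_id t).smul_const (y - z)).const_add z
    exact ((hf.differentiable one_ne_zero _).hasFDerivAt).comp_hasDerivAt t h1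
  have hc : Continuous fun t : ℝ => fderiv ℝ f (z + t • (y - z)) (y - z) :=
    ((hf.continuous_fderiv one_ne_zero).comp (by fun_prop)).clm_apply continuous_const
  have h2 := intervalIntegral.integral_eq_sub_of_hasDerivAt hd (hc.intervalIntegrable 0 1)
  simp only [one_smul, zero_smul, add_zero, add_sub_cancel] at h2
  rw [← h2, intervalIntegral.integral_of_le zero_le_one, ← integral_Icc_eq_integral_Ioc]
  refine (enorm_integral_le_lintegral_enorm _).trans (setLIntegral_mono' measurableSet_Icc fun t ht => ?_)
  have hr : 0 < r := pos_of_mem_ball hy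
  have hmem : z + t • (y - z) ∈ closedBall x r := by
    rw [show z + t • (y - z) = (1 - t) • z + t • y by module]
    exact ball_subset_closedBall
      (convex_ball x r hz hy (by linarith [ht.2]) ht.1 (by ring))
  have hyz : ‖y - z‖ ≤ 2 * r := by
    rw [← dist_eq_norm]
    have := dist_triangle_right y z x
    rw [mem_ball] at hy hz; linarith
  rw [← ENNReal.ofReal_mul (by linarith), ← ofReal_norm]
  refine ENNReal.ofReal_le_ofReal (((fderiv ℝ f _).le_opNorm _).trans ?_)
  rw [mul_comm]
  exact mul_le_mul hyz (hfg _ hmem) (norm_nonneg _) (by linarith)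

lemma poincare_smooth {f g : Pl → ℝ} {x : Pl} {r : ℝ} (hf : ContDiff ℝ 1 f) (hg : Continuous g)
    (hfg : ∀ w ∈ closedBall x r, ‖fderiv ℝ f w‖ ≤ g w) :
    ∫⁻ y in ball x r, ∫⁻ z in ball x r, ‖f y - f z‖ₑ
      ≤ ENNReal.ofReal (8 * r) * volume (ball x r) * ∫⁻ y in ball x r, ENNReal.ofReal (g y) := by
  have hG : Measurable fun w => ENNReal.ofReal (g w) := hg.measurable.ennreal_ofReal
  have hm3 : Measurable fun p : (Pl × Pl) × ℝ =>
      ENNReal.ofReal (2 * r) * ENNReal.ofReal (g (p.1.2 + p.2 • (p.1.1 - p.1.2))) :=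
    (hG.comp (by fun_prop)).const_mul _
  calc ∫⁻ y in ball x r, ∫⁻ z in ball x r, ‖f y - f z‖ₑ
      ≤ ∫⁻ y in ball x r, ∫⁻ z in ball x r, ∫⁻ t in Icc (0:ℝ) 1,
          ENNReal.ofReal (2 * r) * ENNReal.ofReal (g (z + t • (y - z))) :=
        setLIntegral_mono' measurableSet_ball fun y hy =>
          setLIntegral_mono' measurableSet_ball fun z hz => enorm_sub_le_segment hf hfg hy hz
    _ = ∫⁻ y in ball x r, ∫⁻ t in Icc (0:ℝ) 1, ∫⁻ z in ball x r,
          ENNReal.ofReal (2 * r) * ENNReal.ofReal (g (z + t • (y - z))) := by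
        refine lintegral_congr fun y => lintegral_lintegral_swap (Measurable.aemeasurable ?_)
        exact hm3.comp (f := fun q : Pl × ℝ => ((y, q.1), q.2)) (by fun_prop)
    _ = ∫⁻ t in Icc (0:ℝ) 1, ∫⁻ y in ball x r, ∫⁻ z in ball x r,
          ENNReal.ofReal (2 * r) * ENNReal.ofReal (g (z + t • (y - z))) := by
        refine lintegral_lintegral_swap (Measurable.aemeasurable ?_)
        refine Measurable.lintegral_prod_right' (f := fun q : (Pl × ℝ) × Pl =>
          ENNReal.ofReal (2 * r) * ENNReal.ofReal (g (q.2 + q.1.2 • (q.1.1 - q.2)))) ?_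
        exact hm3.comp (f := fun q : (Pl × ℝ) × Pl => ((q.1.1, q.2), q.1.2)) (by fun_prop)
    _ ≤ ∫⁻ t in Icc (0:ℝ) 1, ENNReal.ofReal (2 * r) *
          (4 * volume (ball x r) * ∫⁻ y in ball x r, ENNReal.ofReal (g y)) := by
        refine setLIntegral_mono' measurableSet_Icc fun t ht => ?_
        have e : ∀ y, ∫⁻ z in ball x r, ENNReal.ofReal (2 * r) * ENNReal.ofReal (g (z + t • (y - z)))
            = ENNReal.ofReal (2 * r) * ∫⁻ z in ball x r, ENNReal.ofReal (g (z + t • (y - z))) :=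
          fun y => lintegral_const_mul' _ _ ENNReal.ofReal_ne_top
        simp_rw [e]
        rw [lintegral_const_mul' _ _ ENNReal.ofReal_ne_top]
        gcongr
        exact double_lintegral_le hG ht.1 ht.2
    _ = _ := by
        rw [setLIntegral_const]
        simp only [Real.volume_Icc, sub_zero, ENNReal.ofReal_one, mul_one]
        rw [show (8 * r) = 4 * (2 * r) by ring, ENNReal.ofReal_mul (p := 4) (by norm_num)]
        simp only [ENNReal.ofReal_ofNat]
        ring

/-- Poincaré inequality in the form of a double integral, obtained from smooth approximations. -/
lemma BV.poincare {Ω : Set Pl} {u : Pl → ℝ} {ν : Measure Pl} {σ : Pl → Pl} (hΩ : IsOpen Ω)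
    (h : BV Ω u ν σ) {x : Pl} {r : ℝ} (hr : closedBall x r ⊆ Ω) :
    ∫⁻ y in ball x r, ∫⁻ z in ball x r, ‖u y - u z‖ₑ
      ≤ ENNReal.ofReal (8 * r) * volume (ball x r) * ν (closedBall x r) := by
  have := h.fin
  have hcpt : IsCompact (closedBall x r) := isCompact_closedBall x r
  obtain ⟨un, g, hun, hg, hg0, hug, hul, hgl⟩ := h.approx hΩ hcpt hr
  have hopen : ∀ U, IsOpen U → closedBall x r ⊆ U → ∫⁻ y in ball x r, ∫⁻ z in ball x r, ‖u y - u z‖ₑ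
      ≤ ENNReal.ofReal (8 * r) * volume (ball x r) * ν U := by
    intro U hU hxU
    obtain ⟨χ, hχc, hχs, hχU, hχ1, hχI⟩ := exists_cutoff hcpt hU hxU
    have hlim : Tendsto (fun n => ENNReal.ofReal (8 * r) * volume (ball x r) *
        ENNReal.ofReal (∫ y, χ y * g n y) + 2 * (volume (ball x r) *
          ∫⁻ y in closedBall x r, ‖un n y - u y‖ₑ)) atTop
        (𝓝 (ENNReal.ofReal (8 * r) * volume (ball x r) * ENNReal.ofReal (∫ y, χ y ∂ν) +
          2 * (volume (ball x r) * 0))) := by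
      have hv := vol_ball_ne_top x r
      refine Tendsto.add (ENNReal.Tendsto.const_mul ?_ (Or.inr (by finiteness)))
        (ENNReal.Tendsto.const_mul (ENNReal.Tendsto.const_mul hul (Or.inr hv)) (Or.inr (by simp)))
      exact (ENNReal.continuous_ofReal.tendsto _).comp (hgl χ hχc hχs)
    have hν : ENNReal.ofReal (∫ y, χ y ∂ν) ≤ ν U := by
      rw [ofReal_integral_eq_lintegral_ofReal
        (hχc.integrable_of_hasCompactSupport hχs) (ae_of_all _ fun y => (hχI y).1)]
      rw [← lintegral_indicator_one hU.measurableSet]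
      refine lintegral_mono fun y => ?_
      by_cases hy : y ∈ U
      · simpa [hy] using (hχI y).2
      · have : χ y = 0 := image_eq_zero_of_notMem_tsupport fun h => hy (hχU h)
        simp [hy, this]
    refine (ge_of_tendsto' hlim fun n => ?_).trans (by
      simp only [mul_zero, add_zero]; gcongr)
    have mu : Measurable fun y => ‖un n y - u y‖ₑ := ((hun n).continuous.measurable.sub h.measu).enorm
    calc ∫⁻ y in ball x r, ∫⁻ z in ball x r, ‖u y - u z‖ₑ
        ≤ ∫⁻ y in ball x r, ∫⁻ z in ball x r, (‖un n y - un n z‖ₑ + (‖un n y - u y‖ₑ + ‖un n z - u z‖ₑ)) := by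
          refine lintegral_mono fun y => lintegral_mono fun z => ?_
          rw [show u y - u z = (un n y - un n z) + (-(un n y - u y) + (un n z - u z)) by ring]
          refine (enorm_add_le _ _).trans ?_
          gcongr
          refine (enorm_add_le _ _).trans ?_
          rw [enorm_neg]
      _ = (∫⁻ y in ball x r, ∫⁻ z in ball x r, ‖un n y - un n z‖ₑ) +
          2 * (volume (ball x r) * ∫⁻ y in ball x r, ‖un n y - u y‖ₑ) := by
          have mun : Measurable (un n) := (hun n).continuous.measurable
          have e : ∀ y, ∫⁻ z in ball x r, (‖un n y - un n z‖ₑ + (‖un n y - u y‖ₑ + ‖un n z - u z‖ₑ))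
              = (∫⁻ z in ball x r, ‖un n y - un n z‖ₑ) + (‖un n y - u y‖ₑ * volume (ball x r)
                + ∫⁻ z in ball x r, ‖un n z - u z‖ₑ) := fun y => by
            rw [lintegral_add_left (mun.const_sub _).enorm, lintegral_add_left measurable_const,
              setLIntegral_const]
          simp_rw [e]
          have m1 : Measurable fun y => ∫⁻ z in ball x r, ‖un n y - un n z‖ₑ := by
            refine Measurable.lintegral_prod_right' (f := fun q : Pl × Pl => ‖un n q.1 - un n q.2‖ₑ) ?_
            exact ((mun.comp measurable_fst).sub (mun.comp measurable_snd)).enorm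
          rw [lintegral_add_left m1, lintegral_add_left (mu.mul_const _), setLIntegral_const,
            lintegral_mul_const _ mu]
          ring
      _ ≤ _ := by
          gcongr
          · refine (poincare_smooth (hun n) (hg n) (hug n)).trans ?_
            gcongr
            have hi : Integrable fun y => χ y * g n y :=
              (hχc.mul (hg n)).integrable_of_hasCompactSupport hχs.mul_right
            rw [ofReal_integral_eq_lintegral_ofReal hi
              (ae_of_all _ fun y => mul_nonneg (hχI y).1 (hg0 n y)),
              ← lintegral_indicator measurableSet_ball]
            refine lintegral_mono fun y => ?_
            by_cases hy : y ∈ ball x r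
            · simp [hy, hχ1 y (ball_subset_closedBall hy)]
            · simp [hy]
          · exact ball_subset_closedBall
  have hv := vol_ball_ne_top x r
  have hl : Tendsto (fun n : ℕ => ENNReal.ofReal (8 * r) * volume (ball x r) *
      (ν (closedBall x r) + (n : ℝ≥0∞)⁻¹)) atTop
      (𝓝 (ENNReal.ofReal (8 * r) * volume (ball x r) * (ν (closedBall x r) + 0))) :=
    ENNReal.Tendsto.const_mul (tendsto_const_nhds.add ENNReal.tendsto_inv_nat_nhds_zero)
      (Or.inr (by finiteness))
  rw [add_zero] at hl
  refine ge_of_tendsto' hl fun n => ?_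
  obtain ⟨U, hxU, hU, hlt⟩ := (closedBall x r).exists_isOpen_lt_add (μ := ν) (by finiteness)
    (ε := (n : ℝ≥0∞)⁻¹) (by simp)
  exact (hopen U hU hxU).trans (by gcongr)

namespace BV

variable {Ω : Set Pl} {u : Pl → ℝ} {ν : Measure Pl} {σ : Pl → Pl}

/-- Two portions of a ball between which `u` jumps by at least `c` force variation in the ball. -/
lemma jump_le (hΩ : IsOpen Ω) (h : BV Ω u ν σ) {x : Pl} {r : ℝ} (hr : closedBall x r ⊆ Ω)
    {A S : Set Pl} (hA : MeasurableSet A) (hS : MeasurableSet S) {c : ℝ≥0∞}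
    (hc : ∀ y ∈ A, ∀ z ∈ S, c ≤ ‖u y - u z‖ₑ) :
    c * volume (A ∩ ball x r) * volume (S ∩ ball x r)
      ≤ ENNReal.ofReal (8 * r) * volume (ball x r) * ν (closedBall x r) := by
  refine le_trans ?_ (h.poincare hΩ hr)
  calc c * volume (A ∩ ball x r) * volume (S ∩ ball x r)
      = ∫⁻ y in A ∩ ball x r, ∫⁻ z in S ∩ ball x r, c := by
        rw [setLIntegral_const, setLIntegral_const]; ring
    _ ≤ ∫⁻ y in A ∩ ball x r, ∫⁻ z in S ∩ ball x r, ‖u y - u z‖ₑ :=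
        setLIntegral_mono' (hA.inter measurableSet_ball) fun y hy =>
          setLIntegral_mono' (hS.inter measurableSet_ball) fun z hz => hc y hy.1 z hz.1
    _ ≤ ∫⁻ y in A ∩ ball x r, ∫⁻ z in ball x r, ‖u y - u z‖ₑ :=
        lintegral_mono fun y => lintegral_mono_set inter_subset_right
    _ ≤ _ := lintegral_mono_set inter_subset_right

/-- Poincaré inequality for functions vanishing on a portion of the ball. -/
lemma poincare_zero (hΩ : IsOpen Ω) (h : BV Ω u ν σ) {x : Pl} {r : ℝ} (hr : closedBall x r ⊆ Ω) :
    volume ({z | u z = 0} ∩ ball x r) * ∫⁻ y in ball x r, ‖u y‖ₑ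
      ≤ ENNReal.ofReal (8 * r) * volume (ball x r) * ν (closedBall x r) := by
  refine le_trans ?_ (h.poincare hΩ hr)
  have hS : MeasurableSet {z | u z = 0} := h.measu (measurableSet_singleton 0)
  rw [← lintegral_const_mul _ h.measu.enorm]
  refine lintegral_mono fun y => ?_
  calc volume ({z | u z = 0} ∩ ball x r) * ‖u y‖ₑ = ∫⁻ z in {z | u z = 0} ∩ ball x r, ‖u y‖ₑ := by
        rw [setLIntegral_const, mul_comm]
    _ = ∫⁻ z in {z | u z = 0} ∩ ball x r, ‖u y - u z‖ₑ :=
        setLIntegral_congr_fun (hS.inter measurableSet_ball) fun z hz => by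
          have : u z = 0 := hz.1
          simp [this]
    _ ≤ _ := lintegral_mono_set inter_subset_right

/-- Poincaré inequality for a function vanishing on at least half of the ball. -/
lemma poincare_half (hΩ : IsOpen Ω) (h : BV Ω u ν σ) {x : Pl} {r : ℝ} (hr0 : 0 < r)
    (hr : closedBall x r ⊆ Ω) (hd : volume ({z | u z ≠ 0} ∩ ball x r) ≤ volume (ball x r) / 2) :
    ∫⁻ y in ball x r, ‖u y‖ₑ ≤ ENNReal.ofReal (16 * r) * ν (closedBall x r) := by
  have hS : MeasurableSet {z | u z = 0} := h.measu (measurableSet_singleton 0)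
  have hv := vol_ball_ne_top x r
  have hv0 := (vol_ball_pos x hr0).ne'
  have h2 : volume (ball x r) / 2 ≤ volume ({z | u z = 0} ∩ ball x r) := by
    have e := measure_inter_add_sdiff (μ := volume) (ball x r) hS
    have e2 : ball x r \ {z | u z = 0} = {z | u z ≠ 0} ∩ ball x r := by ext; simp [and_comm]
    rw [e2, inter_comm] at e
    have h3 : volume (ball x r) ≤ volume ({z | u z = 0} ∩ ball x r) + volume (ball x r) / 2 :=
      e.symm.le.trans (by gcongr)
    have h4 : volume (ball x r) / 2 + volume (ball x r) / 2
        ≤ volume ({z | u z = 0} ∩ ball x r) + volume (ball x r) / 2 := by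
      rwa [ENNReal.add_halves]
    exact (ENNReal.add_le_add_iff_right (ENNReal.div_ne_top hv (by simp))).1 h4
  have h5 := h.poincare_zero hΩ hr
  have h6 : volume (ball x r) / 2 * ∫⁻ y in ball x r, ‖u y‖ₑ
      ≤ volume (ball x r) / 2 * (ENNReal.ofReal (16 * r) * ν (closedBall x r)) := by
    calc _ ≤ volume ({z | u z = 0} ∩ ball x r) * ∫⁻ y in ball x r, ‖u y‖ₑ := by gcongr
      _ ≤ _ := h5
      _ = _ := by
        rw [show 16 * r = 2 * (8 * r) by ring, ENNReal.ofReal_mul (p := 2) (by norm_num),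
          ENNReal.ofReal_ofNat, ENNReal.div_eq_inv_mul]
        calc _ = (2⁻¹ * 2 : ℝ≥0∞) * (ENNReal.ofReal (8 * r) * volume (ball x r) * ν (closedBall x r)) := by
              rw [ENNReal.inv_mul_cancel (by simp) (by simp), one_mul]
          _ = _ := by ring
  exact (ENNReal.mul_le_mul_iff_right (ENNReal.div_pos hv0 (by simp)).ne' (by finiteness)).1 h6

/-- If `u` is nonzero only on a small portion of `ball x R`, averaging the Poincaré inequality over
balls of radius `θR` gains the small factor `θ`. -/
lemma small_support (hΩ : IsOpen Ω) (h : BV Ω u ν σ) {x : Pl} {R θ : ℝ} (hR0 : 0 < R)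
    (hR : closedBall x R ⊆ Ω) (hθ : 0 < θ) (hθ1 : θ ≤ 1 / 4)
    (hd : volume ({z | u z ≠ 0} ∩ ball x R) ≤ ENNReal.ofReal (θ ^ 2 / 2) * volume (ball x R)) :
    ∫⁻ y in ball x (R / 4), ‖u y‖ₑ ≤ ENNReal.ofReal (16 * θ * R) * ν (closedBall x R) := by
  have := h.fin
  set s := θ * R with hs
  have hs0 : 0 < s := by positivity
  have hs4 : s ≤ R / 4 := by nlinarith
  have mu := h.measu.enorm
  have hloc : ∀ y ∈ ball x (R / 2), ∫⁻ z in ball y s, ‖u z‖ₑ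
      ≤ ENNReal.ofReal (16 * s) * ν (closedBall y s) := by
    intro y hy
    rw [mem_ball] at hy
    refine h.poincare_half hΩ hs0 ((closedBall_subset_closedBall' (by linarith)).trans hR) ?_
    calc volume ({z | u z ≠ 0} ∩ ball y s) ≤ volume ({z | u z ≠ 0} ∩ ball x R) := by
          gcongr; exact ball_subset_ball' (by linarith)
      _ ≤ _ := hd
      _ = volume (ball y s) / 2 := by
          rw [vol_ball x hR0.le, vol_ball y hs0.le, ← ENNReal.ofReal_mul (by positivity),
            ← ENNReal.ofReal_ofNat 2, ← ENNReal.ofReal_div_of_pos (by norm_num)]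
          congr 1; rw [hs]; ring
  -- Tonelli for the kernel `1_{dist y z < s}`
  have T1 : volume (ball x s) * ∫⁻ z in ball x (R / 4), ‖u z‖ₑ
      ≤ ∫⁻ y in ball x (R / 2), ∫⁻ z in ball y s, ‖u z‖ₑ := by
    have hk : MeasurableSet {p : Pl × Pl | dist p.2 p.1 < s} :=
      measurableSet_lt (by fun_prop) measurable_const
    have e1 : ∀ y, ∫⁻ z in ball y s, ‖u z‖ₑ
        = ∫⁻ z, {p : Pl × Pl | dist p.2 p.1 < s}.indicator (fun p => ‖u p.2‖ₑ) (y, z) := fun y => by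
      rw [← lintegral_indicator measurableSet_ball]; rfl
    simp_rw [e1]
    rw [lintegral_lintegral_swap (f := fun y z => {p : Pl × Pl | dist p.2 p.1 < s}.indicator
        (fun p => ‖u p.2‖ₑ) (y, z)) (((mu.comp measurable_snd).indicator hk).aemeasurable),
      ← lintegral_const_mul _ mu, ← lintegral_indicator measurableSet_ball]
    refine lintegral_mono fun z => ?_
    by_cases hz : z ∈ ball x (R / 4)
    swap
    · simp [hz]
    rw [indicator_of_mem hz]
    have hzs : ball z s ⊆ ball x (R / 2) := ball_subset_ball' (by
      rw [mem_ball] at hz; linarith)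
    calc volume (ball x s) * ‖u z‖ₑ = ∫⁻ y in ball z s, ‖u z‖ₑ := by
          rw [setLIntegral_const, vol_ball x hs0.le, vol_ball z hs0.le, mul_comm]
      _ = ∫⁻ y in ball z s, {p : Pl × Pl | dist p.2 p.1 < s}.indicator (fun p => ‖u p.2‖ₑ) (y, z) :=
          setLIntegral_congr_fun measurableSet_ball fun y hy => by
            have hy' : dist z y < s := by rwa [mem_ball, dist_comm] at hy
            simp [hy']
      _ ≤ _ := lintegral_mono_set hzs
  have T2 : ∫⁻ y in ball x (R / 2), ν (closedBall y s) ≤ volume (ball x s) * ν (closedBall x R) := by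
    have hk : MeasurableSet {p : Pl × Pl | dist p.2 p.1 ≤ s} :=
      measurableSet_le (by fun_prop) measurable_const
    have e1 : ∀ y, ν (closedBall y s)
        = ∫⁻ z, {p : Pl × Pl | dist p.2 p.1 ≤ s}.indicator (fun p => (1:ℝ≥0∞)) (y, z) ∂ν := fun y => by
      rw [← lintegral_indicator_one measurableSet_closedBall]; rfl
    simp_rw [e1]
    rw [lintegral_lintegral_swap (f := fun y z => {p : Pl × Pl | dist p.2 p.1 ≤ s}.indicator
        (fun p => (1:ℝ≥0∞)) (y, z)) ((measurable_const.indicator hk).aemeasurable),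
      ← setLIntegral_const, ← lintegral_indicator measurableSet_closedBall]
    refine lintegral_mono fun z => ?_
    by_cases hz : z ∈ closedBall x R
    · rw [indicator_of_mem hz]
      calc _ ≤ ∫⁻ y, {p : Pl × Pl | dist p.2 p.1 ≤ s}.indicator (fun p => (1:ℝ≥0∞)) (y, z) :=
            setLIntegral_le_lintegral _ _
        _ = ∫⁻ y, (closedBall z s).indicator 1 y := lintegral_congr fun y => by
            simp [indicator, dist_comm]
        _ = volume (ball x s) := by
            rw [lintegral_indicator_one measurableSet_closedBall, vol_closedBall z hs0.le,
              vol_ball x hs0.le]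
    · refine le_of_eq_of_le ?_ zero_le
      refine setLIntegral_eq_zero measurableSet_ball fun y hy => ?_
      have : ¬ dist z y ≤ s := fun hzy => hz (by
        rw [mem_ball] at hy; rw [mem_closedBall]
        linarith [dist_triangle z y x])
      simp [this]
  have h1 : volume (ball x s) * ∫⁻ z in ball x (R / 4), ‖u z‖ₑ
      ≤ volume (ball x s) * (ENNReal.ofReal (16 * s) * ν (closedBall x R)) := by
    calc _ ≤ _ := T1
      _ ≤ ∫⁻ y in ball x (R / 2), ENNReal.ofReal (16 * s) * ν (closedBall y s) :=
        setLIntegral_mono' measurableSet_ball hloc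
      _ = ENNReal.ofReal (16 * s) * ∫⁻ y in ball x (R / 2), ν (closedBall y s) :=
        lintegral_const_mul' _ _ (by finiteness)
      _ ≤ ENNReal.ofReal (16 * s) * (volume (ball x s) * ν (closedBall x R)) := by gcongr
      _ = _ := by ring
  have h2 := (ENNReal.mul_le_mul_iff_right (vol_ball_pos x hs0).ne' (vol_ball_ne_top x s)).1 h1
  rwa [hs, ← mul_assoc] at h2

end BV

/-! ### The variation does not charge points of small density of the support -/

/-- A fixed smooth bump: `1` on the unit ball, supported in the ball of radius `3/2`. -/
def bump0 : ContDiffBump (0 : Pl) := ⟨1, 3 / 2, one_pos, by norm_num⟩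

lemma exists_bump0_bound : ∃ C : ℝ, 0 < C ∧ ∀ x, ‖fderiv ℝ bump0 x‖ ≤ C := by
  have h : ContDiff ℝ 1 (bump0 : Pl → ℝ) := bump0.contDiff
  obtain ⟨C, hC⟩ := (bump0.hasCompactSupport.fderiv (𝕜 := ℝ)).exists_bound_of_continuous
    (h.continuous_fderiv one_ne_zero)
  exact ⟨max C 1, by positivity, fun x => (hC x).trans (le_max_left _ _)⟩

/-- A bound for the gradient of `bump0`. -/
def gradC : ℝ := exists_bump0_bound.choose

lemma gradC_pos : 0 < gradC := exists_bump0_bound.choose_spec.1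

lemma gradC_bound (x : Pl) : ‖fderiv ℝ bump0 x‖ ≤ gradC := exists_bump0_bound.choose_spec.2 x

/-- The bump `bump0` rescaled to the ball of radius `ρ` around `x`. -/
def bumpAt (x : Pl) (ρ : ℝ) (y : Pl) : ℝ := bump0 (ρ⁻¹ • (y - x))

lemma bumpAt_nonneg (x : Pl) (ρ : ℝ) (y : Pl) : 0 ≤ bumpAt x ρ y := bump0.nonneg

lemma bumpAt_le_one (x : Pl) (ρ : ℝ) (y : Pl) : bumpAt x ρ y ≤ 1 := bump0.le_one

lemma bumpAt_contDiff (x : Pl) (ρ : ℝ) : ContDiff ℝ 1 (bumpAt x ρ) :=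
  bump0.contDiff.comp ((contDiff_id.sub contDiff_const).const_smul ρ⁻¹)

lemma bumpAt_one {x y : Pl} {ρ : ℝ} (hρ : 0 < ρ) (hy : y ∈ closedBall x ρ) : bumpAt x ρ y = 1 := by
  refine bump0.one_of_mem_closedBall ?_
  rw [mem_closedBall, dist_eq_norm] at *
  rw [sub_zero, norm_smul, norm_inv, Real.norm_of_nonneg hρ.le, inv_mul_le_iff₀ hρ]
  simpa [bump0] using hy

lemma bumpAt_zero {x y : Pl} {ρ : ℝ} (hρ : 0 < ρ) (hy : y ∉ ball x (3 / 2 * ρ)) :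
    bumpAt x ρ y = 0 := by
  refine bump0.zero_of_le_dist ?_
  rw [mem_ball, dist_eq_norm, not_lt] at hy
  rw [dist_eq_norm, sub_zero, norm_smul, norm_inv, Real.norm_of_nonneg hρ.le, le_inv_mul_iff₀ hρ,
    mul_comm]
  simpa [bump0] using hy

lemma bumpAt_tsupport {x : Pl} {ρ : ℝ} (hρ : 0 < ρ) :
    tsupport (bumpAt x ρ) ⊆ closedBall x (3 / 2 * ρ) :=
  closure_minimal (fun _ hy => ball_subset_closedBall (by_contra fun h => hy (bumpAt_zero hρ h)))
    isClosed_closedBall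

lemma bumpAt_compact {x : Pl} {ρ : ℝ} (hρ : 0 < ρ) : HasCompactSupport (bumpAt x ρ) :=
  (isCompact_closedBall x (3 / 2 * ρ)).of_isClosed_subset (isClosed_tsupport _) (bumpAt_tsupport hρ)

lemma bumpAt_fderiv (x y : Pl) {ρ : ℝ} (hρ : 0 < ρ) : ‖fderiv ℝ (bumpAt x ρ) y‖ ≤ gradC / ρ := by
  have h1 : HasFDerivAt (fun y : Pl => ρ⁻¹ • (y - x)) (ρ⁻¹ • ContinuousLinearMap.id ℝ Pl) y :=
    ((hasFDerivAt_id y).sub_const x).const_smul ρ⁻¹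
  have hb : ContDiff ℝ 1 (bump0 : Pl → ℝ) := bump0.contDiff
  have h2 := (hb.differentiable one_ne_zero (ρ⁻¹ • (y - x))).hasFDerivAt.comp y h1
  have e : fderiv ℝ (bumpAt x ρ) y = _ := h2.fderiv
  rw [e]
  refine (ContinuousLinearMap.opNorm_comp_le _ _).trans ?_
  rw [div_eq_mul_inv]
  refine mul_le_mul (gradC_bound _) ?_ (norm_nonneg _) gradC_pos.le
  rw [norm_smul, norm_inv, Real.norm_of_nonneg hρ.le]
  have := ContinuousLinearMap.norm_id_le (𝕜 := ℝ) (E := Pl)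
  have h3 : 0 < ρ⁻¹ := by positivity
  nlinarith

/-- Radius ratio used when averaging the Poincaré inequality. -/
def θ₀ : ℝ := 1 / (128 * 1024 * (gradC + 1))

/-- The density threshold below which a portion of a ball counts as small. -/
def κ₀ : ℝ := θ₀ ^ 2 / 2

lemma θ₀_pos : 0 < θ₀ := by have := gradC_pos; unfold θ₀; positivity

lemma κ₀_pos : 0 < κ₀ := by have := θ₀_pos; unfold κ₀; positivity

lemma θ₀_le : θ₀ ≤ 1 / 1024 := by
  have := gradC_pos
  unfold θ₀
  rw [div_le_div_iff₀ (by positivity) (by norm_num)]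
  nlinarith

lemma κ₀_le : κ₀ ≤ 1 / 1024 := by
  have := θ₀_le; have := θ₀_pos
  unfold κ₀; nlinarith

/-- One-scale decay of the variation around a point at which the polar vector is nearly constant
and the support of `u` has small density. -/
lemma BV.decay {Ω : Set Pl} {u : Pl → ℝ} {ν : Measure Pl} {σ : Pl → Pl} (hΩ : IsOpen Ω)
    (h : BV Ω u ν σ) {x : Pl} {R : ℝ} (hR0 : 0 < R) (hR : closedBall x R ⊆ Ω) (hσ : ‖σ x‖ = 1)
    (hd : volume ({z | u z ≠ 0} ∩ ball x R) ≤ ENNReal.ofReal κ₀ * volume (ball x R))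
    (havg : ∫ y in closedBall x R, ‖σ y - σ x‖ ∂ν ≤ 1 / 1024 * (ν (closedBall x R)).toReal) :
    (ν (closedBall x (R / 8))).toReal ≤ 1 / 512 * (ν (closedBall x R)).toReal := by
  have := h.fin
  set e := σ x with he
  set ρ := R / 8 with hρ
  have hρ0 : 0 < ρ := by positivity
  set η := bumpAt x ρ with hη
  have hηs : tsupport η ⊆ closedBall x (3 / 2 * ρ) := bumpAt_tsupport hρ0
  have hsub : closedBall x (3 / 2 * ρ) ⊆ ball x (R / 4) := closedBall_subset_ball (by linarith)
  have hsubR : ball x (R / 4) ⊆ closedBall x R :=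
    ball_subset_closedBall.trans (closedBall_subset_closedBall (by linarith))
  have hηc : Continuous η := (bumpAt_contDiff x ρ).continuous
  have hφ : IsTest Ω (fun y => η y • e) := isTest_smul_vec (bumpAt_contDiff x ρ) (bumpAt_compact hρ0)
    (hηs.trans (hsub.trans (hsubR.trans hR))) e
  have hηi : Integrable η ν := hηc.integrable_of_hasCompactSupport (bumpAt_compact hρ0)
  have hσi := h.integrable_sigma
  have hdi : Integrable (fun y => ‖σ y - e‖) ν := (hσi.sub (integrable_const e)).norm
  -- the left-hand side is controlled by `∫ η`
  have h1 : (ν (closedBall x ρ)).toReal ≤ ∫ y, η y ∂ν := by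
    have : (ν (closedBall x ρ)).toReal = ∫ y, (closedBall x ρ).indicator 1 y ∂ν :=
      (integral_indicator_one measurableSet_closedBall).symm
    rw [this]
    refine integral_mono ((integrable_const (1:ℝ)).indicator measurableSet_closedBall) hηi fun y => ?_
    by_cases hy : y ∈ closedBall x ρ
    · simp [hy, hη, bumpAt_one hρ0 hy]
    · simp [hy, hη, bumpAt_nonneg]
  have h2 : ∫ y, η y ∂ν ≤ (∫ y, ⟪η y • e, σ y⟫ ∂ν) + ∫ y in closedBall x R, ‖σ y - e‖ ∂ν := by
    rw [← integral_indicator measurableSet_closedBall,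
      ← integral_add (h.integrable_inner hφ) (hdi.indicator measurableSet_closedBall)]
    refine integral_mono hηi ((h.integrable_inner hφ).add (hdi.indicator measurableSet_closedBall))
      fun y => ?_
    dsimp only
    by_cases hy : y ∈ closedBall x R
    · rw [indicator_of_mem hy]
      have h3 : ⟪η y • e, σ y⟫ = η y + η y * ⟪e, σ y - e⟫ := by
        rw [real_inner_smul_left, inner_sub_right, real_inner_self_eq_norm_sq, hσ]; ring
      have h4 : |⟪e, σ y - e⟫| ≤ ‖σ y - e‖ := by
        have := abs_real_inner_le_norm e (σ y - e); rwa [hσ, one_mul] at this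
      have h5 := bumpAt_nonneg x ρ y
      have h6 := bumpAt_le_one x ρ y
      rw [h3]
      have h7 := neg_le_of_abs_le h4
      have h8 := norm_nonneg (σ y - e)
      change η y ≤ _
      change 0 ≤ η y at h5
      change η y ≤ 1 at h6
      nlinarith
    · have : η y = 0 := image_eq_zero_of_notMem_tsupport fun h' => hy (hsubR (hsub (hηs h')))
      simp [hy, this]
  have hfi : IntegrableOn u (ball x (R / 4)) :=
    (h.loc.integrableOn_compact_subset hR (isCompact_closedBall x R)).mono_set hsubR
  have h3 : (∫ y, ⟪η y • e, σ y⟫ ∂ν) ≤ gradC / ρ * ∫ y in ball x (R / 4), |u y| := by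
    have hp := h.parts _ hφ
    have : (∫ y, ⟪η y • e, σ y⟫ ∂ν) ≤ |∫ y, u y * dvg (fun y => η y • e) y| := by
      rw [hp, abs_neg]; exact le_abs_self _
    refine this.trans (abs_integral_le_integral_abs.trans ?_)
    rw [← integral_const_mul, ← integral_indicator measurableSet_ball]
    have hfi' : IntegrableOn (fun y => gradC / ρ * |u y|) (ball x (R / 4)) := hfi.abs.const_mul _
    refine integral_mono (integrable_mul_dvg h.loc hφ).abs
      (hfi'.integrable_indicator measurableSet_ball) fun y => ?_
    dsimp only
    rw [dvg_smul_vec (bumpAt_contDiff x ρ)]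
    by_cases hy : y ∈ ball x (R / 4)
    · rw [indicator_of_mem hy, abs_mul, mul_comm]
      gcongr
      calc |fderiv ℝ (bumpAt x ρ) y e| ≤ ‖fderiv ℝ (bumpAt x ρ) y‖ * ‖e‖ :=
            (fderiv ℝ (bumpAt x ρ) y).le_opNorm e
        _ ≤ _ := by rw [hσ, mul_one]; exact bumpAt_fderiv x y hρ0
    · have : fderiv ℝ (bumpAt x ρ) y = 0 := fderiv_of_notMem_tsupport ℝ fun h' => hy (hsub (hηs h'))
      simp [hy, this]
  have h4 : ∫ y in ball x (R / 4), |u y| ≤ 16 * θ₀ * R * (ν (closedBall x R)).toReal := by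
    have hss := h.small_support hΩ hR0 hR θ₀_pos (θ₀_le.trans (by norm_num)) hd
    have e1 : ∫ y in ball x (R / 4), |u y| = (∫⁻ y in ball x (R / 4), ‖u y‖ₑ).toReal :=
      integral_norm_eq_lintegral_enorm hfi.aestronglyMeasurable
    have hθ := θ₀_pos
    rw [e1]
    refine (ENNReal.toReal_mono (by finiteness) hss).trans_eq ?_
    rw [ENNReal.toReal_mul, ENNReal.toReal_ofReal (by positivity)]
  have h5 : gradC / ρ * (16 * θ₀ * R * (ν (closedBall x R)).toReal)
      ≤ 1 / 1024 * (ν (closedBall x R)).toReal := by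
    have hg := gradC_pos
    have e1 : gradC / ρ * (16 * θ₀ * R * (ν (closedBall x R)).toReal)
        = gradC / (gradC + 1) * (1 / 1024 * (ν (closedBall x R)).toReal) := by
      rw [hρ, θ₀]; field_simp; norm_num
    rw [e1]
    refine mul_le_of_le_one_left (by positivity) ?_
    rw [div_le_one (by positivity)]; linarith
  have h6 : gradC / ρ * (∫ y in ball x (R / 4), |u y|)
      ≤ gradC / ρ * (16 * θ₀ * R * (ν (closedBall x R)).toReal) :=
    mul_le_mul_of_nonneg_left h4 (by have := gradC_pos; positivity)
  linarith

/-- The variation measure gives no mass to the points around which the support of `u` has eventually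
small density. Otherwise `BV.decay` makes `ν` of a ball decay faster than its area, whereas the density
of the area with respect to `ν` is finite `ν`-almost everywhere. -/
lemma BV.ae_not_small {Ω : Set Pl} {u : Pl → ℝ} {ν : Measure Pl} {σ : Pl → Pl} (hΩ : IsOpen Ω)
    (h : BV Ω u ν σ) : ∀ᵐ x ∂ν, ¬ ∀ᶠ r in 𝓝[>] (0:ℝ),
      volume ({z | u z ≠ 0} ∩ ball x r) ≤ ENNReal.ofReal κ₀ * volume (ball x r) := by
  have := h.fin
  have hσi := h.integrable_sigma
  have hΩae : ∀ᵐ x ∂ν, x ∈ Ω := by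
    rw [ae_iff]; exact h.conc
  filter_upwards [h.unit, hΩae, Besicovitch.ae_tendsto_rnDeriv (volume : Measure Pl) ν,
    (volume : Measure Pl).rnDeriv_lt_top ν,
    (Besicovitch.vitaliFamily ν).ae_tendsto_average_norm_sub hσi.locallyIntegrable]
    with x hx1 hxΩ hrn hfin hav hsmall
  have hav' := hav.comp (Besicovitch.tendsto_filterAt ν x)
  have e1 : ∀ᶠ r in 𝓝[>] (0:ℝ), ⨍ y in closedBall x r, ‖σ y - σ x‖ ∂ν < 1 / 1024 :=
    hav'.eventually (gt_mem_nhds (by norm_num))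
  have e2 : ∀ᶠ r in 𝓝[>] (0:ℝ), closedBall x r ⊆ Ω := by
    obtain ⟨δ, hδ, hδΩ⟩ := nhds_basis_closedBall.mem_iff.1 (hΩ.mem_nhds hxΩ)
    filter_upwards [Ioo_mem_nhdsGT hδ] with r hr
    exact (closedBall_subset_closedBall hr.2.le).trans hδΩ
  obtain ⟨R, hR, hall⟩ := mem_nhdsGT_iff_exists_Ioc_subset.1 ((hsmall.and e1).and e2)
  have hR0 : 0 < R := hR
  have hstep : ∀ r, 0 < r → r ≤ R → (ν (closedBall x (r / 8))).toReal
      ≤ 1 / 512 * (ν (closedBall x r)).toReal := by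
    intro r hr hrR
    obtain ⟨⟨a, b⟩, c⟩ := hall ⟨hr, hrR⟩
    refine h.decay hΩ hr c hx1 a ?_
    rw [setAverage_eq, smul_eq_mul] at b
    have hνr : 0 ≤ ν.real (closedBall x r) := measureReal_nonneg
    rcases hνr.eq_or_lt with h0 | h0
    · have : ν (closedBall x r) = 0 := by
        have := (measureReal_eq_zero_iff (by finiteness)).1 h0.symm
        exact this
      rw [Measure.restrict_eq_zero.2 this]; simp [this]
    · rw [inv_mul_lt_iff₀ h0, mul_comm] at b
      exact b.le
  have hk : ∀ k : ℕ, (ν (closedBall x (R / 8 ^ k))).toReal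
      ≤ (1 / 512) ^ k * (ν (closedBall x R)).toReal := by
    intro k
    induction k with
    | zero => simp
    | succ k ih =>
      have := hstep (R / 8 ^ k) (by positivity) (div_le_self hR0.le (one_le_pow₀ (by norm_num)))
      rw [pow_succ, ← div_div]
      refine this.trans ?_
      rw [pow_succ]; linarith
  -- the ratio `vol/ν` blows up along the radii `R / 8 ^ k`
  have hrad : Tendsto (fun k : ℕ => R / 8 ^ k) atTop (𝓝[>] 0) := by
    refine tendsto_nhdsWithin_iff.2 ⟨?_, Eventually.of_forall fun k => by
      rw [mem_Ioi]; positivity⟩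
    exact tendsto_const_nhds.div_atTop (tendsto_pow_atTop_atTop_of_one_lt (by norm_num))
  have hlim := hrn.comp hrad
  obtain ⟨M, hM⟩ : ∃ M : ℝ, 0 < M ∧ (volume : Measure Pl).rnDeriv ν x < ENNReal.ofReal M := by
    refine ⟨((volume : Measure Pl).rnDeriv ν x).toReal + 1, by positivity, ?_⟩
    rw [ENNReal.lt_ofReal_iff_toReal_lt hfin.ne]; linarith
  have hev : ∀ᶠ k : ℕ in atTop, volume (closedBall x (R / 8 ^ k)) / ν (closedBall x (R / 8 ^ k))
      < ENNReal.ofReal M := hlim.eventually (gt_mem_nhds hM.2)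
  have hbig : Tendsto (fun k : ℕ => (Real.pi * R ^ 2) * (8:ℝ) ^ k) atTop atTop :=
    (tendsto_pow_atTop_atTop_of_one_lt (by norm_num)).const_mul_atTop (by positivity)
  obtain ⟨k, hk1, hk2⟩ := (hev.and (hbig.eventually_gt_atTop (M * (ν (closedBall x R)).toReal))).exists
  set b := ν (closedBall x (R / 8 ^ k)) with hb
  have hbt : b ≠ ⊤ := by finiteness
  have h3 : volume (closedBall x (R / 8 ^ k)) < ENNReal.ofReal M * b := by
    have h0 : b ≠ 0 := fun h0 => by
      rw [h0, ENNReal.div_zero] at hk1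
      · simp at hk1
      · exact (measure_closedBall_pos _ _ (by positivity)).ne'
    exact (ENNReal.div_lt_iff (Or.inl h0) (Or.inl hbt)).1 hk1
  rw [vol_closedBall x (by positivity), ← ENNReal.ofReal_toReal hbt,
    ← ENNReal.ofReal_mul hM.1.le] at h3
  have h4 := (ENNReal.ofReal_lt_ofReal_iff_of_nonneg (by positivity)).1 h3
  have h5 := hk k
  have e8 : Real.pi * (R / 8 ^ k) ^ 2 = (1 / 512) ^ k * (Real.pi * R ^ 2 * 8 ^ k) := by
    rw [show (512:ℝ) = 8 * 8 * 8 by norm_num, one_div, inv_pow, mul_pow, mul_pow]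
    field_simp
  rw [e8] at h4
  have h6 : M * b.toReal ≤ (1 / 512) ^ k * (M * (ν (closedBall x R)).toReal) := by
    calc M * b.toReal ≤ M * ((1 / 512) ^ k * (ν (closedBall x R)).toReal) :=
          mul_le_mul_of_nonneg_left h5 hM.1.le
      _ = _ := by ring
  have h7 : ((1:ℝ) / 512) ^ k * (M * (ν (closedBall x R)).toReal)
      < (1 / 512) ^ k * (Real.pi * R ^ 2 * 8 ^ k) := by gcongr
  linarith

/-! ### One-dimensional content -/

/-- The gauge assigning to a set the infimum of the radii of balls containing it. -/
def gauge1 (s : Set Pl) : ℝ≥0∞ :=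
  ⨅ (x : Pl) (r : ℝ) (_ : 0 < r) (_ : s ⊆ ball x r), ENNReal.ofReal r

lemma gauge1_le {s : Set Pl} {x : Pl} {r : ℝ} (hr : 0 < r) (hs : s ⊆ ball x r) :
    gauge1 s ≤ ENNReal.ofReal r :=
  iInf_le_of_le x (iInf_le_of_le r (iInf_le_of_le hr (iInf_le_of_le hs le_rfl)))

lemma gauge1_empty : gauge1 ∅ = 0 := by
  refine le_antisymm (ENNReal.le_of_forall_pos_le_add fun ε hε _ => ?_) zero_le
  rw [zero_add]
  refine (gauge1_le (x := 0) (r := ε) (by exact_mod_cast hε) (empty_subset _)).trans_eq ?_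
  simp

/-- One-dimensional spherical Hausdorff content. -/
def hc : OuterMeasure Pl := OuterMeasure.ofFunction gauge1 gauge1_empty

lemma hc_ball_le {s : Set Pl} {x : Pl} {r : ℝ} (hr : 0 < r) (hs : s ⊆ ball x r) :
    hc s ≤ ENNReal.ofReal r := (OuterMeasure.ofFunction_le s).trans (gauge1_le hr hs)

/-- Sets of content `< ε` have countable ball covers with radii summing to less than `ε`. -/
lemma exists_cover {X : Set Pl} {ε : ℝ≥0∞} (h : hc X < ε) :
    ∃ (c : ℕ → Pl) (r : ℕ → ℝ), (∀ n, 0 < r n) ∧ X ⊆ ⋃ n, ball (c n) (r n) ∧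
      ∑' n, ENNReal.ofReal (r n) < ε := by
  rw [hc, OuterMeasure.ofFunction_apply] at h
  simp only [iInf_lt_iff] at h
  obtain ⟨t, hXt, ht⟩ := h
  obtain ⟨δ, hδ0, hδ⟩ := ENNReal.lt_iff_exists_add_pos_lt.1 ht
  obtain ⟨δ', hδ'0, hδ'⟩ := ENNReal.exists_pos_sum_of_countable (ε := (δ : ℝ≥0∞))
    (by simpa using hδ0.ne') ℕ
  have hsum : ∑' n, gauge1 (t n) ≠ ⊤ := ne_top_of_lt ht
  have hex : ∀ n, ∃ (x : Pl) (r : ℝ), 0 < r ∧ t n ⊆ ball x r ∧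
      ENNReal.ofReal r < gauge1 (t n) + δ' n := by
    intro n
    have hlt : gauge1 (t n) < gauge1 (t n) + δ' n :=
      ENNReal.lt_add_right (ne_top_of_le_ne_top hsum (ENNReal.le_tsum n)) (by
        simpa using (hδ'0 n).ne')
    conv_lhs at hlt => unfold gauge1
    simp only [iInf_lt_iff] at hlt
    obtain ⟨x, r, hr, hs, hlt⟩ := hlt
    exact ⟨x, r, hr, hs, hlt⟩
  choose c r hr hs hlt using hex
  refine ⟨c, r, hr, hXt.trans (iUnion_mono hs), ?_⟩
  calc ∑' n, ENNReal.ofReal (r n) ≤ ∑' n, (gauge1 (t n) + δ' n) :=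
        ENNReal.tsum_le_tsum fun n => (hlt n).le
    _ = ∑' n, gauge1 (t n) + ∑' n, (δ' n : ℝ≥0∞) := ENNReal.tsum_add
    _ ≤ ∑' n, gauge1 (t n) + δ := by gcongr
    _ < ε := hδ

/-- Vitali covering estimate for the content. -/
lemma hc_vitali {X N : Set Pl} {ν : Measure Pl} {c : ℝ} (hc0 : 0 < c)
    (h : ∀ x ∈ X, ∃ r, 0 < r ∧ r ≤ 1 ∧ closedBall x r ⊆ N ∧ ENNReal.ofReal (c * r) ≤ ν (closedBall x r)) :
    hc X ≤ ENNReal.ofReal (6 / c) * ν N := by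
  choose! r hr0 hr1 hrN hrν using h
  obtain ⟨t, htX, hdisj, hcov⟩ := Vitali.exists_disjoint_subfamily_covering_enlargement_closedBall
    X id r 1 hr1 5 (by norm_num)
  have htc : t.Countable := hdisj.countable_of_nonempty_interior fun x hx => by
    refine ⟨x, ?_⟩
    rw [mem_interior_iff_mem_nhds]
    exact closedBall_mem_nhds _ (hr0 x (htX hx))
  have hsub : X ⊆ ⋃ x ∈ t, ball x (6 * r x) := fun x hx => by
    obtain ⟨b, hb, hbx⟩ := hcov x hx
    refine mem_iUnion₂.2 ⟨b, hb, ?_⟩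
    have h0 := hr0 b (htX hb)
    exact closedBall_subset_ball (by linarith) (hbx (mem_closedBall_self (hr0 x hx).le))
  have := htc.to_subtype
  calc hc X ≤ hc (⋃ x ∈ t, ball x (6 * r x)) := hc.mono hsub
    _ ≤ ∑' x : t, hc (ball x (6 * r x)) := by
        rw [biUnion_eq_iUnion]; exact measure_iUnion_le _
    _ ≤ ∑' x : t, ENNReal.ofReal (6 / c) * ν (closedBall x (r x)) := by
        refine ENNReal.tsum_le_tsum fun x => ?_
        have h0 := hr0 x (htX x.2)
        calc hc (ball x (6 * r x)) ≤ ENNReal.ofReal (6 * r x) := hc_ball_le (by linarith) subset_rfl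
          _ = ENNReal.ofReal (6 / c) * ENNReal.ofReal (c * r x) := by
              rw [← ENNReal.ofReal_mul (by positivity)]; congr 1; field_simp
          _ ≤ _ := by gcongr; exact hrν x (htX x.2)
    _ = ENNReal.ofReal (6 / c) * ∑' x : t, ν (closedBall x (r x)) := ENNReal.tsum_mul_left
    _ = ENNReal.ofReal (6 / c) * ν (⋃ x ∈ t, closedBall x (r x)) := by
        have hdisj' : t.PairwiseDisjoint fun a => closedBall a (r a) := hdisj
        rw [measure_biUnion htc hdisj' fun x _ => measurableSet_closedBall]
    _ ≤ _ := by
        gcongr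
        exact iUnion₂_subset fun x hx => hrN x (htX hx)

/-- Off a set of zero content, a `ν`-null set consists of points with `ν(B_r) = o(r)`. -/
lemma hc_density_null {T : Set Pl} {ν : Measure Pl} [IsFiniteMeasure ν] (hT : ν T = 0) :
    hc {x ∈ T | ¬ ∀ c : ℝ, 0 < c → ∀ᶠ r in 𝓝[>] (0:ℝ), ν (closedBall x r) ≤ ENNReal.ofReal (c * r)} = 0 := by
  set X : ℕ → Set Pl := fun n => {x ∈ T | ∃ᶠ r in 𝓝[>] (0:ℝ),
    ENNReal.ofReal (1 / (n + 1) * r) < ν (closedBall x r)} with hX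
  have hsub : {x ∈ T | ¬ ∀ c : ℝ, 0 < c → ∀ᶠ r in 𝓝[>] (0:ℝ),
      ν (closedBall x r) ≤ ENNReal.ofReal (c * r)} ⊆ ⋃ n, X n := by
    rintro x ⟨hxT, hx⟩
    push Not at hx
    obtain ⟨c, hc0, hx⟩ := hx
    obtain ⟨n, hn⟩ := exists_nat_one_div_lt hc0
    refine mem_iUnion.2 ⟨n, hxT, ?_⟩
    refine (hx.and_eventually self_mem_nhdsWithin).mono fun r hr => lt_of_le_of_lt ?_ hr.1
    have : 0 < r := hr.2
    exact ENNReal.ofReal_le_ofReal (by gcongr)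
  have hz : ∀ n, hc (X n) = 0 := by
    intro n
    have hb : ∀ k : ℕ, hc (X n) ≤ ENNReal.ofReal (6 / (1 / (n + 1))) * (k : ℝ≥0∞)⁻¹ := by
      intro k
      obtain ⟨N, hTN, hN, hlt⟩ := T.exists_isOpen_lt_add (μ := ν) (by finiteness)
        (ε := (k : ℝ≥0∞)⁻¹) (by simp)
      rw [hT, zero_add] at hlt
      refine (hc_vitali (N := N) (ν := ν) (c := 1 / (n + 1)) (by positivity) ?_).trans (by gcongr)
      rintro x ⟨hxT, hx⟩
      obtain ⟨δ, hδ, hδN⟩ := nhds_basis_closedBall.mem_iff.1 (hN.mem_nhds (hTN hxT))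
      obtain ⟨r, hr1, hr2⟩ := (hx.and_eventually
        (Ioo_mem_nhdsGT (show (0:ℝ) < min δ 1 by positivity))).exists
      exact ⟨r, hr2.1, (hr2.2.le.trans (min_le_right _ _)),
        (closedBall_subset_closedBall (hr2.2.le.trans (min_le_left _ _))).trans hδN, hr1.le⟩
    have hl : Tendsto (fun k : ℕ => ENNReal.ofReal (6 / (1 / (n + 1))) * (k : ℝ≥0∞)⁻¹) atTop
        (𝓝 (ENNReal.ofReal (6 / (1 / (n + 1))) * 0)) :=
      ENNReal.Tendsto.const_mul ENNReal.tendsto_inv_nat_nhds_zero (Or.inr ENNReal.ofReal_ne_top)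
    rw [mul_zero] at hl
    exact le_antisymm (ge_of_tendsto' hl hb) zero_le
  refine le_antisymm ((measure_mono hsub).trans ((measure_iUnion_le _).trans ?_)) zero_le
  simp [hz]

/-- `A` has density zero at `x`. -/
def Dens0 (A : Set Pl) (x : Pl) : Prop :=
  ∀ c : ℝ, 0 < c → ∀ᶠ r in 𝓝[>] (0:ℝ), volume (A ∩ ball x r) ≤ ENNReal.ofReal c * volume (ball x r)

lemma Dens0.mono {A B : Set Pl} {x : Pl} (hB : Dens0 B x) (h : A ⊆ B) : Dens0 A x := fun c hc =>
  (hB c hc).mono fun _ hr => (measure_mono (inter_subset_inter_left _ h)).trans hr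

/-- Small density of the support of an indicator improves to zero density, off a set of zero
content. -/
lemma BV.null_lemma {N : Set Pl} {f : Pl → ℝ} {ν : Measure Pl} {σ : Pl → Pl} (hN : IsOpen N)
    (h : BV N f ν σ) (hf : ∀ x, f x = 0 ∨ f x = 1) :
    hc {x ∈ N | (∀ᶠ r in 𝓝[>] (0:ℝ),
      volume ({z | f z ≠ 0} ∩ ball x r) ≤ ENNReal.ofReal κ₀ * volume (ball x r)) ∧
        ¬ Dens0 {z | f z ≠ 0} x} = 0 := by
  have := h.fin
  set T := {x ∈ N | ∀ᶠ r in 𝓝[>] (0:ℝ),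
      volume ({z | f z ≠ 0} ∩ ball x r) ≤ ENNReal.ofReal κ₀ * volume (ball x r)} with hT
  have hT0 : ν T = 0 := by
    have := h.ae_not_small hN
    rw [ae_iff] at this
    refine measure_mono_null (fun x hx => ?_) this
    exact not_not.2 hx.2
  refine measure_mono_null ?_ (hc_density_null hT0)
  rintro x ⟨hxN, hx1, hx2⟩
  refine ⟨⟨hxN, hx1⟩, fun hdens => hx2 fun c hc0 => ?_⟩
  have e2 : ∀ᶠ r in 𝓝[>] (0:ℝ), closedBall x r ⊆ N := by
    obtain ⟨δ, hδ, hδΩ⟩ := nhds_basis_closedBall.mem_iff.1 (hN.mem_nhds hxN)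
    filter_upwards [Ioo_mem_nhdsGT hδ] with r hr
    exact (closedBall_subset_closedBall hr.2.le).trans hδΩ
  filter_upwards [hx1, e2, hdens (c * Real.pi / 16) (by positivity), self_mem_nhdsWithin]
    with r h1 h2 h3 h4
  have hr0 : 0 < r := h4
  have h5 := h.poincare_half hN hr0 h2 (h1.trans (by
    rw [ENNReal.div_eq_inv_mul]
    gcongr
    rw [show (2:ℝ≥0∞)⁻¹ = ENNReal.ofReal (2⁻¹) by
      rw [ENNReal.ofReal_inv_of_pos (by norm_num)]; simp]
    exact ENNReal.ofReal_le_ofReal (κ₀_le.trans (by norm_num))))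
  have hm : MeasurableSet {z | f z ≠ 0} := h.measu (measurableSet_singleton 0).compl
  calc volume ({z | f z ≠ 0} ∩ ball x r) = ∫⁻ y in {z | f z ≠ 0} ∩ ball x r, 1 := by simp
    _ ≤ ∫⁻ y in {z | f z ≠ 0} ∩ ball x r, ‖f y‖ₑ := by
        refine setLIntegral_mono' (hm.inter measurableSet_ball) fun y hy => ?_
        have : f y = 1 := (hf y).resolve_left hy.1
        simp [this]
    _ ≤ ∫⁻ y in ball x r, ‖f y‖ₑ := lintegral_mono_set inter_subset_right
    _ ≤ _ := h5
    _ ≤ ENNReal.ofReal (16 * r) * ENNReal.ofReal (c * Real.pi / 16 * r) := by gcongr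
    _ = _ := by
        rw [vol_ball x hr0.le, ← ENNReal.ofReal_mul (by positivity),
          ← ENNReal.ofReal_mul (by positivity)]
        congr 1; ring

/-! ### Truncations -/

/-- `u` has finite variation in `Ω`. -/
def IsBV (Ω : Set Pl) (u : Pl → ℝ) : Prop := ∃ ν σ, BV Ω u ν σ

/-- Truncation of `t` at the levels `a ≤ b`. -/
def cl (a b t : ℝ) : ℝ := max a (min t b)

lemma V_const (c : ℝ) {U : Set Pl} (hU : IsOpen U) : V (fun _ => c) U = 0 := by
  rw [(BV.const U c).V_eq hU subset_rfl]; simp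

namespace IsBV

variable {Ω U : Set Pl} {u v : Pl → ℝ}

lemma measu (h : IsBV Ω u) : Measurable u := by obtain ⟨_, _, h⟩ := h; exact h.measu

lemma loc (h : IsBV Ω u) : LocallyIntegrableOn u Ω volume := by obtain ⟨_, _, h⟩ := h; exact h.loc

lemma mono (h : IsBV Ω u) (hU : IsOpen U) (hUΩ : U ⊆ Ω) : IsBV U u := by
  obtain ⟨_, _, h⟩ := h; exact ⟨_, _, h.restrict hU hUΩ⟩

lemma V_ne_top (h : IsBV Ω u) (hU : IsOpen U) (hUΩ : U ⊆ Ω) : V u U ≠ ⊤ := by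
  obtain ⟨_, _, h⟩ := h
  have := h.fin
  rw [h.V_eq hU hUΩ]; finiteness

lemma const (Ω : Set Pl) (c : ℝ) : IsBV Ω (fun _ => c) := ⟨_, _, BV.const Ω c⟩

lemma neg (h : IsBV Ω u) : IsBV Ω (fun x => - u x) := by
  obtain ⟨_, _, h⟩ := h; exact ⟨_, _, h.neg⟩

lemma affine (h : IsBV Ω u) (p q : ℝ) : IsBV Ω (fun x => p * u x + q) := by
  obtain ⟨_, _, h⟩ := h; exact ⟨_, _, h.affine p q⟩

lemma max (h : IsBV Ω u) (h' : IsBV Ω v) (hΩ : IsOpen Ω) : IsBV Ω (fun x => max (u x) (v x)) := by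
  obtain ⟨_, _, h⟩ := h; obtain ⟨_, _, h'⟩ := h'; exact h.exists_max hΩ h'

lemma min (h : IsBV Ω u) (h' : IsBV Ω v) (hΩ : IsOpen Ω) : IsBV Ω (fun x => min (u x) (v x)) := by
  obtain ⟨_, _, h⟩ := h; obtain ⟨_, _, h'⟩ := h'; exact h.exists_min hΩ h'

lemma cl (h : IsBV Ω u) (hΩ : IsOpen Ω) (a b : ℝ) : IsBV Ω (fun x => cl a b (u x)) :=
  (const Ω a).max (h.min (const Ω b) hΩ) hΩ

lemma V_affine (h : IsBV Ω u) (hΩ : IsOpen Ω) (p q : ℝ) :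
    V (fun x => p * u x + q) Ω = ENNReal.ofReal |p| * V u Ω := by
  obtain ⟨_, _, h⟩ := h
  rw [(h.affine p q).V_eq hΩ subset_rfl, h.V_eq hΩ subset_rfl]; simp

lemma V_neg (h : IsBV Ω u) (hΩ : IsOpen Ω) : V (fun x => - u x) Ω = V u Ω := by
  obtain ⟨_, _, h⟩ := h
  rw [h.neg.V_eq hΩ subset_rfl, h.V_eq hΩ subset_rfl]

lemma V_submod (h : IsBV Ω u) (h' : IsBV Ω v) (hΩ : IsOpen Ω) :
    V (fun x => Max.max (u x) (v x)) Ω + V (fun x => Min.min (u x) (v x)) Ω ≤ V u Ω + V v Ω := by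
  obtain ⟨_, _, h⟩ := h; obtain ⟨_, _, h'⟩ := h'; exact V_max_add_V_min hΩ h h' hΩ subset_rfl

/-- Truncation above and below a level splits the variation. -/
lemma V_split (h : IsBV Ω u) (hΩ : IsOpen Ω) (t : ℝ) :
    V (fun x => Max.max (u x) t) Ω + V (fun x => Min.min (u x) t) Ω ≤ V u Ω := by
  simpa [V_const t hΩ] using h.V_submod (const Ω t) hΩ

lemma V_cl_add (h : IsBV Ω u) (hΩ : IsOpen Ω) {a t b : ℝ} (hat : a ≤ t) (htb : t ≤ b) :
    V (fun x => StrictBV.cl a t (u x)) Ω + V (fun x => StrictBV.cl t b (u x)) Ω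
      ≤ V (fun x => StrictBV.cl a b (u x)) Ω := by
  have hh := (h.cl hΩ a b).V_split hΩ t
  have e1 : (fun x => Min.min (StrictBV.cl a b (u x)) t) = fun x => StrictBV.cl a t (u x) := by
    funext x; unfold StrictBV.cl; grind
  have e2 : (fun x => Max.max (StrictBV.cl a b (u x)) t) = fun x => StrictBV.cl t b (u x) := by
    funext x; unfold StrictBV.cl; grind
  rwa [e1, e2, add_comm] at hh

lemma V_cl_le (h : IsBV Ω u) (hΩ : IsOpen Ω) {a b c d : ℝ} (hab : a ≤ b) (hbc : b ≤ c) (hcd : c ≤ d) :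
    V (fun x => StrictBV.cl b c (u x)) Ω ≤ V (fun x => StrictBV.cl a d (u x)) Ω :=
  (le_add_self.trans (h.V_cl_add hΩ hab hbc)).trans
    (le_self_add.trans (h.V_cl_add hΩ (hab.trans hbc) hcd))

/-- The three truncations of `u` at levels `a ≤ b` together have at most the variation of `u`. -/
lemma V_three (h : IsBV Ω u) (hΩ : IsOpen Ω) {a b : ℝ} (hab : a ≤ b) :
    V (fun x => Min.min (u x) a) Ω + V (fun x => StrictBV.cl a b (u x)) Ω
      + V (fun x => Max.max (u x) b) Ω ≤ V u Ω := by
  have h1 := h.V_split hΩ a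
  have h2 := (h.max (const Ω a) hΩ).V_split hΩ b
  have e1 : (fun x => Min.min (Max.max (u x) a) b) = fun x => StrictBV.cl a b (u x) := by
    funext x; unfold StrictBV.cl; grind
  have e2 : (fun x => Max.max (Max.max (u x) a) b) = fun x => Max.max (u x) b := by
    funext x; grind
  rw [e1, e2] at h2
  calc _ = V (fun x => Max.max (u x) b) Ω + V (fun x => StrictBV.cl a b (u x)) Ω
        + V (fun x => Min.min (u x) a) Ω := by ring
    _ ≤ _ := (add_le_add_left h2 _).trans h1

lemma V_cl_le_self (h : IsBV Ω u) (hΩ : IsOpen Ω) {a b : ℝ} (hab : a ≤ b) :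
    V (fun x => StrictBV.cl a b (u x)) Ω ≤ V u Ω :=
  (le_add_self.trans le_self_add).trans (h.V_three hΩ hab)

end IsBV

lemma measurable_cl (a b : ℝ) : Measurable (cl a b) := by unfold cl; fun_prop

lemma cl_neg (a b t : ℝ) (hab : a ≤ b) : cl (-b) (-a) (-t) = - cl a b t := by
  unfold cl; grind

lemma abs_cl_sub_le (a b s t : ℝ) : |cl a b s - cl a b t| ≤ |s - t| := by
  unfold cl; grind

/-- Bounded pointwise convergence is local `L¹` convergence. -/
lemma lconv_of_bounded {Ω : Set Pl} {un : ℕ → Pl → ℝ} {u : Pl → ℝ} (hun : ∀ n, Measurable (un n))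
    (hu : Measurable u) {C : ℝ} (hC : ∀ n x, |un n x - u x| ≤ C)
    (h : ∀ x, Tendsto (fun n => un n x) atTop (𝓝 (u x))) : LConv Ω un u := by
  intro F hF _
  have := tendsto_lintegral_of_dominated_convergence (μ := volume.restrict F)
    (F := fun n x => ‖un n x - u x‖ₑ) (f := fun _ => 0) (fun _ => ENNReal.ofReal C)
    (fun n => ((hun n).sub hu).enorm)
    (fun n => Eventually.of_forall fun x => by
      beta_reduce
      rw [Real.enorm_eq_ofReal_abs]; exact ENNReal.ofReal_le_ofReal (hC n x))
    (by rw [lintegral_const, Measure.restrict_apply_univ]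
        exact ENNReal.mul_ne_top ENNReal.ofReal_ne_top hF.measure_ne_top)
    (Eventually.of_forall fun x => by
      have h1 := ((h x).sub_const (u x)).enorm
      simpa using h1)
  simpa using this

/-- A rising-sun argument: the difference quotients of a monotone function starting at a suitable
point `τ` are bounded by any `L` exceeding the average slope. It replaces differentiation in the choice of a level in the coarea
argument. -/
lemma exists_rising {m : ℝ → ℝ} {a b L : ℝ} (hab : a < b) (hm : MonotoneOn m (Icc a b))
    (h0 : 0 ≤ m a) (hL : 0 ≤ L) (hb : m b < L * (b - a)) :
    ∃ τ ∈ Ico a b, ∀ t ∈ Ioc τ b, m t - m τ ≤ L * (t - τ) := by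
  set S := {t ∈ Icc a b | L * (t - a) ≤ m t} with hS
  have haS : a ∈ S := ⟨⟨le_rfl, hab.le⟩, by simpa using h0⟩
  have hbdd : BddAbove S := ⟨b, fun t ht => ht.1.2⟩
  have haτ : a ≤ sSup S := le_csSup hbdd haS
  have hτb : sSup S ≤ b := csSup_le ⟨a, haS⟩ fun t ht => ht.1.2
  have hτ : L * (sSup S - a) ≤ m (sSup S) := by
    by_contra! hcon
    have hLpos : 0 < L := by
      rcases hL.lt_or_eq with h | h
      · exact h
      · have := hm ⟨le_rfl, hab.le⟩ ⟨haτ, hτb⟩ haτ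
        rw [← h] at hcon; linarith
    obtain ⟨s, hs, hlt⟩ := exists_lt_of_lt_csSup ⟨a, haS⟩
      (show a + m (sSup S) / L < sSup S by
        have : m (sSup S) / L < sSup S - a := by rw [div_lt_iff₀ hLpos]; linarith
        linarith)
    have h1 := hm hs.1 ⟨haτ, hτb⟩ (le_csSup hbdd hs)
    have h2 := hs.2
    have h3 : m (sSup S) / L < s - a := by linarith
    rw [div_lt_iff₀ hLpos] at h3
    nlinarith
  refine ⟨sSup S, ⟨haτ, lt_of_le_of_ne hτb fun h => ?_⟩, fun t ht => ?_⟩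
  · rw [h] at hτ; linarith
  · have : t ∉ S := fun h => absurd (le_csSup hbdd h) (not_le.2 ht.1)
    have h3 : m t < L * (t - a) := by
      by_contra! hcon
      exact this ⟨⟨haτ.trans ht.1.le, ht.2⟩, hcon⟩
    nlinarith

/-! ### Boxing inequality for levels -/

/-- The density threshold in the boxing inequality. -/
def κ₁ : ℝ := κ₀ / 4

lemma κ₁_pos : 0 < κ₁ := by have := κ₀_pos; unfold κ₁; positivity

/-- The constant of the boxing inequality. -/
def CB : ℝ := 6 / (κ₁ ^ 2 * Real.pi / 8)

lemma CB_pos : 0 < CB := by have := κ₁_pos; have := Real.pi_pos; unfold CB; positivity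

/-- Some level `τ` between `a` and `b` has a sublevel set of perimeter at most the average of the
variation of the truncation. -/
lemma IsBV.exists_level {N : Set Pl} {v : Pl → ℝ} (hN : IsOpen N) (hv : IsBV N v) {a b M : ℝ}
    (hab : a < b) (hM : V (fun x => StrictBV.cl a b (v x)) N < ENNReal.ofReal M) :
    ∃ τ ∈ Ico a b, ∃ ν σ, BV N ({z | v z ≤ τ}.indicator fun _ => (1:ℝ)) ν σ ∧
      ν N ≤ ENNReal.ofReal (M / (b - a)) := by
  have hM0 : 0 < M := ENNReal.ofReal_pos.1 (zero_le.trans_lt hM)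
  have hba : 0 < b - a := by linarith
  set L := M / (b - a) with hL
  have hL0 : 0 < L := by positivity
  have hfin : ∀ s t, V (fun x => StrictBV.cl s t (v x)) N ≠ ⊤ := fun s t =>
    (hv.cl hN s t).V_ne_top hN subset_rfl
  have hadd : ∀ s t, a ≤ s → s ≤ t → (V (fun x => StrictBV.cl a s (v x)) N).toReal
      + (V (fun x => StrictBV.cl s t (v x)) N).toReal ≤ (V (fun x => StrictBV.cl a t (v x)) N).toReal := by
    intro s t h1 h2
    rw [← ENNReal.toReal_add (hfin _ _) (hfin _ _)]
    exact ENNReal.toReal_mono (hfin _ _) (hv.V_cl_add hN h1 h2)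
  obtain ⟨τ, hτ, hrise⟩ := exists_rising (m := fun t => (V (fun x => StrictBV.cl a t (v x)) N).toReal)
    hab (fun s hs t ht hst => by
      have := hadd s t hs.1 hst
      have h0 : 0 ≤ (V (fun x => StrictBV.cl s t (v x)) N).toReal := ENNReal.toReal_nonneg
      beta_reduce
      linarith) ENNReal.toReal_nonneg hL0.le (by
      rw [hL, div_mul_cancel₀ _ hba.ne']
      exact (ENNReal.lt_ofReal_iff_toReal_lt (hfin _ _)).1 hM)
  have hVτ : ∀ t ∈ Ioc τ b, V (fun x => StrictBV.cl τ t (v x)) N ≤ ENNReal.ofReal (L * (t - τ)) := by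
    intro t ht
    rw [← ENNReal.ofReal_toReal (hfin τ t)]
    refine ENNReal.ofReal_le_ofReal ?_
    have h1 := hadd τ t hτ.1 ht.1.le
    have h2 := hrise t ht
    linarith
  set h : ℕ → ℝ := fun n => (b - τ) / (n + 1) with hh
  have hbτ : 0 < b - τ := by linarith [hτ.2]
  have hh0 : ∀ n, 0 < h n := fun n => by positivity
  have hhb : ∀ n, h n ≤ b - τ := fun n => by
    rw [hh]; exact div_le_self hbτ.le (by linarith [(Nat.cast_nonneg n : (0:ℝ) ≤ n)])
  set f : ℕ → Pl → ℝ := fun n x => (-(h n)⁻¹) * StrictBV.cl τ (τ + h n) (v x) + (1 + τ / h n) with hf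
  have hfBV : ∀ n, IsBV N (f n) := fun n => (hv.cl hN _ _).affine _ _
  have hfV : ∀ n, V (f n) N ≤ ENNReal.ofReal L := by
    intro n
    rw [hf, (hv.cl hN _ _).V_affine hN, abs_neg, abs_of_pos (inv_pos.2 (hh0 n))]
    calc _ ≤ ENNReal.ofReal (h n)⁻¹ * ENNReal.ofReal (L * (τ + h n - τ)) := by
          gcongr; exact hVτ _ ⟨by linarith [hh0 n], by linarith [hhb n]⟩
      _ = _ := by
          rw [← ENNReal.ofReal_mul (inv_pos.2 (hh0 n)).le]; congr 1
          have := (hh0 n).ne'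
          field_simp; ring
  set g : Pl → ℝ := {z | v z ≤ τ}.indicator fun _ => (1:ℝ) with hg
  have hgm : Measurable g := measurable_const.indicator (measurableSet_le hv.measu measurable_const)
  have hfx : ∀ n x, v x ≤ τ → f n x = 1 := by
    intro n x hx
    have : StrictBV.cl τ (τ + h n) (v x) = τ := by
      unfold StrictBV.cl; rw [max_eq_left]; exact (min_le_left _ _).trans hx
    simp only [hf, this]; have := (hh0 n).ne'; field_simp; ring
  have hfx' : ∀ n x, τ + h n ≤ v x → f n x = 0 := by
    intro n x hx
    have : StrictBV.cl τ (τ + h n) (v x) = τ + h n := by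
      unfold StrictBV.cl; rw [min_eq_right hx, max_eq_right]; linarith [hh0 n]
    simp only [hf, this]; have := (hh0 n).ne'; field_simp; ring
  have hfx'' : ∀ n x, f n x ∈ Icc (0:ℝ) 1 := by
    intro n x
    have h1 : τ ≤ StrictBV.cl τ (τ + h n) (v x) := le_max_left _ _
    have h2 : StrictBV.cl τ (τ + h n) (v x) ≤ τ + h n :=
      max_le (by linarith [hh0 n]) (min_le_right _ _)
    have : f n x = 1 - (StrictBV.cl τ (τ + h n) (v x) - τ) / h n := by
      simp only [hf]; have := (hh0 n).ne'; field_simp; ring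
    rw [this]
    constructor
    · rw [sub_nonneg, div_le_one (hh0 n)]; linarith
    · have : 0 ≤ (StrictBV.cl τ (τ + h n) (v x) - τ) / h n := div_nonneg (by linarith) (hh0 n).le
      linarith
  have hgx : ∀ x, g x ∈ Icc (0:ℝ) 1 := fun x => by
    by_cases hx : v x ≤ τ <;> simp [hg, hx]
  have hconv : LConv N f g := by
    refine lconv_of_bounded (C := 1) (fun n => (hfBV n).measu) hgm (fun n x => ?_) fun x => ?_
    · have h1 := hfx'' n x; have h2 := hgx x
      rw [abs_le]; constructor <;> linarith [h1.1, h1.2, h2.1, h2.2]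
    · by_cases hx : v x ≤ τ
      · simp [hfx _ _ hx, hg, hx]
      · push Not at hx
        have hlim : Tendsto h atTop (𝓝 0) := tendsto_const_div_atTop_nhds_zero_nat (b - τ) |>.comp
          (tendsto_add_atTop_nat 1) |>.congr fun n => by simp [hh]
        have hev : ∀ᶠ n in atTop, f n x = 0 := by
          filter_upwards [hlim.eventually_lt_const (sub_pos.2 hx)] with n hn
          exact hfx' n x (by linarith)
        have hgz : g x = 0 := by simp [hg, hx]
        rw [hgz]
        exact tendsto_const_nhds.congr' (hev.mono fun n hn => hn.symm)
  have hgloc : LocallyIntegrableOn g N volume :=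
    ((locallyIntegrable_const (1:ℝ)).indicator
      (measurableSet_le hv.measu measurable_const)).locallyIntegrableOn _
  choose νn σn hνn using hfBV
  obtain ⟨ν, σ, hν⟩ := BV.of_tendsto hN hνn hgm hgloc hconv (C := ENNReal.ofReal L)
    ENNReal.ofReal_ne_top fun n => by rw [← (hνn n).V_eq hN subset_rfl]; exact hfV n
  refine ⟨τ, hτ, ν, σ, hν, ?_⟩
  rw [← hν.V_eq hN subset_rfl]
  exact V_lsc hconv (fun n => (hνn n).loc) hgloc (Frequently.of_forall hfV)

/-- A set whose density is at most `κ₁` at all dyadic scales has small density at all scales. -/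
lemma dens_of_dyadic {A : Set Pl} {x : Pl} {R : ℝ} (hR : 0 < R)
    (h : ∀ k : ℕ, volume (A ∩ ball x (R / 2 ^ k)) ≤ ENNReal.ofReal κ₁ * volume (ball x (R / 2 ^ k))) :
    ∀ᶠ r in 𝓝[>] (0:ℝ), volume (A ∩ ball x r) ≤ ENNReal.ofReal κ₀ * volume (ball x r) := by
  filter_upwards [Ioo_mem_nhdsGT hR] with r hr
  obtain ⟨k, hk1, hk2⟩ := exists_nat_pow_near_of_lt_one (x := r / R) (y := 1 / 2)
    (div_pos hr.1 hR) (by rw [div_le_one hR]; exact hr.2.le) (by norm_num) (by norm_num)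
  rw [one_div, inv_pow, lt_div_iff₀ hR] at hk1
  rw [one_div, inv_pow, div_le_iff₀ hR] at hk2
  have e : R / 2 ^ k ≤ 2 * r := by
    have : (2 ^ (k + 1) : ℝ)⁻¹ * R = R / 2 ^ k / 2 := by field_simp; ring
    rw [this] at hk1; linarith
  calc volume (A ∩ ball x r) ≤ volume (A ∩ ball x (R / 2 ^ k)) := by
        gcongr; rw [div_eq_inv_mul]; exact hk2
    _ ≤ ENNReal.ofReal κ₁ * volume (ball x (R / 2 ^ k)) := h k
    _ ≤ ENNReal.ofReal κ₀ * volume (ball x r) := by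
        have := κ₁_pos; have := Real.pi_pos
        rw [vol_ball x (by positivity), vol_ball x hr.1.le, ← ENNReal.ofReal_mul κ₁_pos.le,
          ← ENNReal.ofReal_mul κ₀_pos.le]
        refine ENNReal.ofReal_le_ofReal ?_
        have e2 : (R / 2 ^ k) ^ 2 ≤ (2 * r) ^ 2 := by gcongr
        have e3 : κ₀ = 4 * κ₁ := by unfold κ₁; ring
        rw [e3]
        calc κ₁ * (Real.pi * (R / 2 ^ k) ^ 2) ≤ κ₁ * (Real.pi * (2 * r) ^ 2) := by gcongr
          _ = _ := by ring

lemma portion_compl {A : Set Pl} {x : Pl} {r p : ℝ} (hA : MeasurableSet A) (hp0 : 0 ≤ p) (hp : p ≤ 1)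
    (h : volume (A ∩ ball x r) ≤ ENNReal.ofReal p * volume (ball x r)) :
    ENNReal.ofReal (1 - p) * volume (ball x r) ≤ volume (Aᶜ ∩ ball x r) := by
  have hsplit := measure_inter_add_sdiff (μ := volume) (ball x r) hA
  rw [inter_comm (ball x r) A, Set.sdiff_eq, inter_comm _ Aᶜ] at hsplit
  have hB := vol_ball_ne_top x r
  refine (ENNReal.add_le_add_iff_left (a := ENNReal.ofReal p * volume (ball x r))
    (ENNReal.mul_ne_top ENNReal.ofReal_ne_top hB)).1 ?_
  rw [← add_mul, ← ENNReal.ofReal_add hp0 (by linarith)]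
  have : p + (1 - p) = 1 := by ring
  rw [this, ENNReal.ofReal_one, one_mul]
  calc volume (ball x r) = _ := hsplit.symm
    _ ≤ _ := by gcongr

/-- If both a set and its complement occupy the portion `κ₁` of a ball, then the perimeter of the
set in the ball is comparable to the radius. -/
lemma BV.perimeter_ge {N A : Set Pl} {ν : Measure Pl} {σ : Pl → Pl} (hN : IsOpen N)
    (hA : MeasurableSet A) (h : BV N (A.indicator fun _ => (1:ℝ)) ν σ) {x : Pl} {r : ℝ} (hr : 0 < r)
    (hrN : closedBall x r ⊆ N) (h1 : ENNReal.ofReal κ₁ * volume (ball x r) ≤ volume (A ∩ ball x r))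
    (h2 : ENNReal.ofReal κ₁ * volume (ball x r) ≤ volume (Aᶜ ∩ ball x r)) :
    ENNReal.ofReal (κ₁ ^ 2 * Real.pi / 8 * r) ≤ ν (closedBall x r) := by
  have hj := h.jump_le hN hrN hA hA.compl (c := 1) (fun y hy z hz => by
    rw [indicator_of_mem hy, indicator_of_notMem hz]; simp)
  have hk := κ₁_pos
  have hpi := Real.pi_pos
  have hfin := h.fin
  have hlow : ENNReal.ofReal (κ₁ * (Real.pi * r ^ 2)) * ENNReal.ofReal (κ₁ * (Real.pi * r ^ 2))
      ≤ ENNReal.ofReal (8 * r) * ENNReal.ofReal (Real.pi * r ^ 2) * ν (closedBall x r) := by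
    rw [vol_ball x hr.le, ← ENNReal.ofReal_mul hk.le] at h1 h2
    rw [vol_ball x hr.le, one_mul] at hj
    exact (mul_le_mul' h1 h2).trans hj
  rw [← ENNReal.ofReal_toReal (measure_ne_top ν (closedBall x r)), ← ENNReal.ofReal_mul (by positivity),
    ← ENNReal.ofReal_mul (by positivity), ← ENNReal.ofReal_mul (by positivity),
    ENNReal.ofReal_le_ofReal_iff (by positivity)] at hlow
  rw [← ENNReal.ofReal_toReal (measure_ne_top ν (closedBall x r))]
  refine ENNReal.ofReal_le_ofReal ?_
  have e : 8 * r * (Real.pi * r ^ 2) * (κ₁ ^ 2 * Real.pi / 8 * r)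
      ≤ 8 * r * (Real.pi * r ^ 2) * (ν (closedBall x r)).toReal := by
    refine le_trans (le_of_eq ?_) hlow; ring
  exact le_of_mul_le_mul_left e (by positivity)

/-- Boxing inequality: outside a set of content at most `CB · M / (b - a)`, points around which
`{v ≥ b}` occupies a substantial portion at some scale are points of zero density of `{v ≤ a}`. -/
lemma IsBV.boxing {N : Set Pl} {v : Pl → ℝ} (hN : IsOpen N) (hv : IsBV N v) {a b M : ℝ}
    (hab : a < b) (hM : V (fun x => StrictBV.cl a b (v x)) N < ENNReal.ofReal M) :
    hc {x | (∃ R : ℝ, 0 < R ∧ R ≤ 1 ∧ closedBall x R ⊆ N ∧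
        ENNReal.ofReal κ₁ * volume (ball x R) ≤ volume ({z | b ≤ v z} ∩ ball x R)) ∧
        ¬ Dens0 {z | v z ≤ a} x} ≤ ENNReal.ofReal (CB * (M / (b - a))) := by
  obtain ⟨τ, hτ, ν, σ, hν, hνN⟩ := hv.exists_level hN hab hM
  set A := {z | v z ≤ τ} with hAdef
  have hA : MeasurableSet A := measurableSet_le hv.measu measurable_const
  have hAne : {z | A.indicator (fun _ => (1:ℝ)) z ≠ 0} = A := by
    ext z; by_cases hz : z ∈ A <;> simp [hz]
  have hnull := hν.null_lemma hN fun x => by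
    by_cases hx : x ∈ A <;> simp [hx]
  rw [hAne] at hnull
  have hvit := hc_vitali (ν := ν) (N := N) (c := κ₁ ^ 2 * Real.pi / 8)
    (X := {x | ∃ r, 0 < r ∧ r ≤ 1 ∧ closedBall x r ⊆ N ∧
      ENNReal.ofReal (κ₁ ^ 2 * Real.pi / 8 * r) ≤ ν (closedBall x r)})
    (by have := κ₁_pos; have := Real.pi_pos; positivity) (fun x hx => hx)
  refine (measure_mono (t := _ ∪ _) ?_).trans ((measure_union_le _ _).trans
    ((add_le_add hnull.le hvit).trans ?_))
  · rintro x ⟨⟨R, hR0, hR1, hRN, hRb⟩, hxa⟩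
    have hxA : ¬ Dens0 A x := fun hd => hxa (hd.mono fun z hz => le_trans hz hτ.1)
    by_cases hall : ∀ k : ℕ, volume (A ∩ ball x (R / 2 ^ k))
        ≤ ENNReal.ofReal κ₁ * volume (ball x (R / 2 ^ k))
    · exact Or.inl ⟨hRN (mem_closedBall_self hR0.le), dens_of_dyadic hR0 hall, hxA⟩
    · right
      push Not at hall
      classical
      set k := Nat.find hall with hk
      have hkk := Nat.find_spec hall
      rw [← hk] at hkk
      have hRk : R / 2 ^ k ≤ R := div_le_self hR0.le (one_le_pow₀ (by norm_num))
      have hRk0 : 0 < R / 2 ^ k := by positivity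
      have hsub : closedBall x (R / 2 ^ k) ⊆ N := (closedBall_subset_closedBall hRk).trans hRN
      refine ⟨R / 2 ^ k, hRk0, hRk.trans hR1, hsub, hν.perimeter_ge hN hA hRk0 hsub hkk.le ?_⟩
      rcases Nat.eq_zero_or_pos k with h0 | h0
      · rw [h0, pow_zero, div_one]
        refine hRb.trans (measure_mono (inter_subset_inter_left _ fun z hz hzA => ?_))
        have h1 : b ≤ v z := hz
        have h2 : v z ≤ τ := hzA
        linarith [hτ.2]
      · obtain ⟨k', hk'⟩ := Nat.exists_eq_succ_of_ne_zero h0.ne'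
        have hprev := Nat.find_min hall (m := k') (by rw [← hk]; omega)
        push Not at hprev
        have hup : volume (A ∩ ball x (R / 2 ^ k)) ≤ ENNReal.ofReal (1 / 2) * volume (ball x (R / 2 ^ k)) := by
          calc volume (A ∩ ball x (R / 2 ^ k)) ≤ volume (A ∩ ball x (R / 2 ^ k')) := by
                refine measure_mono (inter_subset_inter_right _ (ball_subset_ball ?_))
                rw [hk']
                exact div_le_div_of_nonneg_left hR0.le (by positivity)
                  (pow_le_pow_right₀ (by norm_num) (Nat.le_succ _))
            _ ≤ ENNReal.ofReal κ₁ * volume (ball x (R / 2 ^ k')) := hprev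
            _ ≤ _ := by
                rw [vol_ball x (by positivity), vol_ball x (by positivity),
                  ← ENNReal.ofReal_mul κ₁_pos.le, ← ENNReal.ofReal_mul (by norm_num)]
                refine ENNReal.ofReal_le_ofReal ?_
                have h4 := κ₀_le
                have e : R / 2 ^ k' = 2 * (R / 2 ^ k) := by rw [hk', pow_succ]; field_simp
                rw [e]
                have : 4 * κ₁ ≤ 1 / 2 := by unfold κ₁; linarith
                calc κ₁ * (Real.pi * (2 * (R / 2 ^ k)) ^ 2)
                    = 4 * κ₁ * (Real.pi * (R / 2 ^ k) ^ 2) := by ring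
                  _ ≤ _ := by gcongr
        have h4 := κ₀_le
        have h5 : κ₁ ≤ 1 - 1 / 2 := by unfold κ₁; linarith
        exact (mul_le_mul_left (ENNReal.ofReal_le_ofReal h5) _).trans
          (portion_compl hA (by norm_num) (by norm_num) hup)
  · rw [zero_add, ENNReal.ofReal_mul CB_pos.le]
    unfold CB
    gcongr

/-! ### Levels of approximate continuity and semicontinuity of truncations -/

lemma not_dens0_cover {A B : Set Pl} {x : Pl} (hA : Dens0 A x) (hB : Dens0 B x)
    (h : A ∪ B = univ) : False := by
  obtain ⟨r, ⟨h1, h2⟩, hr⟩ := (((hA (1 / 4) (by norm_num)).and (hB (1 / 4) (by norm_num))).and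
    self_mem_nhdsWithin).exists
  have hr0 : 0 < r := hr
  have hv := vol_ball x hr0.le
  have h3 : volume (ball x r) ≤ volume (A ∩ ball x r) + volume (B ∩ ball x r) := by
    refine le_trans (measure_mono ?_) (measure_union_le _ _)
    rw [← union_inter_distrib_right, h, univ_inter]
  have h4 := h3.trans (add_le_add h1 h2)
  have hp : 0 < Real.pi * r ^ 2 := by have := Real.pi_pos; positivity
  rw [← add_mul, ← ENNReal.ofReal_add (by norm_num) (by norm_num), hv,
    ← ENNReal.ofReal_mul (by norm_num), ENNReal.ofReal_le_ofReal_iff (by positivity)] at h4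
  linarith

/-- `c` is an approximate limit of `u` at `x`, in the sense of density. -/
def ApLim (u : Pl → ℝ) (x : Pl) (c : ℝ) : Prop := ∀ δ : ℝ, 0 < δ → Dens0 {z | δ ≤ |u z - c|} x

lemma ApLim.neg {u : Pl → ℝ} {x : Pl} {c : ℝ} (h : ApLim u x c) : ApLim (fun z => - u z) x (-c) :=
  fun δ hδ => (h δ hδ).mono fun z hz => by
    have hz' : δ ≤ |-u z - -c| := hz
    have : |-u z - -c| = |u z - c| := by rw [← abs_neg]; congr 1; ring
    rwa [this] at hz'

lemma ApLim.ge {u : Pl → ℝ} {x : Pl} {c t : ℝ} (h : ApLim u x c) (ht : c < t) :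
    Dens0 {z | t ≤ u z} x := (h (t - c) (by linarith)).mono fun z hz => by
  have hz' : t ≤ u z := hz
  show t - c ≤ |u z - c|
  linarith [le_abs_self (u z - c)]

lemma ApLim.le {u : Pl → ℝ} {x : Pl} {c t : ℝ} (h : ApLim u x c) (ht : t < c) :
    Dens0 {z | u z ≤ t} x := (h (c - t) (by linarith)).mono fun z hz => by
  have hz' : u z ≤ t := hz
  show c - t ≤ |u z - c|
  linarith [neg_le_abs (u z - c)]

lemma ApLim.not_le {u : Pl → ℝ} {x : Pl} {c t : ℝ} (h : ApLim u x c) (ht : c < t) :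
    ¬ Dens0 {z | u z ≤ t} x := fun h' => not_dens0_cover (h.ge ht) h' (by
  ext z; simpa using le_total t (u z))

lemma ApLim.not_ge {u : Pl → ℝ} {x : Pl} {c t : ℝ} (h : ApLim u x c) (ht : t < c) :
    ¬ Dens0 {z | t ≤ u z} x := fun h' => not_dens0_cover (h.le ht) h' (by
  ext z; simpa using le_total (u z) t)

lemma V_add {U : Set Pl} {f g : Pl → ℝ} (hf : LocallyIntegrableOn f U volume)
    (hg : LocallyIntegrableOn g U volume) : V (fun x => f x + g x) U ≤ V f U + V g U := by
  refine V_le fun φ hφ h1 => ?_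
  have : ∫ x, (f x + g x) * dvg φ x = (∫ x, f x * dvg φ x) + ∫ x, g x * dvg φ x := by
    rw [← integral_add (integrable_mul_dvg hf hφ) (integrable_mul_dvg hg hφ)]
    congr 1; funext x; ring
  rw [this]
  exact ENNReal.ofReal_add_le.trans (add_le_add (le_V hφ h1) (le_V hφ h1))

lemma V_lsc_eventually {U : Set Pl} {un : ℕ → Pl → ℝ} {u : Pl → ℝ} (h : LConv U un u)
    (hun : ∀ n, LocallyIntegrableOn (un n) U volume) (hu : LocallyIntegrableOn u U volume)
    (hfin : V u U ≠ ⊤) {κ : ℝ≥0∞} (hκ : κ ≠ 0) : ∀ᶠ n in atTop, V u U ≤ V (un n) U + κ := by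
  by_contra hcon
  rw [not_eventually] at hcon
  obtain ⟨n, hn⟩ := hcon.exists
  push Not at hn
  have hκu : κ < V u U := lt_of_le_of_lt le_add_self hn
  have := V_lsc h hun hu (m := V u U - κ) (hcon.mono fun n hn => by
    push Not at hn
    exact ENNReal.le_sub_of_add_le_right (ne_top_of_lt hκu) hn.le)
  exact absurd this (not_le.2 (ENNReal.sub_lt_self hfin (ne_of_gt (zero_le.trans_lt hκu)) hκ))

lemma LConv.comp {U : Set Pl} {un : ℕ → Pl → ℝ} {u : Pl → ℝ} (h : LConv U un u) {f : ℝ → ℝ}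
    (hf : ∀ s t, |f s - f t| ≤ |s - t|) : LConv U (fun n x => f (un n x)) (fun x => f (u x)) := by
  intro F hF hFU
  refine tendsto_of_tendsto_of_tendsto_of_le_of_le tendsto_const_nhds (h F hF hFU)
    (fun _ => zero_le) fun n => lintegral_mono fun x => ?_
  rw [Real.enorm_eq_ofReal_abs, Real.enorm_eq_ofReal_abs]
  exact ENNReal.ofReal_le_ofReal (hf _ _)

lemma abs_min_sub_le (d s t : ℝ) : |min s d - min t d| ≤ |s - t| := by
  simpa using abs_min_sub_min_le_max s d t d

lemma abs_max_sub_le (d s t : ℝ) : |max s d - max t d| ≤ |s - t| := by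
  simpa using abs_max_sub_max_le_max s d t d

/-- Under strict convergence, the truncations do not gain variation near a closed set. -/
lemma trunc_usc {Ω N F : Set Pl} (hΩ : IsOpen Ω) {u : Pl → ℝ} {Z : ℕ → Pl → ℝ} (hu : IsBV Ω u)
    (hZ : ∀ j, IsBV Ω (Z j)) (hconv : LConv Ω Z u)
    (hV : ∀ κ : ℝ≥0∞, κ ≠ 0 → ∀ᶠ j in atTop, V (Z j) Ω ≤ V u Ω + κ) {d e : ℝ} (hde : d ≤ e)
    {μ : Measure Pl} {τ : Pl → Pl} (hμ : BV Ω (fun x => cl d e (u x)) μ τ)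
    (hN : IsOpen N) (hNF : N ⊆ F) (hF : IsClosed F) (hFΩ : F ⊆ Ω) {κ : ℝ≥0∞} (hκ : κ ≠ 0) :
    ∀ᶠ j in atTop, V (fun x => cl d e (Z j x)) N ≤ μ F + 4 * κ := by
  rcases eq_or_ne κ ⊤ with rfl | hκt
  · simp
  have hUo : IsOpen (Ω \ F) := hΩ.sdiff hF
  have hUΩ : Ω \ F ⊆ Ω := sdiff_subset
  have hmin := fun v (hv : IsBV Ω v) => hv.min (IsBV.const Ω d) hΩ
  have hmax := fun v (hv : IsBV Ω v) => hv.max (IsBV.const Ω e) hΩ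
  have e1 := V_lsc_eventually (hconv.comp (abs_min_sub_le d))
    (fun n => (hmin _ (hZ n)).loc) (hmin u hu).loc ((hmin u hu).V_ne_top hΩ subset_rfl) hκ
  have e2 := V_lsc_eventually (hconv.comp (abs_max_sub_le e))
    (fun n => (hmax _ (hZ n)).loc) (hmax u hu).loc ((hmax u hu).V_ne_top hΩ subset_rfl) hκ
  have e3 := V_lsc_eventually ((hconv.comp (abs_cl_sub_le d e)).mono hUΩ)
    (fun n => (((hZ n).cl hΩ d e).mono hUo hUΩ).loc) ((hu.cl hΩ d e).mono hUo hUΩ).loc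
    ((hu.cl hΩ d e).V_ne_top hUo hUΩ) hκ
  filter_upwards [e1, e2, e3, hV κ hκ] with j h1 h2 h3 h4
  have h5 := (hZ j).V_three hΩ hde
  have hsub : V u Ω ≤ V (fun x => min (u x) d) Ω + V (fun x => cl d e (u x)) Ω
      + V (fun x => max (u x) e) Ω := by
    have he : u = fun x => ((min (u x) d + cl d e (u x)) + max (u x) e) + (-(d + e)) := by
      funext x
      unfold cl
      rcases le_total (u x) d with h1 | h1 <;> rcases le_total (u x) e with h2 | h2 <;>
        simp [*]
      all_goals linarith
    conv_lhs => rw [he]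
    have l1 := (hmin u hu).loc
    have l2 := (hu.cl hΩ d e).loc
    have l3 := (hmax u hu).loc
    refine (V_add ((l1.add l2).add l3) (IsBV.const Ω _).loc).trans ?_
    rw [V_const _ hΩ, add_zero]
    refine (V_add (l1.add l2) l3).trans ?_
    gcongr
    exact V_add l1 l2
  obtain ⟨ν', σ', hν'⟩ := (hZ j).cl hΩ d e
  have hfin := hμ.fin
  have hfin' := hν'.fin
  have h6 : V (fun x => cl d e (Z j x)) N + V (fun x => cl d e (Z j x)) (Ω \ F)
      ≤ V (fun x => cl d e (Z j x)) Ω := by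
    rw [hν'.V_eq hN (hNF.trans hFΩ), hν'.V_eq hUo hUΩ, hν'.V_eq hΩ subset_rfl,
      ← measure_union (disjoint_sdiff_right.mono_left hNF) hUo.measurableSet]
    exact measure_mono (union_subset (hNF.trans hFΩ) hUΩ)
  have h7 : V (fun x => cl d e (u x)) Ω ≤ μ F + V (fun x => cl d e (u x)) (Ω \ F) := by
    rw [hμ.V_eq hΩ subset_rfl, hμ.V_eq hUo hUΩ]
    refine (measure_mono ?_).trans (measure_union_le _ _)
    intro x hx; by_cases h : x ∈ F <;> simp [h, hx]
  have f1 := (hmin _ (hZ j)).V_ne_top hΩ subset_rfl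
  have f2 := (hmax _ (hZ j)).V_ne_top hΩ subset_rfl
  have f3 := ((hZ j).cl hΩ d e).V_ne_top hUo hUΩ
  set a := V (fun x => min (Z j x) d) Ω
  set b := V (fun x => max (Z j x) e) Ω
  set c := V (fun x => cl d e (Z j x)) (Ω \ F)
  set y := V (fun x => cl d e (Z j x)) N
  refine (ENNReal.add_le_add_iff_left (a := a + b + c) (by finiteness)).1 ?_
  calc a + b + c + y = a + (y + c) + b := by ring
    _ ≤ V (Z j) Ω := le_trans (by gcongr) h5
    _ ≤ V u Ω + κ := h4
    _ ≤ (a + κ) + (μ F + (c + κ)) + (b + κ) + κ := by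
        gcongr
        refine hsub.trans ?_
        gcongr
        exact h7.trans (by gcongr)
    _ = _ := by ring

/-- Large approximate limits occur only on a set of small content. -/
lemma exists_tail {Ω K : Set Pl} (hΩ : IsOpen Ω) {u : Pl → ℝ} (hu : IsBV Ω u) (hK : IsCompact K)
    (hKΩ : K ⊆ Ω) {c : Pl → ℝ} (hc' : ∀ x ∈ K, ApLim u x (c x)) {ε : ℝ} (hε : 0 < ε) :
    ∃ T : ℝ, 0 < T ∧ hc {x ∈ K | T < c x} ≤ ENNReal.ofReal ε := by
  obtain ⟨R', hR'0, hR'⟩ := hK.exists_cthickening_subset_open hΩ hKΩ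
  set R := min R' 1 with hR
  have hR0 : 0 < R := by positivity
  set F := cthickening R K
  have hFΩ : F ⊆ Ω := (cthickening_mono (min_le_left _ _) K).trans hR'
  have hFc : IsCompact F := hK.cthickening
  have hint : IntegrableOn u F volume := hu.loc.integrableOn_compact_subset hFΩ hFc
  set I := ∫⁻ x in F, ‖u x‖ₑ with hI
  have hIt : I ≠ ⊤ := hint.2.ne
  set M := (V u Ω).toReal + 1
  have hM0 : 0 < M := by positivity
  have hpi := Real.pi_pos
  have hCB := CB_pos
  set T := 4 * I.toReal / (Real.pi * R ^ 2) + 2 * CB * M / ε + 1 with hT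
  have hT0 : 0 < T := by positivity
  refine ⟨T, hT0, ?_⟩
  have hVlt : V (fun x => cl (-T) (-(T / 2)) (-u x)) Ω < ENNReal.ofReal M := by
    refine (hu.neg.V_cl_le_self hΩ (by linarith)).trans_lt ?_
    rw [hu.V_neg hΩ, ENNReal.lt_ofReal_iff_toReal_lt (hu.V_ne_top hΩ subset_rfl)]
    linarith
  refine (measure_mono ?_).trans ((hu.neg.boxing hΩ (by linarith) hVlt).trans ?_)
  · rintro x ⟨hxK, hxT⟩
    refine ⟨⟨R, hR0, min_le_right _ _, (closedBall_subset_cthickening hxK R).trans hFΩ, ?_⟩, ?_⟩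
    · have hmeas : MeasurableSet {z | T / 2 ≤ u z} := measurableSet_le measurable_const hu.measu
      have hb : volume ({z | T / 2 ≤ u z} ∩ ball x R) ≤ ENNReal.ofReal (1 / 2) * volume (ball x R) := by
        have hmk := mul_meas_ge_le_lintegral (μ := volume.restrict F) (f := fun z => ‖u z‖ₑ)
          hu.measu.enorm (ENNReal.ofReal (T / 2))
        have hle : volume ({z | T / 2 ≤ u z} ∩ ball x R)
            ≤ volume.restrict F {z | ENNReal.ofReal (T / 2) ≤ ‖u z‖ₑ} := by
          rw [Measure.restrict_apply (measurableSet_le measurable_const hu.measu.enorm)]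
          refine measure_mono fun z hz => ⟨?_, ?_⟩
          · have h1 : T / 2 ≤ u z := hz.1
            show _ ≤ ‖u z‖ₑ
            rw [Real.enorm_eq_ofReal_abs]
            exact ENNReal.ofReal_le_ofReal (h1.trans (le_abs_self _))
          · exact closedBall_subset_cthickening hxK R (ball_subset_closedBall hz.2)
        have h2 : ENNReal.ofReal (T / 2) * volume ({z | T / 2 ≤ u z} ∩ ball x R) ≤ I :=
          le_trans (by gcongr) hmk
        have h3 : I ≤ ENNReal.ofReal (T / 2) * (ENNReal.ofReal (1 / 2) * volume (ball x R)) := by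
          rw [vol_ball x hR0.le, ← ENNReal.ofReal_mul (by norm_num), ← ENNReal.ofReal_mul (by positivity),
            ← ENNReal.ofReal_toReal hIt]
          refine ENNReal.ofReal_le_ofReal ?_
          have h4 : 4 * I.toReal / (Real.pi * R ^ 2) ≤ T := by
            have : 0 ≤ 2 * CB * M / ε := by positivity
            linarith
          rw [div_le_iff₀ (by positivity)] at h4
          linarith
        exact (ENNReal.mul_le_mul_iff_right (by simpa using hT0) ENNReal.ofReal_ne_top).1 (h2.trans h3)
      have h4 := κ₀_le
      have h5 : κ₁ ≤ 1 - 1 / 2 := by unfold κ₁; linarith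
      refine ((mul_le_mul_left (ENNReal.ofReal_le_ofReal h5) _).trans
          (portion_compl hmeas (by norm_num) (by norm_num) hb)).trans
          (measure_mono (inter_subset_inter_left _ fun z hz => ?_))
      have hz' : ¬ T / 2 ≤ u z := hz
      show -(T / 2) ≤ - u z
      linarith
    · have := (hc' x hxK).not_ge hxT
      simpa using this
  · refine ENNReal.ofReal_le_ofReal ?_
    have h1 : 2 * CB * M / ε ≤ T := by
      have : 0 ≤ 4 * I.toReal / (Real.pi * R ^ 2) := by positivity
      linarith
    rw [div_le_iff₀ hε] at h1
    have h2 : -(T / 2) - -T = T / 2 := by ring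
    rw [h2, ← mul_div_assoc, div_le_iff₀ (by positivity)]
    linarith

/-! ### Upper bounds at a single level -/

/-- Egorov-type selection: density zero becomes uniformly small density on a compact set carrying
most of the measure. -/
lemma exists_good {K A : Set Pl} (hK : IsCompact K) {μ : Measure Pl} [IsFiniteMeasure μ]
    (h : ∀ᵐ x ∂μ, x ∈ K → Dens0 A x) {η : ℝ≥0∞} (hη : η ≠ 0) :
    ∃ P, IsCompact P ∧ P ⊆ K ∧ μ (K \ P) < η ∧ ∃ ρ : ℝ, 0 < ρ ∧ ∀ p ∈ P, ∀ r, 0 < r → r ≤ ρ →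
      volume (A ∩ ball p r) ≤ ENNReal.ofReal κ₀ * volume (ball p r) := by
  set Q : ℕ → Set Pl := fun n => {x ∈ K | ∀ r : ℝ, 0 < r → r ≤ 1 / ((n : ℝ) + 1) →
    volume (A ∩ ball x r) ≤ ENNReal.ofReal κ₁ * volume (ball x r)} with hQ
  have hQmono : Monotone Q := fun m n hmn x hx => ⟨hx.1, fun r hr hrn => hx.2 r hr
    (hrn.trans (one_div_le_one_div_of_le (by positivity) (by exact_mod_cast Nat.succ_le_succ hmn)))⟩
  have hlim : Tendsto (fun n => μ (K \ closure (Q n))) atTop (𝓝 (μ (⋂ n, K \ closure (Q n)))) :=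
    tendsto_measure_iInter_atTop
      (fun n => (hK.measurableSet.diff isClosed_closure.measurableSet).nullMeasurableSet)
      (fun m n hmn => sdiff_subset_sdiff_right (closure_mono (hQmono hmn))) ⟨0, by finiteness⟩
  have hnull : μ (⋂ n, K \ closure (Q n)) = 0 := by
    refine measure_mono_null (fun x hx => ?_) h
    rw [mem_iInter] at hx
    intro hxd
    have hev := hxd (hx 0).1 κ₁ κ₁_pos
    obtain ⟨b, hb, hsub⟩ := (mem_nhdsGT_iff_exists_Ioo_subset).1 hev
    obtain ⟨n, hn⟩ := exists_nat_one_div_lt (show (0:ℝ) < b from hb)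
    exact (hx n).2 (subset_closure ⟨(hx 0).1, fun r hr hrn => hsub ⟨hr, hrn.trans_lt hn⟩⟩)
  rw [hnull] at hlim
  obtain ⟨n, hn⟩ := (hlim.eventually_lt_const (pos_iff_ne_zero.2 hη)).exists
  have hcl : closure (Q n) ⊆ K := hK.isClosed.closure_subset_iff.2 fun x hx => hx.1
  refine ⟨closure (Q n), hK.of_isClosed_subset isClosed_closure hcl, hcl, hn,
    1 / ((n : ℝ) + 1) / 2, by positivity, fun p hp r hr hrρ => ?_⟩
  obtain ⟨q, hq, hpq⟩ := Metric.mem_closure_iff.1 hp r hr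
  have h1 := hq.2 (2 * r) (by linarith) (by linarith)
  have hk := κ₁_pos
  calc volume (A ∩ ball p r) ≤ volume (A ∩ ball q (2 * r)) := by
        refine measure_mono (inter_subset_inter_right _ (ball_subset_ball' ?_)); linarith
    _ ≤ ENNReal.ofReal κ₁ * volume (ball q (2 * r)) := h1
    _ = ENNReal.ofReal κ₀ * volume (ball p r) := by
        rw [vol_ball q (by linarith), vol_ball p hr.le, ← ENNReal.ofReal_mul hk.le,
          ← ENNReal.ofReal_mul κ₀_pos.le]
        congr 1; unfold κ₁; ring

section

variable {Ω K : Set Pl} {u : Pl → ℝ} {c : Pl → ℝ}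

/-- Points with approximate limit below `t` are scarce near sets where `u ≥ s > t` predominates. -/
lemma close_points (hΩ : IsOpen Ω) (hu : IsBV Ω u) (hc' : ∀ x ∈ K, ApLim u x (c x)) {t s : ℝ}
    (hts : t < s) {μ : Measure Pl} {τ : Pl → Pl} (hμ : BV Ω (fun x => cl t s (u x)) μ τ) {P : Set Pl}
    (hP : IsCompact P) (hPΩ : P ⊆ Ω) (hμP : μ P = 0) {ρ : ℝ} (hρ : 0 < ρ)
    (hPρ : ∀ p ∈ P, ∀ r, 0 < r → r ≤ ρ →
      volume ({z | u z < s} ∩ ball p r) ≤ ENNReal.ofReal κ₀ * volume (ball p r)) {η : ℝ} (hη : 0 < η) :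
    ∃ r₁ : ℝ, 0 < r₁ ∧ hc {x ∈ K | c x < t ∧ x ∈ thickening r₁ P} ≤ ENNReal.ofReal (CB * (η / (s - t))) := by
  have hfin := hμ.fin
  obtain ⟨N', hPN', hN', hlt⟩ := P.exists_isOpen_lt_add (μ := μ) (by finiteness)
    (ε := ENNReal.ofReal η) (by simpa using hη)
  rw [hμP, zero_add] at hlt
  set N := N' ∩ Ω with hNdef
  have hN : IsOpen N := hN'.inter hΩ
  have hNΩ : N ⊆ Ω := inter_subset_right
  obtain ⟨r₀, hr₀, hr₀N⟩ := hP.exists_cthickening_subset_open hN (subset_inter hPN' hPΩ)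
  set r₁ := min (min (r₀ / 3) ρ) (1 / 2) with hr₁
  have hr₁0 : 0 < r₁ := by positivity
  have hr₁r₀ : r₁ ≤ r₀ / 3 := (min_le_left _ _).trans (min_le_left _ _)
  have hr₁ρ : r₁ ≤ ρ := (min_le_left _ _).trans (min_le_right _ _)
  have hr₁1 : r₁ ≤ 1 / 2 := min_le_right _ _
  have hVlt : V (fun x => cl t s (u x)) N < ENNReal.ofReal η := by
    rw [hμ.V_eq hN hNΩ]; exact (measure_mono inter_subset_left).trans_lt hlt
  refine ⟨r₁, hr₁0, (measure_mono ?_).trans ((hu.mono hN hNΩ).boxing hN hts hVlt)⟩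
  rintro x ⟨hxK, hxt, hxP⟩
  obtain ⟨p, hp, hxp⟩ := mem_thickening_iff.1 hxP
  refine ⟨⟨2 * r₁, by linarith, by linarith, ?_, ?_⟩, (hc' x hxK).not_le hxt⟩
  · refine Subset.trans ?_ hr₀N
    refine (closedBall_subset_closedBall' ?_).trans (closedBall_subset_cthickening hp r₀)
    linarith
  · have hmeas : MeasurableSet {z | u z < s} := measurableSet_lt hu.measu measurable_const
    have hk := κ₀_le
    have hk0 := κ₀_pos
    have h1 := portion_compl hmeas κ₀_pos.le (by linarith) (hPρ p hp r₁ hr₁0 hr₁ρ)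
    calc ENNReal.ofReal κ₁ * volume (ball x (2 * r₁)) ≤ ENNReal.ofReal (1 - κ₀) * volume (ball p r₁) := by
          rw [vol_ball x (by linarith), vol_ball p hr₁0.le, ← ENNReal.ofReal_mul κ₁_pos.le,
            ← ENNReal.ofReal_mul (by linarith)]
          refine ENNReal.ofReal_le_ofReal ?_
          have hpi := Real.pi_pos
          have e : κ₁ * (Real.pi * (2 * r₁) ^ 2) = κ₀ * (Real.pi * r₁ ^ 2) := by unfold κ₁; ring
          rw [e]
          gcongr
          linarith
      _ ≤ volume ({z | u z < s}ᶜ ∩ ball p r₁) := h1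
      _ ≤ volume ({z | s ≤ u z} ∩ ball x (2 * r₁)) := by
          refine measure_mono (inter_subset_inter (fun z hz => ?_) (ball_subset_ball' ?_))
          · simpa using hz
          · rw [dist_comm]; linarith

/-- Where the truncation of `u` has little variation, the approximating functions stay below the
upper level at most points with approximate limit below the lower level. -/
lemma far_points (hΩ : IsOpen Ω) (hu : IsBV Ω u) {Z : ℕ → Pl → ℝ}
    (hZ : ∀ j, IsBV Ω (Z j)) (hconv : LConv Ω Z u)
    (hV : ∀ κ : ℝ≥0∞, κ ≠ 0 → ∀ᶠ j in atTop, V (Z j) Ω ≤ V u Ω + κ)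
    (hK : IsCompact K) (hKΩ : K ⊆ Ω) (hc' : ∀ x ∈ K, ApLim u x (c x)) {d h : ℝ} (hh : 0 < h)
    {μ : Measure Pl} {τ : Pl → Pl} (hμ : BV Ω (fun x => cl d (d + 3 * h) (u x)) μ τ) {η : ℝ}
    (hμK : μ K < ENNReal.ofReal η) :
    ∀ᶠ j in atTop, hc {x ∈ K | c x < d ∧ ¬ Dens0 {z | d + 3 * h ≤ Z j z} x}
      ≤ ENNReal.ofReal (CB * (η / h)) + ENNReal.ofReal (CB * (η / h)) := by
  have hfin := hμ.fin
  obtain ⟨N', hKN', hN', hlt⟩ := K.exists_isOpen_lt_of_lt (μ := μ) _ hμK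
  obtain ⟨r₀, hr₀, hr₀N⟩ := hK.exists_cthickening_subset_open (hN'.inter hΩ) (subset_inter hKN' hKΩ)
  set R := min (r₀ / 2) 1 with hR
  have hR0 : 0 < R := by positivity
  set N := thickening r₀ K with hNdef
  set F := cthickening r₀ K with hFdef
  have hNF : N ⊆ F := thickening_subset_cthickening _ _
  have hN : IsOpen N := isOpen_thickening
  have hFΩ : F ⊆ Ω := hr₀N.trans inter_subset_right
  have hNΩ : N ⊆ Ω := hNF.trans hFΩ
  have hFc : IsCompact F := hK.cthickening
  have hμF : μ F < ENNReal.ofReal η := (measure_mono (hr₀N.trans inter_subset_left)).trans_lt hlt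
  have hRN : ∀ x ∈ K, closedBall x R ⊆ N := fun x hx =>
    (closedBall_subset_ball (lt_of_le_of_lt (min_le_left _ _) (by linarith))).trans
      (ball_subset_thickening hx r₀)
  obtain ⟨κ, hκ0, hκ⟩ := ENNReal.lt_iff_exists_add_pos_lt.1 hμF
  have hu1 : V (fun x => cl d (d + h) (u x)) N < ENNReal.ofReal η := by
    refine ((hu.mono hN hNΩ).V_cl_le hN le_rfl (by linarith) (show d + h ≤ d + 3 * h by linarith)).trans_lt ?_
    rw [hμ.V_eq hN hNΩ]
    exact (measure_mono hNF).trans_lt hμF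
  have hbox1 := (hu.mono hN hNΩ).boxing hN (show d < d + h by linarith) hu1
  have husc := trunc_usc hΩ hu hZ hconv hV (show d ≤ d + 3 * h by linarith) hμ hN hNF hFc.isClosed hFΩ
    (κ := κ / 4) (by
      have : (κ : ℝ≥0∞) ≠ 0 := by simpa using hκ0.ne'
      simpa using this)
  have hk1 := κ₁_pos
  have hpi := Real.pi_pos
  have hsmall : ∀ᶠ j in atTop, volume ({z | h ≤ |Z j z - u z|} ∩ F)
      ≤ ENNReal.ofReal (κ₁ * (Real.pi * R ^ 2)) := by
    have h0 : (0:ℝ≥0∞) < ENNReal.ofReal h * ENNReal.ofReal (κ₁ * (Real.pi * R ^ 2)) := by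
      rw [← ENNReal.ofReal_mul hh.le]; simp only [ENNReal.ofReal_pos]; positivity
    filter_upwards [(hconv F hFc hFΩ).eventually_lt_const h0] with j hj
    have hm : Measurable fun z => ‖Z j z - u z‖ₑ := ((hZ j).measu.sub hu.measu).enorm
    have hmk := mul_meas_ge_le_lintegral (μ := volume.restrict F) hm (ENNReal.ofReal h)
    rw [Measure.restrict_apply (measurableSet_le measurable_const hm)] at hmk
    have e : {z | h ≤ |Z j z - u z|} = {z | ENNReal.ofReal h ≤ ‖Z j z - u z‖ₑ} := by
      ext z; simp only [mem_ofPred_eq]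
      rw [Real.enorm_eq_ofReal_abs, ENNReal.ofReal_le_ofReal_iff (abs_nonneg _)]
    rw [e]
    exact (ENNReal.mul_le_mul_iff_right (by simpa using hh) ENNReal.ofReal_ne_top).1
      (hmk.trans hj.le)
  filter_upwards [husc, hsmall] with j hj1 hj2
  have hZN := (hZ j).mono hN hNΩ
  have hZ1 : V (fun x => cl (-(d + 3 * h)) (-(d + 2 * h)) (- Z j x)) N < ENNReal.ofReal η := by
    have e : (fun x => cl (-(d + 3 * h)) (-(d + 2 * h)) (- Z j x))
        = fun x => - cl (d + 2 * h) (d + 3 * h) (Z j x) := by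
      funext x; exact cl_neg _ _ _ (by linarith)
    rw [e, (hZN.cl hN _ _).V_neg hN]
    refine (hZN.V_cl_le hN (show d ≤ d + 2 * h by linarith) (by linarith) le_rfl).trans_lt ?_
    refine hj1.trans_lt ?_
    rwa [ENNReal.mul_div_cancel (by norm_num) (by norm_num)]
  have hbox2 := hZN.neg.boxing hN (show -(d + 3 * h) < -(d + 2 * h) by linarith) hZ1
  have e1 : d + h - d = h := by ring
  have e2 : -(d + 2 * h) - -(d + 3 * h) = h := by ring
  rw [e1] at hbox1
  rw [e2] at hbox2
  refine (measure_mono (t := _ ∪ _) ?_).trans ((measure_union_le _ _).trans (add_le_add hbox1 hbox2))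
  rintro x ⟨hxK, hxd, hxZ⟩
  by_cases hport : ENNReal.ofReal κ₁ * volume (ball x R) ≤ volume ({z | d + h ≤ u z} ∩ ball x R)
  · exact Or.inl ⟨⟨R, hR0, min_le_right _ _, hRN x hxK, hport⟩, (hc' x hxK).not_le hxd⟩
  · right
    push Not at hport
    refine ⟨⟨R, hR0, min_le_right _ _, hRN x hxK, ?_⟩, ?_⟩
    · have hmeas : MeasurableSet {z | d + 2 * h < Z j z} := measurableSet_lt measurable_const (hZ j).measu
      have hb : volume ({z | d + 2 * h < Z j z} ∩ ball x R)
          ≤ ENNReal.ofReal (κ₁ + κ₁) * volume (ball x R) := by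
        rw [ENNReal.ofReal_add hk1.le hk1.le, add_mul]
        nth_rewrite 2 [vol_ball x hR0.le]
        rw [← ENNReal.ofReal_mul hk1.le]
        refine le_trans ((measure_mono ?_).trans (measure_union_le _ _)) (add_le_add hport.le hj2)
        rintro z ⟨hz, hzB⟩
        have hz' : d + 2 * h < Z j z := hz
        by_cases hzu : d + h ≤ u z
        · exact Or.inl ⟨hzu, hzB⟩
        · refine Or.inr ⟨?_, hNF (hRN x hxK (ball_subset_closedBall hzB))⟩
          push Not at hzu
          show h ≤ |Z j z - u z|
          linarith [le_abs_self (Z j z - u z)]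
      have h4 := κ₀_le
      have h5 : κ₁ + κ₁ ≤ 1 := by unfold κ₁; linarith
      have h6 : κ₁ ≤ 1 - (κ₁ + κ₁) := by unfold κ₁; linarith
      refine ((mul_le_mul_left (ENNReal.ofReal_le_ofReal h6) _).trans
          (portion_compl hmeas (by linarith) h5 hb)).trans
          (measure_mono (inter_subset_inter_left _ fun z hz => ?_))
      have hz' : ¬ d + 2 * h < Z j z := hz
      show -(d + 2 * h) ≤ - Z j z
      linarith
    · simpa only [neg_le_neg_iff] using hxZ

end

/-! ### Upper bounds at all levels -/

/-- The variation measure does not charge the points around which `u` predominantly equals `k`. -/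
lemma BV.ae_not_small_sub {Ω : Set Pl} {g : Pl → ℝ} {μ : Measure Pl} {τ : Pl → Pl} (hΩ : IsOpen Ω)
    (h : BV Ω g μ τ) (k : ℝ) : ∀ᵐ x ∂μ, ¬ ∀ᶠ r in 𝓝[>] (0:ℝ),
      volume ({z | g z ≠ k} ∩ ball x r) ≤ ENNReal.ofReal κ₀ * volume (ball x r) := by
  have h1 := (h.affine 1 (-k)).ae_not_small hΩ
  have e : {z | 1 * g z + -k ≠ 0} = {z | g z ≠ k} := by
    ext z
    have : 1 * g z + -k = 0 ↔ g z = k := by constructor <;> intro h <;> linarith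
    exact not_congr this
  simp only [abs_one, ENNReal.ofReal_one, one_smul, e] at h1
  exact h1

section

variable {Ω K : Set Pl} {u : Pl → ℝ} {c : Pl → ℝ}

/-- At points of `K` with approximate limit below `t`, the sets `{Z j ≥ t + 5h}` have density zero up
to small content. The points are split according to whether they are close to a compact set `P` on
which `{u < t + h}` has uniformly small density and which carries most of the variation of `u`
between the levels `t + 2h` and `t + 5h` on `K`. -/
lemma single_level (hΩ : IsOpen Ω) (hu : IsBV Ω u) {Z : ℕ → Pl → ℝ}
    (hZ : ∀ j, IsBV Ω (Z j)) (hconv : LConv Ω Z u)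
    (hV : ∀ κ : ℝ≥0∞, κ ≠ 0 → ∀ᶠ j in atTop, V (Z j) Ω ≤ V u Ω + κ)
    (hK : IsCompact K) (hKΩ : K ⊆ Ω) (hc' : ∀ x ∈ K, ApLim u x (c x)) (t : ℝ) {h ε : ℝ} (hh : 0 < h)
    (hε : 0 < ε) :
    ∀ᶠ j in atTop, hc {x ∈ K | c x < t ∧ ¬ Dens0 {z | t + 5 * h ≤ Z j z} x} ≤ ENNReal.ofReal ε := by
  have hCB := CB_pos
  set η := ε * h / (3 * CB) with hηdef
  have hη : 0 < η := by positivity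
  have hηε : CB * (η / h) = ε / 3 := by rw [hηdef]; field_simp
  obtain ⟨μ₁, τ₁, hμ₁⟩ := hu.cl hΩ t (t + h)
  obtain ⟨μ₂, τ₂, hμ₂⟩ := hu.cl hΩ (t + 2 * h) (t + 2 * h + 3 * h)
  have := hμ₁.fin
  have := hμ₂.fin
  have hae : ∀ᵐ x ∂μ₂, x ∈ K → Dens0 {z | u z < t + h} x := by
    filter_upwards [hμ₂.ae_not_small_sub hΩ (t + 2 * h)] with x hx hxK
    rcases lt_or_ge (c x) (t + 2 * h) with hlt | hge
    · refine absurd ((((hc' x hxK).ge hlt).mono fun z hz => ?_) κ₀ κ₀_pos) hx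
      have hz' : cl (t + 2 * h) (t + 2 * h + 3 * h) (u z) ≠ t + 2 * h := hz
      show t + 2 * h ≤ u z
      by_contra! hcon
      refine hz' ?_
      unfold cl
      rw [max_eq_left]
      exact (min_le_left _ _).trans hcon.le
    · exact ((hc' x hxK).le (show t + h < c x by linarith)).mono fun z hz => by
        have hz2 : u z < t + h := hz
        show u z ≤ t + h
        exact hz2.le
  obtain ⟨P, hP, hPK, hμP, ρ, hρ, hPρ⟩ := exists_good hK hae (η := ENNReal.ofReal η) (by simpa using hη)
  have hμ₁P : μ₁ P = 0 := by
    refine measure_mono_null (fun p hp => ?_) (hμ₁.ae_not_small_sub hΩ (t + h))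
    intro hcon
    refine hcon ?_
    filter_upwards [Ioo_mem_nhdsGT hρ] with r hr
    refine (measure_mono (inter_subset_inter_left _ fun z hz => ?_)).trans (hPρ p hp r hr.1 hr.2.le)
    have hz' : cl t (t + h) (u z) ≠ t + h := hz
    show u z < t + h
    by_contra! hcon
    refine hz' ?_
    unfold cl
    rw [min_eq_right hcon, max_eq_right (by linarith)]
  obtain ⟨r₁, hr₁, hclose⟩ := close_points hΩ hu hc' (show t < t + h by linarith) hμ₁ hP
    (hPK.trans hKΩ) hμ₁P hρ hPρ hη
  set K' := K \ thickening r₁ P with hK'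
  have hK'c : IsCompact K' := hK.diff isOpen_thickening
  have hK'K : K' ⊆ K := sdiff_subset
  have hμK' : μ₂ K' < ENNReal.ofReal η :=
    (measure_mono (sdiff_subset_sdiff_right (self_subset_thickening hr₁ P))).trans_lt hμP
  have hfar := far_points hΩ hu hZ hconv hV hK'c (hK'K.trans hKΩ) (fun x hx => hc' x (hK'K hx)) hh
    hμ₂ hμK'
  have e1 : t + h - t = h := by ring
  have e2 : t + 2 * h + 3 * h = t + 5 * h := by ring
  rw [e1, hηε] at hclose
  filter_upwards [hfar] with j hj
  rw [hηε, e2] at hj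
  refine (measure_mono (t := _ ∪ _) ?_).trans ((measure_union_le _ _).trans
    ((add_le_add hclose hj).trans_eq ?_))
  · rintro x ⟨hxK, hxt, hxZ⟩
    by_cases hx : x ∈ thickening r₁ P
    · exact Or.inl ⟨hxK, hxt, hx⟩
    · exact Or.inr ⟨⟨hxK, hx⟩, by linarith, hxZ⟩
  · rw [← ENNReal.ofReal_add (by positivity) (by positivity),
      ← ENNReal.ofReal_add (by positivity) (by positivity)]
    congr 1; ring

/-- Upper half of the theorem for a single convergent sequence: up to small content, the sets
`{Z j > c + δ}` have zero density at the points of `K` once `j` is large. -/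
lemma upper_bound (hΩ : IsOpen Ω) (hu : IsBV Ω u) {Z : ℕ → Pl → ℝ}
    (hZ : ∀ j, IsBV Ω (Z j)) (hconv : LConv Ω Z u)
    (hV : ∀ κ : ℝ≥0∞, κ ≠ 0 → ∀ᶠ j in atTop, V (Z j) Ω ≤ V u Ω + κ)
    (hK : IsCompact K) (hKΩ : K ⊆ Ω) (hc' : ∀ x ∈ K, ApLim u x (c x)) {δ ε : ℝ} (hδ : 0 < δ)
    (hε : 0 < ε) :
    ∀ᶠ j in atTop, hc {x ∈ K | ¬ Dens0 {z | c x + δ < Z j z} x} ≤ ENNReal.ofReal ε := by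
  obtain ⟨T₁, hT₁0, hT₁⟩ := exists_tail hΩ hu hK hKΩ hc' (show 0 < ε / 3 by positivity)
  obtain ⟨T₂, hT₂0, hT₂⟩ := exists_tail hΩ hu.neg hK hKΩ (c := fun x => - c x)
    (fun x hx => (hc' x hx).neg) (show 0 < ε / 3 by positivity)
  set h := δ / 6 with hhdef
  have hh : 0 < h := by positivity
  set m := ⌊(T₁ + T₂) / h⌋₊ + 1 with hm
  have hlev : ∀ᶠ j in atTop, ∀ k ∈ Finset.range m,
      hc {x ∈ K | c x < -T₂ + ((k : ℝ) + 1) * h ∧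
        ¬ Dens0 {z | -T₂ + ((k : ℝ) + 1) * h + 5 * h ≤ Z j z} x} ≤ ENNReal.ofReal (ε / 3 / m) := by
    rw [Finset.eventually_all]
    intro k _
    exact single_level hΩ hu hZ hconv hV hK hKΩ hc' _ hh (by positivity)
  filter_upwards [hlev] with j hj
  have hsub : {x ∈ K | ¬ Dens0 {z | c x + δ < Z j z} x} ⊆ ({x ∈ K | T₁ < c x} ∪ {x ∈ K | T₂ < - c x}) ∪
      ⋃ k ∈ Finset.range m, {x ∈ K | c x < -T₂ + ((k : ℝ) + 1) * h ∧
        ¬ Dens0 {z | -T₂ + ((k : ℝ) + 1) * h + 5 * h ≤ Z j z} x} := by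
    rintro x ⟨hxK, hx⟩
    by_cases h1 : T₁ < c x
    · exact Or.inl (Or.inl ⟨hxK, h1⟩)
    by_cases h2 : T₂ < - c x
    · exact Or.inl (Or.inr ⟨hxK, h2⟩)
    push Not at h1 h2
    have h0 : 0 ≤ (c x + T₂) / h := div_nonneg (by linarith) hh.le
    set k := ⌊(c x + T₂) / h⌋₊ with hk
    have hk1 : (k : ℝ) * h ≤ c x + T₂ := (le_div_iff₀ hh).1 (Nat.floor_le h0)
    have hk2 : c x + T₂ < ((k : ℝ) + 1) * h := (div_lt_iff₀ hh).1 (Nat.lt_floor_add_one _)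
    right
    refine mem_iUnion₂.2 ⟨k, ?_, hxK, by linarith, fun hd => hx (hd.mono fun z hz => ?_)⟩
    · rw [Finset.mem_range, hm, Nat.lt_succ_iff]
      refine Nat.floor_le_floor ?_
      gcongr
    · have hz' : c x + δ < Z j z := hz
      show -T₂ + ((k : ℝ) + 1) * h + 5 * h ≤ Z j z
      have : δ = 6 * h := by rw [hhdef]; ring
      linarith
  refine (measure_mono hsub).trans ((measure_union_le _ _).trans ?_)
  have hsum : hc (⋃ k ∈ Finset.range m, {x ∈ K | c x < -T₂ + ((k : ℝ) + 1) * h ∧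
        ¬ Dens0 {z | -T₂ + ((k : ℝ) + 1) * h + 5 * h ≤ Z j z} x}) ≤ ENNReal.ofReal (ε / 3) := by
    refine (measure_biUnion_finset_le _ _).trans ((Finset.sum_le_sum hj).trans_eq ?_)
    rw [Finset.sum_const, Finset.card_range, nsmul_eq_mul, ← ENNReal.ofReal_natCast,
      ← ENNReal.ofReal_mul (by positivity)]
    congr 1
    have : (m : ℝ) ≠ 0 := by rw [hm]; positivity
    field_simp
  calc _ ≤ (ENNReal.ofReal (ε / 3) + ENNReal.ofReal (ε / 3)) + ENNReal.ofReal (ε / 3) :=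
        add_le_add ((measure_union_le _ _).trans (add_le_add hT₁ hT₂)) hsum
    _ = _ := by
        rw [← ENNReal.ofReal_add (by positivity) (by positivity),
          ← ENNReal.ofReal_add (by positivity) (by positivity)]
        congr 1; ring

end

/-! ### Majorants of a tail of the sequence -/

/-- Pointwise maximum of `z 0, …, z n`. -/
def psup (z : ℕ → Pl → ℝ) : ℕ → Pl → ℝ
  | 0 => z 0
  | n + 1 => fun x => max (psup z n x) (z (n + 1) x)

lemma psup_mono (z : ℕ → Pl → ℝ) (x : Pl) : Monotone fun n => psup z n x :=
  monotone_nat_of_le_succ fun _ => le_max_left _ _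

lemma le_psup (z : ℕ → Pl → ℝ) (n : ℕ) (x : Pl) : z n x ≤ psup z n x := by
  cases n with
  | zero => exact le_rfl
  | succ n => exact le_max_right _ _

lemma psup_sub_le {z : ℕ → Pl → ℝ} {u : Pl → ℝ} (huz : ∀ i x, u x ≤ z i x) (n : ℕ) (x : Pl) :
    psup z n x - u x ≤ ∑ i ∈ Finset.range (n + 1), (z i x - u x) := by
  induction n with
  | zero => simp [psup]
  | succ n ih =>
    rw [Finset.sum_range_succ]
    have h0 : 0 ≤ ∑ i ∈ Finset.range (n + 1), (z i x - u x) :=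
      Finset.sum_nonneg fun i _ => sub_nonneg.2 (huz i x)
    have h1 := huz (n + 1) x
    show max (psup z n x) (z (n + 1) x) - u x ≤ _
    rcases max_cases (psup z n x) (z (n + 1) x) with ⟨h, _⟩ | ⟨h, _⟩ <;> rw [h] <;> linarith

lemma enorm_psup_sub_le {z : ℕ → Pl → ℝ} {u : Pl → ℝ} (huz : ∀ i x, u x ≤ z i x) (n : ℕ) (x : Pl) :
    ‖psup z n x - u x‖ₑ ≤ ∑' i, ‖z i x - u x‖ₑ := by
  have h0 : u x ≤ psup z n x := (huz n x).trans (le_psup z n x)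
  calc ‖psup z n x - u x‖ₑ = ENNReal.ofReal (psup z n x - u x) := by
        rw [Real.enorm_eq_ofReal_abs, abs_of_nonneg (sub_nonneg.2 h0)]
    _ ≤ ENNReal.ofReal (∑ i ∈ Finset.range (n + 1), (z i x - u x)) :=
        ENNReal.ofReal_le_ofReal (psup_sub_le huz n x)
    _ = ∑ i ∈ Finset.range (n + 1), ‖z i x - u x‖ₑ := by
        rw [ENNReal.ofReal_sum_of_nonneg fun i _ => sub_nonneg.2 (huz i x)]
        refine Finset.sum_congr rfl fun i _ => ?_
        rw [Real.enorm_eq_ofReal_abs, abs_of_nonneg (sub_nonneg.2 (huz i x))]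
    _ ≤ _ := ENNReal.sum_le_tsum _

/-- A sequence above `u` with summable `L¹` distance and summable excess of variation has a
supremum of finite variation. The hypothesis `hmod` controls the variation lost in the minima,
which is what makes submodularity of the variation effective. -/
lemma sup_majorant {Ω : Set Pl} (hΩ : IsOpen Ω) {u : Pl → ℝ} (hu : IsBV Ω u) {z : ℕ → Pl → ℝ}
    (hz : ∀ i, IsBV Ω (z i)) (huz : ∀ i x, u x ≤ z i x) {e : ℕ → ℝ≥0∞} (hE : ∑' i, e i ≠ ⊤)
    (hmod : ∀ i v, LocallyIntegrableOn v Ω volume → (∀ x, u x ≤ v x ∧ v x ≤ z i x) →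
      V u Ω ≤ V v Ω + e i)
    (hL : ∀ i, ∫⁻ x in Ω, ‖z i x - u x‖ₑ ≤ e i) (hV : ∀ i, V (z i) Ω ≤ V u Ω + e i) :
    ∃ Z, IsBV Ω Z ∧ ∫⁻ x in Ω, ‖Z x - u x‖ₑ ≤ ∑' i, e i ∧ V Z Ω ≤ V u Ω + 2 * ∑' i, e i ∧
      ∀ᵐ x ∂volume.restrict Ω, ∀ i, z i x ≤ Z x := by
  have hpBV : ∀ n, IsBV Ω (psup z n) := by
    intro n
    induction n with
    | zero => exact hz 0
    | succ n ih => exact ih.max (hz (n + 1)) hΩ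
  have hpV : ∀ n, V (psup z n) Ω ≤ V u Ω + 2 * ∑ i ∈ Finset.range (n + 1), e i := by
    intro n
    induction n with
    | zero =>
      refine (hV 0).trans ?_
      gcongr
      simp only [Finset.range_one, Finset.sum_singleton, zero_add, two_mul]
      exact le_self_add
    | succ n ih =>
      have h1 := (hpBV n).V_submod (hz (n + 1)) hΩ
      have h2 := hmod (n + 1) (fun x => min (psup z n x) (z (n + 1) x))
        ((hpBV n).min (hz (n + 1)) hΩ).loc
        (fun x => ⟨le_min ((huz n x).trans (le_psup z n x)) (huz _ x), min_le_right _ _⟩)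
      have h3 := hV (n + 1)
      have hfin : V u Ω ≠ ⊤ := hu.V_ne_top hΩ subset_rfl
      rw [Finset.sum_range_succ]
      set S := ∑ i ∈ Finset.range (n + 1), e i
      show V (fun x => max (psup z n x) (z (n + 1) x)) Ω ≤ _
      refine (ENNReal.add_le_add_iff_right hfin).1 ?_
      calc _ ≤ V (fun x => max (psup z n x) (z (n + 1) x)) Ω
            + (V (fun x => min (psup z n x) (z (n + 1) x)) Ω + e (n + 1)) := by gcongr
        _ = V (fun x => max (psup z n x) (z (n + 1) x)) Ω
            + V (fun x => min (psup z n x) (z (n + 1) x)) Ω + e (n + 1) := by rw [add_assoc]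
        _ ≤ (V u Ω + 2 * S) + (V u Ω + e (n + 1)) + e (n + 1) := by
            exact add_le_add (h1.trans (add_le_add ih h3)) le_rfl
        _ = _ := by ring
  set S : Pl → ℝ≥0∞ := fun x => ∑' i, ‖z i x - u x‖ₑ with hS
  have hSm : ∫⁻ x in Ω, S x ≤ ∑' i, e i := by
    have hm : ∀ i, Measurable fun x => ‖z i x - u x‖ₑ := fun i => ((hz i).measu.sub hu.measu).enorm
    rw [hS, lintegral_tsum fun i => (hm i).aemeasurable]
    exact ENNReal.tsum_le_tsum hL
  have hSfin : ∀ᵐ x ∂volume.restrict Ω, S x < ⊤ := by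
    refine ae_lt_top (Measurable.tsum fun i => ((hz i).measu.sub hu.measu).enorm) ?_
    exact ne_top_of_le_ne_top hE hSm
  set Z : Pl → ℝ := fun x => ⨆ n, psup z n x with hZ
  have hZm : Measurable Z := Measurable.iSup fun n => (hpBV n).measu
  have hbdd : ∀ x, S x < ⊤ → BddAbove (range fun n => psup z n x) := by
    intro x hx
    refine ⟨u x + (S x).toReal, ?_⟩
    rintro _ ⟨n, rfl⟩
    have h := enorm_psup_sub_le huz n x
    rw [Real.enorm_eq_ofReal_abs] at h
    have h' := (ENNReal.ofReal_le_iff_le_toReal hx.ne).1 h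
    show psup z n x ≤ u x + (S x).toReal
    linarith [le_abs_self (psup z n x - u x)]
  have hlim : ∀ x, S x < ⊤ → Tendsto (fun n => psup z n x) atTop (𝓝 (Z x)) := fun x hx =>
    tendsto_atTop_ciSup (psup_mono z x) (hbdd x hx)
  have hZu : ∀ x, S x < ⊤ → ‖Z x - u x‖ₑ ≤ S x := by
    intro x hx
    refine le_of_tendsto ((hlim x hx).sub_const (u x)).enorm ?_
    exact Eventually.of_forall fun n => enorm_psup_sub_le huz n x
  have hZL : ∫⁻ x in Ω, ‖Z x - u x‖ₑ ≤ ∑' i, e i := by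
    refine (lintegral_mono_ae ?_).trans hSm
    filter_upwards [hSfin] with x hx using hZu x hx
  have hZloc : LocallyIntegrableOn Z Ω volume := by
    have hi : IntegrableOn (fun x => Z x - u x) Ω volume :=
      ⟨(hZm.sub hu.measu).aestronglyMeasurable, lt_of_le_of_lt hZL hE.lt_top⟩
    have := hi.locallyIntegrableOn.add hu.loc
    have e : ((fun x => Z x - u x) + u) = Z := by funext x; simp
    rwa [e] at this
  have hconv : LConv Ω (psup z) Z := by
    have h0 : Tendsto (fun n => ∫⁻ x in Ω, ‖psup z n x - Z x‖ₑ) atTop (𝓝 (∫⁻ x in Ω, (0 : ℝ≥0∞))) := by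
      refine tendsto_lintegral_of_dominated_convergence S
        (fun n => ((hpBV n).measu.sub hZm).enorm) (fun n => ?_)
        (ne_top_of_le_ne_top hE hSm) ?_
      · filter_upwards [hSfin] with x hx
        refine le_trans ?_ (hZu x hx)
        have h1 : psup z n x ≤ Z x := le_ciSup (hbdd x hx) n
        have h2 : u x ≤ psup z n x := (huz n x).trans (le_psup z n x)
        rw [Real.enorm_eq_ofReal_abs, Real.enorm_eq_ofReal_abs, abs_of_nonpos (by linarith),
          abs_of_nonneg (by linarith)]
        exact ENNReal.ofReal_le_ofReal (by linarith)
      · filter_upwards [hSfin] with x hx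
        have := ((hlim x hx).sub_const (Z x)).enorm
        simpa using this
    rw [lintegral_zero] at h0
    intro F _ hF
    exact tendsto_of_tendsto_of_tendsto_of_le_of_le tendsto_const_nhds h0 (fun _ => zero_le)
      (fun n => lintegral_mono_set hF)
  have hpV' : ∀ n, V (psup z n) Ω ≤ V u Ω + 2 * ∑' i, e i := fun n =>
    (hpV n).trans (by gcongr; exact ENNReal.sum_le_tsum _)
  refine ⟨Z, ?_, hZL, ?_, ?_⟩
  · choose νn σn hn using hpBV
    refine BV.of_tendsto hΩ hn hZm hZloc hconv (C := V u Ω + 2 * ∑' i, e i) ?_ fun n => ?_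
    · have := hu.V_ne_top hΩ subset_rfl
      finiteness
    · rw [← (hn n).V_eq hΩ subset_rfl]; exact hpV' n
  · exact V_lsc hconv (fun n => (hpBV n).loc) hZloc (Eventually.of_forall hpV').frequently
  · filter_upwards [hSfin] with x hx i
    exact (le_psup z i x).trans (le_ciSup (hbdd x hx) i)

/-- The majorants `Z j` of the tails of a sequence converging fast to `u` converge strictly. -/
lemma majorant {Ω : Set Pl} (hΩ : IsOpen Ω) {u : Pl → ℝ} (hu : IsBV Ω u) {w : ℕ → Pl → ℝ}
    (hw : ∀ i, IsBV Ω (w i))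
    (hmod : ∀ i v, LocallyIntegrableOn v Ω volume →
      ∫⁻ x in Ω, ‖v x - u x‖ₑ ≤ ∫⁻ x in Ω, ‖w i x - u x‖ₑ → V u Ω ≤ V v Ω + 2⁻¹ ^ i)
    (hL : ∀ i, ∫⁻ x in Ω, ‖w i x - u x‖ₑ ≤ 2⁻¹ ^ i) (hV : ∀ i, V (w i) Ω ≤ V u Ω + 2⁻¹ ^ i) :
    ∃ Z : ℕ → Pl → ℝ, (∀ j, IsBV Ω (Z j)) ∧ LConv Ω Z u ∧
      (∀ κ : ℝ≥0∞, κ ≠ 0 → ∀ᶠ j in atTop, V (Z j) Ω ≤ V u Ω + κ) ∧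
      ∀ j i, j ≤ i → ∀ᵐ x ∂volume.restrict Ω, w i x ≤ Z j x := by
  have hfin : V u Ω ≠ ⊤ := hu.V_ne_top hΩ subset_rfl
  have hE : ∀ j, ∑' i, (2 * (2⁻¹ : ℝ≥0∞) ^ (j + i)) = 4 * 2⁻¹ ^ j := by
    intro j
    simp_rw [pow_add]
    rw [ENNReal.tsum_mul_left, ENNReal.tsum_mul_left, ENNReal.tsum_geometric,
      ENNReal.one_sub_inv_two, inv_inv]
    ring
  have h0 : Tendsto (fun j : ℕ => (2⁻¹ : ℝ≥0∞) ^ j) atTop (𝓝 0) :=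
    ENNReal.tendsto_pow_atTop_nhds_zero_of_lt_one (by simp)
  have key : ∀ j, ∃ Z, IsBV Ω Z ∧ ∫⁻ x in Ω, ‖Z x - u x‖ₑ ≤ 4 * 2⁻¹ ^ j ∧
      V Z Ω ≤ V u Ω + 2 * (4 * 2⁻¹ ^ j) ∧
      ∀ᵐ x ∂volume.restrict Ω, ∀ i, max (w (j + i) x) (u x) ≤ Z x := by
    intro j
    have hb : ∀ i x, ‖max (w (j + i) x) (u x) - u x‖ₑ ≤ ‖w (j + i) x - u x‖ₑ := by
      intro i x
      rw [Real.enorm_eq_ofReal_abs, Real.enorm_eq_ofReal_abs]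
      refine ENNReal.ofReal_le_ofReal ?_
      rcases max_cases (w (j + i) x) (u x) with ⟨h, _⟩ | ⟨h, _⟩ <;> rw [h]
      simp
    have hone : ∀ i : ℕ, (2⁻¹ : ℝ≥0∞) ^ i ≤ 2 * 2⁻¹ ^ i := fun i => by
      rw [two_mul]; exact le_self_add
    rw [← hE j]
    refine sup_majorant hΩ hu (z := fun i x => max (w (j + i) x) (u x))
      (fun i => (hw _).max hu hΩ) (fun i x => le_max_right _ _) ?_ ?_ ?_ ?_
    · rw [hE]; finiteness
    · intro i v hv hvz
      refine (hmod (j + i) v hv (lintegral_mono fun x => le_trans ?_ (hb i x))).trans ?_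
      · rw [Real.enorm_eq_ofReal_abs, Real.enorm_eq_ofReal_abs]
        refine ENNReal.ofReal_le_ofReal ?_
        have := hvz x
        rw [abs_of_nonneg (by linarith), abs_of_nonneg (by linarith)]
        linarith
      · gcongr; exact hone _
    · intro i
      exact ((lintegral_mono (hb i)).trans (hL _)).trans (hone _)
    · intro i
      have h1 := (hw (j + i)).V_submod hu hΩ
      have h2 := hmod (j + i) (fun x => min (w (j + i) x) (u x)) ((hw _).min hu hΩ).loc
        (lintegral_mono fun x => ?_)
      · have h3 := hV (j + i)
        refine (ENNReal.add_le_add_iff_right hfin).1 ?_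
        calc _ ≤ V (fun x => max (w (j + i) x) (u x)) Ω
              + (V (fun x => min (w (j + i) x) (u x)) Ω + 2⁻¹ ^ (j + i)) := by gcongr
          _ = V (fun x => max (w (j + i) x) (u x)) Ω
              + V (fun x => min (w (j + i) x) (u x)) Ω + 2⁻¹ ^ (j + i) := by rw [add_assoc]
          _ ≤ (V u Ω + 2⁻¹ ^ (j + i)) + V u Ω + 2⁻¹ ^ (j + i) := by
              exact add_le_add (h1.trans (add_le_add h3 le_rfl)) le_rfl
          _ = _ := by ring
      · rw [Real.enorm_eq_ofReal_abs, Real.enorm_eq_ofReal_abs]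
        refine ENNReal.ofReal_le_ofReal ?_
        rcases min_cases (w (j + i) x) (u x) with ⟨h, _⟩ | ⟨h, _⟩ <;> simp only [h]
        · exact le_rfl
        · simp
  choose Z hZ hZL hZV hZw using key
  refine ⟨Z, hZ, ?_, ?_, ?_⟩
  · intro F _ hF
    have h4 : Tendsto (fun j : ℕ => 4 * (2⁻¹ : ℝ≥0∞) ^ j) atTop (𝓝 0) := by
      simpa using ENNReal.Tendsto.const_mul h0 (Or.inr (by simp : (4 : ℝ≥0∞) ≠ ⊤))
    exact tendsto_of_tendsto_of_tendsto_of_le_of_le tendsto_const_nhds h4 (fun _ => zero_le)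
      (fun n => (lintegral_mono_set hF).trans (hZL n))
  · intro κ hκ
    have h8 : Tendsto (fun j : ℕ => 2 * (4 * (2⁻¹ : ℝ≥0∞) ^ j)) atTop (𝓝 0) := by
      have := ENNReal.Tendsto.const_mul h0 (Or.inr (by simp : (8 : ℝ≥0∞) ≠ ⊤))
      rw [mul_zero] at this
      refine this.congr fun j => ?_
      ring
    filter_upwards [h8.eventually_le_const (pos_iff_ne_zero.2 hκ)] with j hj
    exact (hZV j).trans (by gcongr)
  · intro j i hji
    obtain ⟨k, rfl⟩ := Nat.exists_eq_add_of_le hji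
    filter_upwards [hZw j] with x hx
    exact (le_max_left _ _).trans (hx k)

/-! ### Capacity and Hausdorff content -/

lemma ae_summable_norm {E : Type*} [NormedAddCommGroup E] [MeasurableSpace E] [BorelSpace E]
    {F : ℕ → Pl → E} (hF : ∀ n, Measurable (F n))
    (hs : ∑' n, ∫⁻ x, ‖F n x‖ₑ ≠ ⊤) : ∀ᵐ x, Summable fun n => ‖F n x‖ := by
  rw [← lintegral_tsum fun n => (hF n).enorm.aemeasurable] at hs
  filter_upwards [ae_lt_top (Measurable.tsum fun n => (hF n).enorm) hs] with x hx
  refine (ENNReal.summable_toReal hx.ne).congr fun n => ?_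
  simp

lemma lintegral_tsum_le {E : Type*} [NormedAddCommGroup E] [MeasurableSpace E] [BorelSpace E]
    {F : ℕ → Pl → E} (hF : ∀ n, Measurable (F n)) :
    ∫⁻ x, ‖∑' n, F n x‖ₑ ≤ ∑' n, ∫⁻ x, ‖F n x‖ₑ := by
  rw [← lintegral_tsum fun n => (hF n).enorm.aemeasurable]
  exact lintegral_mono fun x => enorm_tsum_le_tsum_enorm

lemma integrable_tsum {E : Type*} [NormedAddCommGroup E] [NormedSpace ℝ E]
    [FiniteDimensional ℝ E] [MeasurableSpace E] [BorelSpace E] {F : ℕ → Pl → E} (hF : ∀ n, Measurable (F n))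
    (hs : ∑' n, ∫⁻ x, ‖F n x‖ₑ ≠ ⊤) : Integrable (fun x => ∑' n, F n x) := by
  have := FiniteDimensional.complete ℝ E
  have := FiniteDimensional.proper ℝ E
  exact ⟨(Measurable.tsum hF).aestronglyMeasurable, (lintegral_tsum_le hF).trans_lt hs.lt_top⟩

/-- Gradient of the bump function `bumpAt x ρ`. -/
def gradBump (x : Pl) (ρ : ℝ) (y : Pl) : Pl := gradient (bumpAt x ρ) y

lemma gradBump_apply (x : Pl) (ρ : ℝ) (y : Pl) (l : Fin 2) :
    gradBump x ρ y l = fderiv ℝ (bumpAt x ρ) y (EuclideanSpace.single l (1 : ℝ)) := by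
  unfold gradBump gradient
  rw [← InnerProductSpace.toDual_symm_apply, EuclideanSpace.inner_single_right]
  simp

lemma norm_gradBump_le (x y : Pl) {ρ : ℝ} (hρ : 0 < ρ) : ‖gradBump x ρ y‖ ≤ gradC / ρ := by
  unfold gradBump gradient
  rw [LinearIsometryEquiv.norm_map]
  exact bumpAt_fderiv x y hρ

lemma gradBump_zero {x y : Pl} {ρ : ℝ} (hρ : 0 < ρ) (hy : y ∉ closedBall x (3 / 2 * ρ)) :
    gradBump x ρ y = 0 := by
  unfold gradBump gradient
  rw [fderiv_of_notMem_tsupport (𝕜 := ℝ) fun h => hy (bumpAt_tsupport hρ h), map_zero]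

lemma measurable_gradBump (x : Pl) (ρ : ℝ) : Measurable (gradBump x ρ) :=
  ((InnerProductSpace.toDual ℝ Pl).symm.continuous.comp
    ((bumpAt_contDiff x ρ).continuous_fderiv one_ne_zero)).measurable

lemma lintegral_enorm_le_closedBall {E : Type*} [NormedAddCommGroup E] {f : Pl → E} {x : Pl} {R M : ℝ}
    (h0 : ∀ y ∉ closedBall x R, f y = 0) (h1 : ∀ y, ‖f y‖ ≤ M) :
    ∫⁻ y, ‖f y‖ₑ ≤ ENNReal.ofReal M * volume (closedBall x R) := by
  rw [← setLIntegral_eq_of_support_subset (s := closedBall x R)]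
  · rw [← setLIntegral_const]
    refine lintegral_mono fun y => ?_
    rw [← ofReal_norm]
    exact ENNReal.ofReal_le_ofReal (h1 y)
  · intro y hy
    by_contra hcon
    exact hy (by simp [h0 y hcon])

/-- Constant comparing the capacity of a ball of radius at most one with its radius. -/
def capC : ℝ := (1 + gradC) * (Real.pi * (9 / 4))

lemma capC_pos : 0 < capC := by have := gradC_pos; unfold capC; positivity

lemma lintegral_bump_add_le (x : Pl) {ρ : ℝ} (hρ : 0 < ρ) (hρ1 : ρ ≤ 1) :
    (∫⁻ y, ‖bumpAt x ρ y‖ₑ) + ∫⁻ y, ‖gradBump x ρ y‖ₑ ≤ ENNReal.ofReal capC * ENNReal.ofReal ρ := by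
  have hg := gradC_pos
  have h1 : ∫⁻ y, ‖bumpAt x ρ y‖ₑ ≤ ENNReal.ofReal 1 * volume (closedBall x (3 / 2 * ρ)) :=
    lintegral_enorm_le_closedBall
      (fun y hy => bumpAt_zero hρ fun h => hy (ball_subset_closedBall h)) fun y => by
        rw [Real.norm_of_nonneg (bumpAt_nonneg _ _ _)]; exact bumpAt_le_one _ _ _
  have h2 : ∫⁻ y, ‖gradBump x ρ y‖ₑ
      ≤ ENNReal.ofReal (gradC / ρ) * volume (closedBall x (3 / 2 * ρ)) :=
    lintegral_enorm_le_closedBall (fun y hy => gradBump_zero hρ hy) fun y => norm_gradBump_le x y hρ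
  rw [vol_closedBall x (by positivity), ← ENNReal.ofReal_mul (by positivity)] at h1 h2
  refine (add_le_add h1 h2).trans ?_
  rw [← ENNReal.ofReal_add (by positivity) (by positivity), ← ENNReal.ofReal_mul capC_pos.le]
  refine ENNReal.ofReal_le_ofReal ?_
  have e : gradC / ρ * (Real.pi * (3 / 2 * ρ) ^ 2) = gradC * (Real.pi * (9 / 4)) * ρ := by
    field_simp; ring
  rw [e, capC]
  have hpi := Real.pi_pos
  have : ρ ^ 2 ≤ ρ := by nlinarith
  nlinarith

/-- Countable sums of bumps are Sobolev functions when their norms are summable. -/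
lemma isW11_tsum {c : ℕ → Pl} {r : ℕ → ℝ}
    (h1 : ∑' n, ∫⁻ x, ‖bumpAt (c n) (r n) x‖ₑ ≠ ⊤)
    (h2 : ∑' n, ∫⁻ x, ‖gradBump (c n) (r n) x‖ₑ ≠ ⊤) :
    IsW11 (fun x => ∑' n, bumpAt (c n) (r n) x) (fun x => ∑' n, gradBump (c n) (r n) x) := by
  have hbm : ∀ n, Measurable (bumpAt (c n) (r n)) := fun n =>
    (bumpAt_contDiff _ _).continuous.measurable
  have hgm : ∀ n, Measurable (gradBump (c n) (r n)) := fun n => measurable_gradBump _ _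
  refine ⟨integrable_tsum hbm h1, integrable_tsum hgm h2, fun φ hφ hφc l => ?_⟩
  set e : Pl := EuclideanSpace.single l (1 : ℝ) with he
  have hdc : Continuous fun x => fderiv ℝ φ x e :=
    (hφ.continuous_fderiv one_ne_zero).clm_apply continuous_const
  obtain ⟨M, hM⟩ : ∃ M, ∀ x, ‖fderiv ℝ φ x e‖ ≤ M := by
    refine hdc.bounded_above_of_compact_support ?_
    exact (hφc.fderiv_apply (𝕜 := ℝ) e)
  obtain ⟨M', hM'⟩ : ∃ M, ∀ x, ‖φ x‖ ≤ M := hφ.continuous.bounded_above_of_compact_support hφc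
  have hM0 : ∀ x, ‖fderiv ℝ φ x e‖ₑ ≤ ENNReal.ofReal M := fun x => by
    rw [← ofReal_norm]; exact ENNReal.ofReal_le_ofReal (hM x)
  have hM0' : ∀ x, ‖φ x‖ₑ ≤ ENNReal.ofReal M' := fun x => by
    rw [← ofReal_norm]; exact ENNReal.ofReal_le_ofReal (hM' x)
  have hL : ∫ x, (∑' n, bumpAt (c n) (r n) x) * fderiv ℝ φ x e
      = ∑' n, ∫ x, bumpAt (c n) (r n) x * fderiv ℝ φ x e := by
    rw [← integral_tsum]
    · simp_rw [tsum_mul_right]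
    · exact fun n => ((hbm n).mul hdc.measurable).aestronglyMeasurable
    · refine ne_top_of_le_ne_top (ENNReal.mul_ne_top h1 (ENNReal.ofReal_ne_top (r := M))) ?_
      rw [← ENNReal.tsum_mul_right]
      refine ENNReal.tsum_le_tsum fun n => ?_
      rw [← lintegral_mul_const _ (hbm n).enorm]
      refine lintegral_mono fun x => ?_
      rw [enorm_mul]
      gcongr
      exact hM0 x
  have hR : ∫ x, φ x * (∑' n, gradBump (c n) (r n) x) l
      = ∑' n, ∫ x, φ x * gradBump (c n) (r n) x l := by
    have hgl : ∀ n, Measurable fun x => gradBump (c n) (r n) x l := fun n => by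
      have := hgm n
      fun_prop
    rw [← integral_tsum]
    · refine integral_congr_ae ?_
      filter_upwards [ae_summable_norm hgm h2] with x hx
      rw [tsum_mul_left]
      congr 1
      exact ContinuousLinearMap.map_tsum (EuclideanSpace.proj l : Pl →L[ℝ] ℝ) hx.of_norm
    · exact fun n => (hφ.continuous.measurable.mul (hgl n)).aestronglyMeasurable
    · refine ne_top_of_le_ne_top (ENNReal.mul_ne_top (ENNReal.ofReal_ne_top (r := M')) h2) ?_
      rw [← ENNReal.tsum_mul_left]
      refine ENNReal.tsum_le_tsum fun n => ?_
      rw [← lintegral_const_mul _ (hgm n).enorm]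
      refine lintegral_mono fun x => ?_
      rw [enorm_mul]
      refine mul_le_mul' (hM0' x) ?_
      rw [← ofReal_norm, ← ofReal_norm]
      exact ENNReal.ofReal_le_ofReal (PiLp.norm_apply_le _ l)
  rw [hL, hR, ← tsum_neg]
  refine tsum_congr fun n => ?_
  have hip := integral_mul_dvg_smooth (bumpAt_contDiff (c n) (r n))
    (isTest_smul_vec hφ hφc (subset_univ _) e)
  simp_rw [dvg_smul_vec hφ] at hip
  rw [hip]
  congr 1
  refine integral_congr_ae (Eventually.of_forall fun x => ?_)
  dsimp only
  rw [gradBump_apply, map_smul, smul_eq_mul]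

lemma capa1_mono {A B : Set Pl} (h : A ⊆ B) : capa1 A ≤ capa1 B := by
  unfold capa1
  refine le_iInf fun u => le_iInf fun W => le_iInf fun hW => le_iInf fun ⟨U, hU, hBU, h1⟩ => ?_
  exact iInf_le_of_le u (iInf_le_of_le W (iInf_le_of_le hW
    (iInf_le_of_le ⟨U, hU, h.trans hBU, h1⟩ le_rfl)))

lemma capa1_iUnion_ball_le {c : ℕ → Pl} {r : ℕ → ℝ} (hr : ∀ n, 0 < r n)
    (hs : ∑' n, ENNReal.ofReal (r n) ≤ 1) :
    capa1 (⋃ n, ball (c n) (r n)) ≤ ENNReal.ofReal capC * ∑' n, ENNReal.ofReal (r n) := by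
  have hr1 : ∀ n, r n ≤ 1 := fun n => by
    have := (ENNReal.le_tsum n).trans hs
    exact ENNReal.ofReal_le_one.1 this
  have hb : (∑' n, ∫⁻ x, ‖bumpAt (c n) (r n) x‖ₑ) + ∑' n, ∫⁻ x, ‖gradBump (c n) (r n) x‖ₑ
      ≤ ENNReal.ofReal capC * ∑' n, ENNReal.ofReal (r n) := by
    rw [← ENNReal.tsum_add, ← ENNReal.tsum_mul_left]
    exact ENNReal.tsum_le_tsum fun n => lintegral_bump_add_le _ (hr n) (hr1 n)
  have hfin : ENNReal.ofReal capC * ∑' n, ENNReal.ofReal (r n) ≠ ⊤ :=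
    ENNReal.mul_ne_top ENNReal.ofReal_ne_top (ne_top_of_le_ne_top ENNReal.one_ne_top hs)
  have h1 : ∑' n, ∫⁻ x, ‖bumpAt (c n) (r n) x‖ₑ ≠ ⊤ :=
    ne_top_of_le_ne_top hfin (le_self_add.trans hb)
  have h2 : ∑' n, ∫⁻ x, ‖gradBump (c n) (r n) x‖ₑ ≠ ⊤ :=
    ne_top_of_le_ne_top hfin (le_add_self.trans hb)
  have hbm : ∀ n, Measurable (bumpAt (c n) (r n)) := fun n =>
    (bumpAt_contDiff _ _).continuous.measurable
  have hgm : ∀ n, Measurable (gradBump (c n) (r n)) := fun n => measurable_gradBump _ _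
  have hW := isW11_tsum h1 h2
  -- where the series of bumps diverges, its `tsum` is the junk value `0` and must be replaced
  classical
  set w : Pl → ℝ := fun x => if Summable (fun n => bumpAt (c n) (r n) x) then
    ∑' n, bumpAt (c n) (r n) x else 1 with hw
  have hae : w =ᵐ[volume] fun x => ∑' n, bumpAt (c n) (r n) x := by
    filter_upwards [ae_summable_norm hbm h1] with x hx
    simp only [hw]
    rw [if_pos hx.of_norm]
  have hW' : IsW11 w (fun x => ∑' n, gradBump (c n) (r n) x) := by
    refine ⟨hW.1.congr hae.symm, hW.2.1, fun φ hφ hφc l => ?_⟩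
    rw [← hW.2.2 φ hφ hφc l]
    refine integral_congr_ae ?_
    filter_upwards [hae] with x hx
    rw [hx]
  have hge : ∀ x ∈ ⋃ n, ball (c n) (r n), 1 ≤ w x := by
    intro x hx
    obtain ⟨n, hn⟩ := mem_iUnion.1 hx
    simp only [hw]
    split_ifs with hsx
    · rw [← bumpAt_one (hr n) (ball_subset_closedBall hn)]
      exact hsx.le_tsum n fun m _ => bumpAt_nonneg _ _ _
    · exact le_rfl
  unfold capa1
  refine iInf_le_of_le w (iInf_le_of_le _ (iInf_le_of_le hW' (iInf_le_of_le
    ⟨_, isOpen_iUnion fun n => isOpen_ball, subset_rfl, hge⟩ ?_)))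
  refine le_trans (add_le_add ?_ ?_) hb
  · refine le_trans (le_of_eq (lintegral_congr_ae ?_)) (lintegral_tsum_le hbm)
    filter_upwards [hae] with x hx
    rw [hx]; rfl
  · exact lintegral_tsum_le hgm

/-- A set of small Hausdorff content lies in an open set of small capacity. -/
lemma exists_open_capa1_lt {ε : ℝ} (hε : 0 < ε) : ∃ η : ℝ, 0 < η ∧ ∀ X : Set Pl,
    hc X < ENNReal.ofReal η → ∃ G, IsOpen G ∧ X ⊆ G ∧ capa1 G < ENNReal.ofReal ε := by
  have hC := capC_pos
  refine ⟨min 1 (ε / capC), by positivity, fun X hX => ?_⟩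
  obtain ⟨c, r, hr, hXc, hs⟩ := exists_cover hX
  refine ⟨_, isOpen_iUnion fun n => isOpen_ball, hXc, ?_⟩
  have h1 : ∑' n, ENNReal.ofReal (r n) ≤ 1 :=
    hs.le.trans (ENNReal.ofReal_le_one.2 (min_le_left _ _))
  refine (capa1_iUnion_ball_le hr h1).trans_lt ?_
  have h2 : ∑' n, ENNReal.ofReal (r n) < ENNReal.ofReal (ε / capC) :=
    hs.trans_le (ENNReal.ofReal_le_ofReal (min_le_right _ _))
  calc _ < ENNReal.ofReal capC * ENNReal.ofReal (ε / capC) := by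
        refine (ENNReal.mul_lt_mul_iff_right ?_ ENNReal.ofReal_ne_top).2 h2
        simpa using hC
    _ = _ := by rw [← ENNReal.ofReal_mul hC.le]; congr 1; field_simp

/-! ### Uniform closeness outside small content -/

/-- Density at a point of `Ω` only depends on the set up to null sets of `Ω`. -/
lemma Dens0.mono_ae {Ω A B : Set Pl} (hΩ : IsOpen Ω) {x : Pl} (hx : x ∈ Ω) (hB : Dens0 B x)
    (h : ∀ᵐ y ∂volume.restrict Ω, y ∈ A → y ∈ B) : Dens0 A x := by
  intro c hc
  obtain ⟨R, hR, hRΩ⟩ := Metric.isOpen_iff.1 hΩ x hx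
  filter_upwards [hB c hc, Ioo_mem_nhdsGT hR] with r hr hrR
  refine le_trans (measure_mono_ae ?_) hr
  have hsub : ball x r ⊆ Ω := (ball_subset_ball hrR.2.le).trans hRΩ
  filter_upwards [(ae_restrict_iff' hΩ.measurableSet).1 h] with y hy hyA
  exact ⟨hy (hsub hyA.2) hyA.1, hyA.2⟩

lemma dens0_iff {A : Set Pl} {x : Pl} : Dens0 A x ↔
    Tendsto (fun r : ℝ => volume (ball x r ∩ A) / volume (ball x r)) (𝓝[>] 0) (𝓝 0) := by
  constructor
  · intro h
    refine ENNReal.tendsto_nhds_zero.2 fun ε hε => ?_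
    obtain ⟨c, hc0, hcε⟩ : ∃ c : ℝ, 0 < c ∧ ENNReal.ofReal c ≤ ε := by
      rcases eq_or_ne ε ⊤ with rfl | hne
      · exact ⟨1, one_pos, le_top⟩
      · exact ⟨ε.toReal, ENNReal.toReal_pos hε.ne' hne, (ENNReal.ofReal_toReal hne).le⟩
    filter_upwards [h c hc0, self_mem_nhdsWithin] with r hr _
    rw [inter_comm]
    exact (ENNReal.div_le_of_le_mul hr).trans hcε
  · intro h c hc
    filter_upwards [ENNReal.tendsto_nhds_zero.1 h (ENNReal.ofReal c) (by simpa using hc),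
      self_mem_nhdsWithin] with r hr hr0
    rw [inter_comm]
    exact (ENNReal.div_le_iff (vol_ball_pos x hr0).ne' (vol_ball_ne_top x r)).1 hr

lemma abs_preciseRep_sub_le {w : Pl → ℝ} {x : Pl} {c δ : ℝ} (h1 : Dens0 {z | c + δ < w z} x)
    (h2 : Dens0 {z | w z < c - δ} x) : |preciseRep w x - c| ≤ δ := by
  have hset : preciseRep w x = sInf {t : ℝ | Dens0 {z | t < w z} x} := by
    unfold preciseRep
    congr 1
    ext t
    exact dens0_iff.symm
  have hlow : ∀ t ∈ {t : ℝ | Dens0 {z | t < w z} x}, c - δ ≤ t := by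
    intro t ht
    by_contra! hcon
    refine not_dens0_cover (show Dens0 {z | t < w z} x from ht) h2 ?_
    ext z
    simp only [mem_union, mem_univ, iff_true]
    by_cases hz : t < w z
    · exact Or.inl hz
    · right; show w z < c - δ; linarith
  have hmem : c + δ ∈ {t : ℝ | Dens0 {z | t < w z} x} := h1
  rw [hset, abs_le]
  constructor
  · linarith [le_csInf ⟨_, hmem⟩ hlow]
  · linarith [csInf_le ⟨_, hlow⟩ hmem]

lemma ApLim.preciseRep_eq {u : Pl → ℝ} {x : Pl} {c : ℝ} (h : ApLim u x c) : preciseRep u x = c := by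
  have : |preciseRep u x - c| ≤ 0 := by
    refine le_of_forall_pos_le_add fun δ hδ => ?_
    rw [zero_add]
    refine abs_preciseRep_sub_le ((h.ge (show c < c + δ by linarith)).mono fun z hz => ?_)
      ((h.le (show c - δ < c by linarith)).mono fun z hz => ?_)
    · have hz' : c + δ < u z := hz
      exact hz'.le
    · have hz' : u z < c - δ := hz
      exact hz'.le
  linarith [abs_nonpos_iff.1 this]

/-- An `L¹` approximate limit is an approximate limit in the sense of density. -/
lemma apLim_of_tendsto {Ω : Set Pl} (hΩ : IsOpen Ω) {u : Pl → ℝ} (hu : IntegrableOn u Ω volume)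
    {x : Pl} (hx : x ∈ Ω) {c : ℝ}
    (h : Tendsto (fun r : ℝ => (∫ y in ball x r, |u y - c|) / (volume (ball x r)).toReal)
      (𝓝[>] 0) (𝓝 0)) : ApLim u x c := by
  intro δ hδ κ hκ
  obtain ⟨R, hR, hRΩ⟩ := Metric.isOpen_iff.1 hΩ x hx
  filter_upwards [h.eventually_le_const (show (0 : ℝ) < δ * κ by positivity), Ioo_mem_nhdsGT hR]
    with r hr hrR
  have hsub : ball x r ⊆ Ω := (ball_subset_ball hrR.2.le).trans hRΩ
  have hvt := vol_ball_ne_top x r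
  have hv : 0 < (volume (ball x r)).toReal := ENNReal.toReal_pos (vol_ball_pos x hrR.1).ne' hvt
  have hi : IntegrableOn (fun y => u y - c) (ball x r) volume :=
    (hu.mono_set hsub).sub (integrableOn_const hvt)
  rw [div_le_iff₀ hv] at hr
  have hcheb := mul_meas_ge_le_lintegral₀ (μ := volume.restrict (ball x r)) hi.1.enorm
    (ENNReal.ofReal δ)
  have hint : ∫⁻ y in ball x r, ‖u y - c‖ₑ ≤ ENNReal.ofReal (δ * κ) * volume (ball x r) := by
    have e := integral_norm_eq_lintegral_enorm hi.1
    simp only [Real.norm_eq_abs] at e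
    rw [e] at hr
    rw [← ENNReal.ofReal_toReal hvt, ← ENNReal.ofReal_mul (by positivity)]
    exact (ENNReal.le_ofReal_iff_toReal_le hi.2.ne (by positivity)).2 hr
  have hset : volume ({z | δ ≤ |u z - c|} ∩ ball x r)
      ≤ volume.restrict (ball x r) {y | ENNReal.ofReal δ ≤ ‖u y - c‖ₑ} := by
    rw [← Measure.restrict_apply' measurableSet_ball]
    refine measure_mono fun z hz => ?_
    have hz' : δ ≤ |u z - c| := hz
    show ENNReal.ofReal δ ≤ ‖u z - c‖ₑ
    rw [Real.enorm_eq_ofReal_abs]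
    exact ENNReal.ofReal_le_ofReal hz'
  refine hset.trans ?_
  have h3 := hcheb.trans hint
  rw [ENNReal.ofReal_mul hδ.le, mul_assoc] at h3
  exact (ENNReal.mul_le_mul_iff_right (by simpa using hδ) ENNReal.ofReal_ne_top).1 h3

/-- A function of bounded variation agrees almost everywhere in `Ω` with a Borel function
satisfying the vector form of the integration by parts formula. -/
lemma exists_BV {Ω : Set Pl} {u : Pl → ℝ} {ν : Measure Pl} {σ : Pl → Pl}
    (h : IsBVScalarOn Ω u ν σ) : ∃ v, v =ᵐ[volume.restrict Ω] u ∧ BV Ω v ν σ := by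
  have hum := h.integrable.1
  have hae : hum.mk u =ᵐ[volume.restrict Ω] u := hum.ae_eq_mk.symm
  have hvi : IntegrableOn (hum.mk u) Ω volume := h.integrable.congr hae.symm
  have hfin : IsFiniteMeasure ν := ⟨h.finite⟩
  refine ⟨hum.mk u, hae, ⟨hum.stronglyMeasurable_mk.measurable, hvi.locallyIntegrableOn, hfin,
    h.concentrated, h.meas, h.unit, fun φ hφ => ?_⟩⟩
  have hcs : ∀ l, HasCompactSupport (fun y => φ y l) := fun l =>
    hφ.cpt.mono' (subset_closure.trans (tsupport_comp_subset φ l))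
  have hsm : ∀ l, ContDiff ℝ 1 (fun y => φ y l) := fun l => contDiff_comp hφ.smooth l
  have hL : ∫ x, hum.mk u x * dvg φ x = ∫ x in Ω, u x * dvg φ x := by
    rw [← setIntegral_eq_integral_of_forall_compl_eq_zero (s := Ω)]
    · refine integral_congr_ae ?_
      filter_upwards [hae] with x hx
      rw [hx]
    · intro x hx
      rw [dvg_eq_zero fun hc => hx (hφ.supp hc), mul_zero]
  have hi1 : ∀ l, IntegrableOn (fun x => u x *
      fderiv ℝ (fun y => φ y l) x (EuclideanSpace.single l (1 : ℝ))) Ω volume := by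
    intro l
    have hc : Continuous fun x => fderiv ℝ (fun y => φ y l) x (EuclideanSpace.single l (1 : ℝ)) :=
      ((hsm l).continuous_fderiv one_ne_zero).clm_apply continuous_const
    obtain ⟨M, hM⟩ := hc.bounded_above_of_compact_support ((hcs l).fderiv_apply (𝕜 := ℝ) _)
    exact h.integrable.mul_bdd (c := M) hc.aestronglyMeasurable (Eventually.of_forall hM)
  have hi2 : ∀ l, Integrable (fun x => φ x l * σ x l) ν := by
    intro l
    obtain ⟨M, hM⟩ := (hsm l).continuous.bounded_above_of_compact_support (hcs l)
    refine Integrable.of_bound (C := M) ?_ ?_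
    · have := h.meas
      have h2 := (hsm l).continuous.measurable
      exact (h2.mul (by fun_prop)).aestronglyMeasurable
    · filter_upwards [h.unit] with x hx
      rw [norm_mul]
      have h3 : ‖σ x l‖ ≤ 1 := hx ▸ PiLp.norm_apply_le (σ x) l
      have h4 := hM x
      have h5 := norm_nonneg (φ x l)
      nlinarith [norm_nonneg (σ x l)]
  rw [hL]
  unfold dvg
  simp_rw [Finset.mul_sum]
  rw [integral_finsetSum _ fun l _ => hi1 l]
  have hin : ∀ x, ⟪φ x, σ x⟫ = ∑ l : Fin 2, φ x l * σ x l := by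
    intro x
    rw [PiLp.inner_apply]
    refine Finset.sum_congr rfl fun l _ => ?_
    simp [mul_comm]
  simp_rw [hin]
  rw [integral_finsetSum _ fun l _ => hi2 l, ← Finset.sum_neg_distrib]
  refine Finset.sum_congr rfl fun l _ => ?_
  exact h.parts _ (hsm l) (hcs l) ((tsupport_comp_subset φ l).trans hφ.supp) l

/-- A subsequence converging so fast that the errors in `L¹` and in variation are summable, and so is
the variation that functions at least as close to `u` (or to `-u`) can lose. -/
lemma exists_subseq {Ω : Set Pl} (hΩ : IsOpen Ω) {u : Pl → ℝ} (hu : IsBV Ω u) {w : ℕ → Pl → ℝ}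
    (hL : Tendsto (fun i => ∫⁻ x in Ω, ‖w i x - u x‖ₑ) atTop (𝓝 0))
    (hV : Tendsto (fun i => V (w i) Ω) atTop (𝓝 (V u Ω))) :
    ∃ φ : ℕ → ℕ, StrictMono φ ∧
      (∀ i v, LocallyIntegrableOn v Ω volume →
        ∫⁻ x in Ω, ‖v x - u x‖ₑ ≤ ∫⁻ x in Ω, ‖w (φ i) x - u x‖ₑ → V u Ω ≤ V v Ω + 2⁻¹ ^ i) ∧
      (∀ i v, LocallyIntegrableOn v Ω volume →
        ∫⁻ x in Ω, ‖v x - - u x‖ₑ ≤ ∫⁻ x in Ω, ‖w (φ i) x - u x‖ₑ →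
          V (fun x => - u x) Ω ≤ V v Ω + 2⁻¹ ^ i) ∧
      (∀ i, ∫⁻ x in Ω, ‖w (φ i) x - u x‖ₑ ≤ 2⁻¹ ^ i) ∧
      ∀ i, V (w (φ i)) Ω ≤ V u Ω + 2⁻¹ ^ i := by
  have hp : ∀ i : ℕ, (2⁻¹ : ℝ≥0∞) ^ i ≠ 0 := fun i => pow_ne_zero i (by simp)
  have hfin := hu.V_ne_top hΩ subset_rfl
  choose ρ hρ0 hρ using fun i => V_modulus hu.loc hfin (hp i)
  choose ρ' hρ0' hρ' using fun i => V_modulus hu.neg.loc (hu.neg.V_ne_top hΩ subset_rfl) (hp i)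
  have hev : ∀ i, ∀ᶠ k in atTop, ∫⁻ x in Ω, ‖w k x - u x‖ₑ ≤ ρ i ∧
      ∫⁻ x in Ω, ‖w k x - u x‖ₑ ≤ ρ' i ∧ ∫⁻ x in Ω, ‖w k x - u x‖ₑ ≤ 2⁻¹ ^ i ∧
      V (w k) Ω ≤ V u Ω + 2⁻¹ ^ i := by
    intro i
    filter_upwards [hL.eventually_le_const (pos_iff_ne_zero.2 (hρ0 i)),
      hL.eventually_le_const (pos_iff_ne_zero.2 (hρ0' i)),
      hL.eventually_le_const (pos_iff_ne_zero.2 (hp i)),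
      hV.eventually_le_const (ENNReal.lt_add_right hfin (hp i))] with k h1 h2 h3 h4
    exact ⟨h1, h2, h3, h4⟩
  have hev' : ∀ i, ∃ N, ∀ k ≥ N, ∫⁻ x in Ω, ‖w k x - u x‖ₑ ≤ ρ i ∧
      ∫⁻ x in Ω, ‖w k x - u x‖ₑ ≤ ρ' i ∧ ∫⁻ x in Ω, ‖w k x - u x‖ₑ ≤ 2⁻¹ ^ i ∧
      V (w k) Ω ≤ V u Ω + 2⁻¹ ^ i := fun i => eventually_atTop.1 (hev i)
  obtain ⟨φ, hφ, h⟩ := extraction_forall_of_eventually' hev'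
  exact ⟨φ, hφ, fun i v hv hvu => hρ i v hv (hvu.trans (h i).1),
    fun i v hv hvu => hρ' i v hv (hvu.trans (h i).2.1), fun i => (h i).2.2.1, fun i => (h i).2.2.2⟩

/-- Along a subsequence, off a single open set of small capacity, the sets where `w i` differs from the
approximate limit `c x` of `u` by more than `δ` have density zero at `x`, for all large `i`
uniformly in `x`. -/
lemma uniform_outside {Ω : Set Pl} (hΩ : IsOpen Ω) {u : Pl → ℝ} (hu : IsBV Ω u) {w : ℕ → Pl → ℝ}
    (hw : ∀ i, IsBV Ω (w i))
    (hL : Tendsto (fun i => ∫⁻ x in Ω, ‖w i x - u x‖ₑ) atTop (𝓝 0))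
    (hV : Tendsto (fun i => V (w i) Ω) atTop (𝓝 (V u Ω))) :
    ∃ φ : ℕ → ℕ, StrictMono φ ∧ ∀ K, IsCompact K → K ⊆ Ω → ∀ c : Pl → ℝ,
      (∀ x ∈ K, ApLim u x (c x)) → ∀ ε : ℝ, 0 < ε →
        ∃ G, IsOpen G ∧ capa1 G < ENNReal.ofReal ε ∧ ∀ δ : ℝ, 0 < δ → ∃ j, ∀ i, j ≤ i →
          ∀ x ∈ K \ G, Dens0 {z | c x + δ < w (φ i) z} x ∧ Dens0 {z | w (φ i) z < c x - δ} x := by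
  obtain ⟨φ, hφ, hm1, hm2, hL1, hV1⟩ := exists_subseq hΩ hu hL hV
  have hneg : ∀ i x, ‖- w (φ i) x - - u x‖ₑ = ‖w (φ i) x - u x‖ₑ := fun i x => by
    rw [← enorm_neg]; congr 1; ring
  obtain ⟨Z, hZ, hZL, hZV, hZw⟩ := majorant hΩ hu (fun i => hw (φ i)) hm1 hL1 hV1
  obtain ⟨Y, hY, hYL, hYV, hYw⟩ := majorant hΩ hu.neg (w := fun i x => - w (φ i) x)
    (fun i => (hw (φ i)).neg) (by simpa only [hneg] using hm2) (by simpa only [hneg] using hL1)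
    (fun i => by rw [(hw (φ i)).V_neg hΩ, hu.V_neg hΩ]; exact hV1 i)
  refine ⟨φ, hφ, fun K hK hKΩ c hc' ε hε => ?_⟩
  obtain ⟨η, hη, hG⟩ := exists_open_capa1_lt hε
  obtain ⟨e, he0, he⟩ := ENNReal.exists_pos_sum_of_countable
    (show ENNReal.ofReal (η / 2) ≠ 0 by simpa using hη) ℕ
  have hδ : ∀ k : ℕ, (0 : ℝ) < 1 / (k + 1) := fun k => by positivity
  have hex : ∀ k : ℕ, ∃ j,
      hc {x ∈ K | ¬ Dens0 {z | c x + 1 / ((k : ℝ) + 1) < Z j z} x} ≤ e k ∧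
      hc {x ∈ K | ¬ Dens0 {z | - c x + 1 / ((k : ℝ) + 1) < Y j z} x} ≤ e k := by
    intro k
    have h1 := upper_bound hΩ hu hZ hZL hZV hK hKΩ hc' (hδ k)
      (show (0 : ℝ) < e k from he0 k)
    have h2 := upper_bound hΩ hu.neg hY hYL hYV hK hKΩ (c := fun x => - c x)
      (fun x hx => (hc' x hx).neg) (hδ k) (show (0 : ℝ) < e k from he0 k)
    rw [ENNReal.ofReal_coe_nnreal] at h1 h2
    exact (h1.and h2).exists
  choose j hj1 hj2 using hex
  set A : ℕ → Set Pl := fun k => {x ∈ K | ¬ Dens0 {z | c x + 1 / ((k : ℝ) + 1) < Z (j k) z} x}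
  set B : ℕ → Set Pl := fun k => {x ∈ K | ¬ Dens0 {z | - c x + 1 / ((k : ℝ) + 1) < Y (j k) z} x}
  have hX : hc ((⋃ k, A k) ∪ ⋃ k, B k) < ENNReal.ofReal η := by
    calc hc ((⋃ k, A k) ∪ ⋃ k, B k) ≤ hc (⋃ k, A k) + hc (⋃ k, B k) := measure_union_le _ _
      _ ≤ (∑' k, (e k : ℝ≥0∞)) + ∑' k, (e k : ℝ≥0∞) :=
          add_le_add ((measure_iUnion_le _).trans (ENNReal.tsum_le_tsum hj1))
            ((measure_iUnion_le _).trans (ENNReal.tsum_le_tsum hj2))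
      _ < ENNReal.ofReal (η / 2) + ENNReal.ofReal (η / 2) := ENNReal.add_lt_add he he
      _ = ENNReal.ofReal η := by
          rw [← ENNReal.ofReal_add (by positivity) (by positivity), add_halves]
  obtain ⟨G, hGo, hXG, hGc⟩ := hG _ hX
  refine ⟨G, hGo, hGc, fun δ hδ0 => ?_⟩
  obtain ⟨k, hk⟩ := exists_nat_one_div_lt hδ0
  refine ⟨j k, fun i hi x hx => ⟨?_, ?_⟩⟩
  · have hd : Dens0 {z | c x + 1 / ((k : ℝ) + 1) < Z (j k) z} x := by
      by_contra hcon
      exact hx.2 (hXG (Or.inl (mem_iUnion.2 ⟨k, hx.1, hcon⟩)))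
    refine hd.mono_ae hΩ (hKΩ hx.1) ?_
    filter_upwards [hZw (j k) i hi] with z hz hz'
    have hz'' : c x + δ < w (φ i) z := hz'
    show c x + 1 / ((k : ℝ) + 1) < Z (j k) z
    linarith
  · have hd : Dens0 {z | - c x + 1 / ((k : ℝ) + 1) < Y (j k) z} x := by
      by_contra hcon
      exact hx.2 (hXG (Or.inr (mem_iUnion.2 ⟨k, hx.1, hcon⟩)))
    refine hd.mono_ae hΩ (hKΩ hx.1) ?_
    filter_upwards [hYw (j k) i hi] with z hz hz'
    have hz'' : w (φ i) z < c x - δ := hz'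
    show - c x + 1 / ((k : ℝ) + 1) < Y (j k) z
    linarith

end StrictBV

/-- Theorem 3.5: if `u_i → u` strictly in `BV(Ω)` (i.e. `u_i → u` in `L¹(Ω)` and
`|Du_i|(Ω) → |Du|(Ω)`), then there is a subsequence such that for every compact
`K ⊂ Ω \ S_u` and every `ε > 0` there is an open set `G ⊂ Ω` with `capa₁(G) < ε` and
`u_i* → u*` uniformly on `K \ G`. -/
theorem strict_convergence_uniform_outside_small_capacity
    (Ω : Set (EuclideanSpace ℝ (Fin 2))) (hΩ : IsOpen Ω)
    (ui : ℕ → EuclideanSpace ℝ (Fin 2) → ℝ) (u : EuclideanSpace ℝ (Fin 2) → ℝ)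
    (νi : ℕ → Measure (EuclideanSpace ℝ (Fin 2)))
    (σi : ℕ → EuclideanSpace ℝ (Fin 2) → EuclideanSpace ℝ (Fin 2))
    (ν : Measure (EuclideanSpace ℝ (Fin 2)))
    (σ : EuclideanSpace ℝ (Fin 2) → EuclideanSpace ℝ (Fin 2))
    (hBVi : ∀ i, IsBVScalarOn Ω (ui i) (νi i) (σi i))
    (hBV : IsBVScalarOn Ω u ν σ)
    (hL1 : Tendsto (fun i => ∫ x in Ω, |ui i x - u x| ∂volume) atTop (nhds 0))
    (hvar : Tendsto (fun i => νi i Ω) atTop (nhds (ν Ω))) :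
    ∃ φ : ℕ → ℕ, StrictMono φ ∧
      ∀ K : Set (EuclideanSpace ℝ (Fin 2)), IsCompact K → K ⊆ Ω \ approxDiscSet Ω u →
        ∀ ε : ℝ, 0 < ε →
          ∃ G : Set (EuclideanSpace ℝ (Fin 2)), IsOpen G ∧ G ⊆ Ω ∧
            capa1 G < ENNReal.ofReal ε ∧
            TendstoUniformlyOn (fun i => preciseRep (ui (φ i))) (preciseRep u) atTop
              (K \ G) := by
  obtain ⟨v, hvu, hv⟩ := StrictBV.exists_BV hBV
  choose w hwu hw using fun i => StrictBV.exists_BV (hBVi i)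
  have hL : Tendsto (fun i => ∫⁻ x in Ω, ‖w i x - v x‖ₑ) atTop (nhds 0) := by
    have h0 := ENNReal.tendsto_ofReal hL1
    rw [ENNReal.ofReal_zero] at h0
    refine h0.congr fun i => ?_
    have hi : Integrable (fun x => |ui i x - u x|) (volume.restrict Ω) :=
      ((hBVi i).integrable.sub hBV.integrable).abs
    rw [ofReal_integral_eq_lintegral_ofReal hi (Eventually.of_forall fun x => abs_nonneg _)]
    refine lintegral_congr_ae ?_
    filter_upwards [hvu, hwu i] with x h1 h2
    rw [h1, h2, Real.enorm_eq_ofReal_abs]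
  have hV : Tendsto (fun i => StrictBV.V (w i) Ω) atTop (nhds (StrictBV.V v Ω)) := by
    rw [hv.V_eq hΩ subset_rfl]
    simp_rw [fun i => (hw i).V_eq hΩ subset_rfl]
    exact hvar
  obtain ⟨φ, hφ, hmain⟩ :=
    StrictBV.uniform_outside hΩ ⟨ν, σ, hv⟩ (fun i => ⟨νi i, σi i, hw i⟩) hL hV
  refine ⟨φ, hφ, fun K hK hKS ε hε => ?_⟩
  have hKΩ : K ⊆ Ω := fun x hx => (hKS hx).1
  have hlim : ∀ x ∈ K, StrictBV.ApLim u x (preciseRep u x) := by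
    intro x hx
    have hS : ¬ ¬ ∃ c : ℝ, _ := fun h => (hKS hx).2 ⟨hKΩ hx, h⟩
    obtain ⟨c, hc⟩ := not_not.1 hS
    have h := StrictBV.apLim_of_tendsto hΩ hBV.integrable (hKΩ hx) hc
    rwa [h.preciseRep_eq]
  have hlimv : ∀ x ∈ K, StrictBV.ApLim v x (preciseRep u x) := by
    intro x hx δ hδ
    refine (hlim x hx δ hδ).mono_ae hΩ (hKΩ hx) ?_
    filter_upwards [hvu] with z hz hz'
    have hz'' : δ ≤ |v z - preciseRep u x| := hz'
    rwa [hz] at hz''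
  obtain ⟨G, hG, hGc, hGd⟩ := hmain K hK hKΩ (preciseRep u) hlimv ε hε
  refine ⟨G ∩ Ω, hG.inter hΩ, Set.inter_subset_right,
    (StrictBV.capa1_mono Set.inter_subset_left).trans_lt hGc, ?_⟩
  rw [Metric.tendstoUniformlyOn_iff]
  intro ε' hε'
  obtain ⟨j, hj⟩ := hGd (ε' / 2) (half_pos hε')
  filter_upwards [eventually_ge_atTop j] with i hi x hx
  have hxK : x ∈ K \ G := ⟨hx.1, fun h => hx.2 ⟨h, hKΩ hx.1⟩⟩
  obtain ⟨h1, h2⟩ := hj i hi x hxK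
  have h3 : |preciseRep (ui (φ i)) x - preciseRep u x| ≤ ε' / 2 := by
    refine StrictBV.abs_preciseRep_sub_le (h1.mono_ae hΩ (hKΩ hx.1) ?_)
      (h2.mono_ae hΩ (hKΩ hx.1) ?_)
    · filter_upwards [hwu (φ i)] with z hz hz'
      have hz'' : preciseRep u x + ε' / 2 < ui (φ i) z := hz'
      rwa [← hz] at hz''
    · filter_upwards [hwu (φ i)] with z hz hz'
      have hz'' : ui (φ i) z < preciseRep u x - ε' / 2 := hz'
      rwa [← hz] at hz''
  rw [dist_comm, Real.dist_eq]
  linarith
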